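/- arXiv:2409.06849 — 2 statements merged into one kernel-verified Lean document; each statement's English description precedes it below -/
import Mathlib

section
/- For every integer d ≥ 2, the asymptotic repetition threshold of the class of recurrent rich d-ary sequences equals 2; that is, (i) every recurrent rich sequence u over a d-letter alphabet satisfies E*(u) ≥ 2, and (ii) for every ε > 0 there exists a recurrent rich sequence u over a d-letter alphabet with E*(u) < 2 + ε. -/
namespace RichRT

variable {A : Type*}

/-- The word `w` occurs in the sequence `u` at position `j`. -/
def OccursAt (w : List A) (u : ℕ → A) (j : ℕ) : Prop :=
  w = (List.range w.length).map fun t => u (j + t)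

/-- `w` is a factor of the infinite sequence `u`. -/
def IsFactorS (w : List A) (u : ℕ → A) : Prop :=
  ∃ j : ℕ, OccursAt w u j

/-- `u` is recurrent: every factor occurs infinitely often. -/
def Recurrent (u : ℕ → A) : Prop :=
  ∀ w : List A, IsFactorS w u → ∀ N : ℕ, ∃ j, N ≤ j ∧ OccursAt w u j

/-- The number of distinct palindromic factors of a finite word. -/
noncomputable def palCount (w : List A) : ℕ :=
  Set.ncard {p : List A | p <:+: w ∧ p.reverse = p}

/-- A finite word of length `n` is rich if it has exactly `n+1` palindromic factors. -/
def RichWord (w : List A) : Prop := palCount w = w.length + 1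

/-- A sequence is rich if all its factors are rich. -/
def RichSeq (u : ℕ → A) : Prop := ∀ w : List A, IsFactorS w u → RichWord w

/-- The prefix of length `k` of the periodic sequence `vvv⋯`. -/
def powPref (v : List A) (k : ℕ) : List A := ((List.replicate k v).flatten).take k

/-- The set of exponents `k/|v|` of fractional powers `v^(k/|v|)` occurring in `u`,
with `|v| ≥ n`. -/
def expSet (u : ℕ → A) (n : ℕ) : Set ℝ :=
  {x | ∃ (v : List A) (k : ℕ), v ≠ [] ∧ n ≤ v.length ∧
    IsFactorS (powPref v k) u ∧ x = (k : ℝ) / (v.length : ℝ)}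

/-- The critical exponent of a sequence, with values in `EReal`. -/
noncomputable def critExp (u : ℕ → A) : EReal :=
  sSup ((fun x : ℝ => (x : EReal)) '' expSet u 0)

/-- The asymptotic critical exponent of a sequence: `⊤` if the critical exponent is `⊤`,
otherwise the limit (= infimum, by monotonicity) over `n` of the suprema of exponents of
powers `v^e` with `|v| ≥ n`. -/
noncomputable def acritExp (u : ℕ → A) : EReal :=
  if critExp u = ⊤ then ⊤
  else ⨅ n : ℕ, sSup ((fun x : ℝ => (x : EReal)) '' expSet u n)

/-- The morphism `φ_d` on letters: `i ↦ 0(i+1)` for `i < d-1`, `d-1 ↦ 0(d-1)(d-1)`. -/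
def phiL (d : ℕ) (i : ℕ) : List ℕ :=
  if i < d - 1 then [0, i + 1] else [0, d - 1, d - 1]

/-- The morphism `φ_d` on words. -/
def phiW (d : ℕ) (w : List ℕ) : List ℕ := w.flatMap (phiL d)

/-- `u` is the fixed point of `φ_d`: it begins with `0` and `φ_d(u) = u`, i.e. the image
of every prefix of `u` is again a prefix of `u`. -/
def IsPhiFixed (d : ℕ) (u : ℕ → ℕ) : Prop :=
  u 0 = 0 ∧ ∀ m : ℕ, OccursAt (phiW d ((List.range m).map u)) u 0

/-- Left extensions of `w` in `u`. -/
def Lext (u : ℕ → ℕ) (w : List ℕ) : Set (List ℕ) :=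
  {x | ∃ i : ℕ, x = i :: w ∧ IsFactorS x u}

/-- Right extensions of `w` in `u`. -/
def Rext (u : ℕ → ℕ) (w : List ℕ) : Set (List ℕ) :=
  {x | ∃ i : ℕ, x = w ++ [i] ∧ IsFactorS x u}

/-- Both-sided extensions of `w` in `u`. -/
def Bext (u : ℕ → ℕ) (w : List ℕ) : Set (List ℕ) :=
  {x | ∃ i j : ℕ, x = i :: (w ++ [j]) ∧ IsFactorS x u}

/-- `w` is a bispecial factor of `u`. -/
def Bispecial (u : ℕ → ℕ) (w : List ℕ) : Prop :=
  IsFactorS w u ∧ 2 ≤ (Lext u w).ncard ∧ 2 ≤ (Rext u w).ncard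

/-- The bilateral order `b(w) = #Bext(w) − #Lext(w) − #Rext(w) + 1`. -/
noncomputable def bord (u : ℕ → ℕ) (w : List ℕ) : ℤ :=
  ((Bext u w).ncard : ℤ) - ((Lext u w).ncard : ℤ) - ((Rext u w).ncard : ℤ) + 1

/-- The palindromes `F_0 = ε`, `F_i = φ(F_{i-1})0`. -/
def Fword (d : ℕ) : ℕ → List ℕ
  | 0 => []
  | i + 1 => phiW d (Fword d i) ++ [0]

/-- Membership in the set `𝒯` of bispecial triplets. -/
def TripleMem (d : ℕ) (u : ℕ → ℕ) (t : ℕ × List ℕ × ℕ) : Prop :=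
  Bispecial u t.2.1 ∧ t.1 < d - 1 ∧ t.2.2 < d - 1 ∧
    IsFactorS (t.1 :: t.2.1) u ∧ IsFactorS (t.2.1 ++ [t.2.2]) u

/-- The map `f` on triplets. -/
def fmap (d : ℕ) (t : ℕ × List ℕ × ℕ) : ℕ × List ℕ × ℕ :=
  ((t.1 + 1) % (d - 1),
   (if t.1 = d - 2 then [d - 1] else []) ++ phiW d t.2.1 ++ [0] ++
     (if t.2.2 = d - 2 then [d - 1] else []),
   (t.2.2 + 1) % (d - 1))

/-- The initial triplets `T_k = (0, ε, k)` for `k ≤ d-2` and `T_{d-1} = (0, d-1, 0)`. -/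
def Tinit (d k : ℕ) : ℕ × List ℕ × ℕ :=
  if k = d - 1 then (0, [d - 1], 0) else (0, ([] : List ℕ), k)

/-- The Parikh vector of a word. -/
def parikh (d : ℕ) (w : List ℕ) : Fin d → ℕ := fun i => w.count (i : ℕ)

/-- The incidence matrix of `φ_d`. -/
def Mmat (d : ℕ) : Matrix (Fin d) (Fin d) ℕ := fun i j => (phiL d (j : ℕ)).count (i : ℕ)

/-- `r` is a return word to `w` in `u`. -/
def ReturnWord (u : ℕ → ℕ) (w r : List ℕ) : Prop :=
  ∃ j ℓ : ℕ, j < ℓ ∧ OccursAt w u j ∧ OccursAt w u ℓ ∧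
    (∀ m, j < m → m < ℓ → ¬ OccursAt w u m) ∧
    r = (List.range (ℓ - j)).map fun t => u (j + t)

/-- `R` is a complete return word to `w` in `u`. -/
def CompleteReturn (u : ℕ → ℕ) (w R : List ℕ) : Prop :=
  ∃ r : List ℕ, ReturnWord u w r ∧ R = r ++ w

/-!
In a rich sequence every letter completes exactly one palindrome that has not occurred before, the
longest palindromic suffix of the prefix read so far. Its centre stays put while the palindrome is
extended on both sides, but it has to jump infinitely often, and by recurrence the starting point
of the palindrome later returns to where it was at a jump, or further left. Composing the
reflections about the two centres around a suitable jump is a translation, which yields arbitrarily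
long squares; hence the lower bound.

For the upper bound take the fixed point of `φ_d` for a large `d`, written `inner H` with
`H = d - 1` below, and encode it over two letters by `z ↦ 0 1^(z + 1)`. In both morphisms every
block starts with its only `0`, so equal factors are images of equal factors up to a bounded
correction. This transports the palindromicity of complete returns to palindromes, which is
equivalent to richness, from a sequence to its image. It also reduces a long repetition to a
shorter one in the preimage, as long as its overlap, what remains after removing one period,
contains a `0`. Following the lengths of iterated images back up, the overlap of a repetition of
period `p` is at most `(1 + 1/N) p` plus a constant, provided that `d` is large in terms of `N`.
-/

section

variable {f : ℕ → A}

/-! ### Factors, palindromes and periods -/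

/-- The factor of length `n` of the sequence `f` that occurs at position `i`. -/
def factorAt (f : ℕ → A) (i n : ℕ) : List A := (List.range n).map fun t => f (i + t)

/-- The factor of `f` on the positions `[a, c - a]` is a palindrome. It is encoded as invariance
under the reflection `x ↦ c - x`, written without subtraction; it is trivially true when
`c < 2 * a`. -/
def PalFrom (f : ℕ → A) (a c : ℕ) : Prop :=
  ∀ x y, a ≤ x → a ≤ y → x + y = c → f x = f y

/-- The factors of `f` on the positions `[s, e)` and `[s + p, e + p)` agree; equivalently, the
factor on `[s, e + p)` has period `p`. -/
def ShiftOn (f : ℕ → A) (p s e : ℕ) : Prop :=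
  ∀ x, s ≤ x → x < e → f x = f (x + p)

theorem ShiftOn.mono {p s s' e e' : ℕ} (h : ShiftOn f p s e) (hs : s ≤ s') (he : e' ≤ e) :
    ShiftOn f p s' e' :=
  fun x hx hx' => h x (hs.trans hx) (hx'.trans_le he)

theorem occursAt_iff {w : List A} {j : ℕ} : OccursAt w f j ↔ w = factorAt f j w.length := Iff.rfl

@[simp]
theorem length_factorAt (f : ℕ → A) (i n : ℕ) : (factorAt f i n).length = n := by
  simp [factorAt]

theorem getElem?_factorAt {i n t : ℕ} (ht : t < n) : (factorAt f i n)[t]? = some (f (i + t)) := by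
  simp [factorAt, ht]

theorem occursAt_factorAt (f : ℕ → A) (i n : ℕ) : OccursAt (factorAt f i n) f i := by
  rw [occursAt_iff, length_factorAt]

theorem isFactorS_factorAt (f : ℕ → A) (i n : ℕ) : IsFactorS (factorAt f i n) f :=
  ⟨i, occursAt_factorAt f i n⟩

theorem factorAt_ne_nil {i n : ℕ} (hn : 1 ≤ n) : factorAt f i n ≠ [] :=
  List.ne_nil_of_length_pos (by rwa [length_factorAt])

theorem factorAt_add (f : ℕ → A) (i m n : ℕ) :
    factorAt f i (m + n) = factorAt f i m ++ factorAt f (i + m) n := by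
  simp only [factorAt, List.range_add, List.map_append, List.map_map, Function.comp_def, add_assoc]

theorem factorAt_eq_iff {g : ℕ → A} {i j n : ℕ} :
    factorAt f i n = factorAt g j n ↔ ∀ t < n, f (i + t) = g (j + t) := by
  simp [factorAt]

theorem shiftOn_iff_factorAt_eq {p s l : ℕ} :
    ShiftOn f p s (s + l) ↔ factorAt f s l = factorAt f (s + p) l := by
  rw [factorAt_eq_iff]
  constructor
  · intro h t ht
    rw [h (s + t) (by omega) (by omega), add_right_comm]
  · intro h x hs hx
    obtain ⟨t, rfl⟩ := Nat.exists_eq_add_of_le hs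
    rw [h t (by omega), add_right_comm]

theorem reverse_factorAt_eq_iff {i n : ℕ} :
    (factorAt f i (n + 1)).reverse = factorAt f i (n + 1) ↔ PalFrom f i (i + (i + n)) := by
  have reverse_eq : (factorAt f i (n + 1)).reverse =
      (List.range (n + 1)).map fun t => f (i + (n - t)) :=
    List.ext_getElem (by simp) fun t _ _ => by simp [factorAt]
  rw [reverse_eq, factorAt, List.map_inj_left]
  simp only [List.mem_range]
  constructor
  · intro h x y hx hy hxy
    obtain ⟨t, rfl⟩ := Nat.exists_eq_add_of_le hx
    rw [← h t (by omega), show i + (n - t) = y by omega]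
  · intro h t ht
    exact h _ _ (by omega) (by omega) (by omega)

theorem isInfix_factorAt_iff {j n : ℕ} {w : List A} :
    w <:+: factorAt f j n ↔ ∃ i, j ≤ i ∧ i + w.length ≤ j + n ∧ OccursAt w f i := by
  constructor
  · rintro ⟨s, t, h⟩
    have hn : n = s.length + (w.length + t.length) := by
      simpa [add_assoc] using (congrArg List.length h).symm
    rw [hn, factorAt_add, factorAt_add, List.append_assoc] at h
    have hw := List.append_inj (List.append_inj h (by simp)).2 (by simp)
    exact ⟨j + s.length, by omega, by omega, hw.1⟩
  · rintro ⟨i, hji, hin, hw⟩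
    obtain ⟨m, rfl⟩ := Nat.exists_eq_add_of_le hji
    obtain ⟨k, rfl⟩ : ∃ k, n = m + (w.length + k) := ⟨n - (m + w.length), by omega⟩
    refine ⟨factorAt f j m, factorAt f (j + m + w.length) k, ?_⟩
    rw [factorAt_add, factorAt_add, ← occursAt_iff.1 hw, List.append_assoc]

/-! ### Powers and critical exponents -/

theorem getElem?_flatten_replicate (v : List A) {k i : ℕ} (hi : i < k * v.length) :
    (List.replicate k v).flatten[i]? = v[i % v.length]? := by
  induction k generalizing i with
  | zero => simp at hi
  | succ k ih =>
    rw [List.replicate_succ, List.flatten_cons]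
    by_cases hiv : i < v.length
    · rw [List.getElem?_append_left hiv, Nat.mod_eq_of_lt hiv]
    · rw [Nat.succ_mul] at hi
      rw [List.getElem?_append_right (by omega), ih (by omega), Nat.mod_eq_sub_mod (not_lt.1 hiv)]

theorem length_powPref {v : List A} (hv : v ≠ []) (k : ℕ) : (powPref v k).length = k := by
  simpa [powPref] using Nat.le_mul_of_pos_right k (List.length_pos_iff.2 hv)

theorem getElem?_powPref {v : List A} (hv : v ≠ []) {k i : ℕ} (hi : i < k) :
    (powPref v k)[i]? = v[i % v.length]? := by
  have hk := Nat.le_mul_of_pos_right k (List.length_pos_iff.2 hv)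
  rw [powPref, List.getElem?_take_of_lt hi, getElem?_flatten_replicate v (by omega)]

theorem shiftOn_of_occursAt_powPref {v : List A} (hv : v ≠ []) {k j : ℕ}
    (h : OccursAt (powPref v (v.length + k)) f j) : ShiftOn f v.length j (j + k) := by
  rw [occursAt_iff, length_powPref hv] at h
  intro x hjx hxk
  obtain ⟨t, rfl⟩ := Nat.exists_eq_add_of_le hjx
  have letter_at {i : ℕ} (hi : i < v.length + k) : some (f (j + i)) = v[i % v.length]? := by
    rw [← getElem?_factorAt hi, ← h, getElem?_powPref hv hi]
  rw [← Option.some_inj, add_assoc, letter_at (by omega), letter_at (by omega), Nat.add_mod_right]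

theorem ShiftOn.apply_add_mod {p i k t : ℕ} (hp : 1 ≤ p) (h : ShiftOn f p i (i + k))
    (ht : t < p + k) : f (i + t) = f (i + t % p) := by
  induction t using Nat.strong_induction_on with
  | _ t ih =>
    by_cases htp : t < p
    · rw [Nat.mod_eq_of_lt htp]
    · rw [Nat.mod_eq_sub_mod (not_lt.1 htp), ← ih (t - p) (by omega) (by omega),
        h (i + (t - p)) (by omega) (by omega)]
      congr 1
      omega

theorem ShiftOn.isFactorS_powPref {p i k : ℕ} (hp : 1 ≤ p) (h : ShiftOn f p i (i + k)) :
    IsFactorS (powPref (factorAt f i p) (p + k)) f := by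
  have hv : factorAt f i p ≠ [] := factorAt_ne_nil hp
  refine ⟨i, ?_⟩
  rw [occursAt_iff, length_powPref hv]
  refine List.ext_getElem? fun t => ?_
  by_cases ht : t < p + k
  · rw [getElem?_powPref hv ht, getElem?_factorAt ht, length_factorAt,
      getElem?_factorAt (Nat.mod_lt t hp), h.apply_add_mod hp ht]
  · rw [List.getElem?_eq_none (by rw [length_powPref hv]; omega),
      List.getElem?_eq_none (by rw [length_factorAt]; omega)]

theorem ShiftOn.div_mem_expSet {p i l n : ℕ} (hp : 1 ≤ p) (hn : n ≤ p)
    (h : ShiftOn f p i (i + l)) : ((p + l : ℕ) : ℝ) / p ∈ expSet f n :=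
  ⟨factorAt f i p, p + l, factorAt_ne_nil hp, by rwa [length_factorAt],
    h.isFactorS_powPref hp, by rw [length_factorAt]⟩

theorem expSet_zero_subset (f : ℕ → A) : expSet f 0 ⊆ expSet f 1 := by
  rintro x ⟨v, k, hv, -, hf, rfl⟩
  exact ⟨v, k, hv, List.length_pos_iff.2 hv, hf, rfl⟩

theorem le_of_mem_expSet_of_shift_bound {c C : ℝ} (hc : 0 ≤ c) (hC : 0 ≤ C)
    (h : ∀ p s l, 1 ≤ p → ShiftOn f p s (s + l) → (l : ℝ) ≤ c * p + C)
    {n : ℕ} (hn : 1 ≤ n) {x : ℝ} (hx : x ∈ expSet f n) : x ≤ 1 + c + C / n := by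
  obtain ⟨v, k, hv, hvn, ⟨j, hj⟩, rfl⟩ := hx
  have hp : 1 ≤ v.length := List.length_pos_iff.2 hv
  have : (0 : ℝ) < v.length := by exact_mod_cast hp
  have : (0 : ℝ) < n := by exact_mod_cast hn
  have hk : (k : ℝ) ≤ (1 + c) * v.length + C := by
    rcases le_total k v.length with hkp | hkp
    · have : (k : ℝ) ≤ v.length := by exact_mod_cast hkp
      nlinarith
    · obtain ⟨l, rfl⟩ := Nat.exists_eq_add_of_le hkp
      have := h _ _ _ hp (shiftOn_of_occursAt_powPref hv hj)
      push_cast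
      linarith
  calc (k : ℝ) / v.length ≤ ((1 + c) * v.length + C) / v.length := by gcongr
    _ = 1 + c + C / v.length := by field_simp
    _ ≤ 1 + c + C / n := by gcongr

theorem acritExp_le_of_shift_bound {c C : ℝ} (hc : 0 ≤ c) (hC : 0 ≤ C)
    (h : ∀ p s l, 1 ≤ p → ShiftOn f p s (s + l) → (l : ℝ) ≤ c * p + C) :
    acritExp f ≤ ((1 + c : ℝ) : EReal) := by
  have sSup_le_coe {n : ℕ} (hn : 1 ≤ n) :
      sSup ((fun x : ℝ => (x : EReal)) '' expSet f n) ≤ ((1 + c + C / n : ℝ) : EReal) := by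
    refine sSup_le ?_
    rintro _ ⟨x, hx, rfl⟩
    exact EReal.coe_le_coe_iff.2 (le_of_mem_expSet_of_shift_bound hc hC h hn hx)
  have critExp_lt_top : critExp f < ⊤ :=
    (sSup_le_sSup (Set.image_mono (expSet_zero_subset f))).trans_lt
      ((sSup_le_coe le_rfl).trans_lt (EReal.coe_lt_top _))
  have tendsto_bound :
      Filter.Tendsto (fun n : ℕ => ((1 + c + C / n : ℝ) : EReal)) Filter.atTop
        (nhds ((1 + c : ℝ) : EReal)) := by
    refine (continuous_coe_real_ereal.tendsto _).comp ?_
    simpa using (tendsto_const_div_atTop_nhds_zero_nat C).const_add (1 + c)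
  rw [acritExp, if_neg critExp_lt_top.ne]
  refine ge_of_tendsto tendsto_bound ?_
  filter_upwards [Filter.eventually_ge_atTop 1] with n hn
  exact (iInf_le _ n).trans (sSup_le_coe hn)

theorem two_le_acritExp_of_long_squares
    (h : ∀ L, ∃ p s l, 1 ≤ p ∧ p ≤ l ∧ L ≤ l ∧ ShiftOn f p s (s + l)) : 2 ≤ acritExp f := by
  unfold acritExp
  split_ifs with htop
  · exact le_top
  obtain ⟨r, hr, -⟩ := EReal.lt_iff_exists_real_btwn.1 (lt_top_iff_ne_top.2 htop)
  obtain ⟨M, hM⟩ := exists_nat_gt r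
  refine le_iInf fun n => ?_
  obtain ⟨p, s, l, hp, hpl, hL, hshift⟩ := h (M * n)
  have hp0 : (0 : ℝ) < p := by exact_mod_cast hp
  -- A bounded critical exponent prevents long powers from having a short period.
  have hnp : n ≤ p := by
    by_contra! hlt
    have hexp : ((((p + l : ℕ) : ℝ) / p : ℝ) : EReal) ≤ critExp f :=
      le_sSup ⟨_, hshift.div_mem_expSet hp (Nat.zero_le p), rfl⟩
    have hlt_r : ((p + l : ℕ) : ℝ) / p < M :=
      (EReal.coe_lt_coe_iff.1 (hexp.trans_lt hr)).trans hM
    rw [div_lt_iff₀ hp0] at hlt_r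
    have : p + l < M * p := by exact_mod_cast hlt_r
    have := Nat.mul_le_mul_left M hlt.le
    omega
  refine le_trans ?_ (le_sSup ⟨_, hshift.div_mem_expSet hp hnp, rfl⟩)
  have : (2 : ℝ) ≤ ((p + l : ℕ) : ℝ) / p := by
    rw [le_div_iff₀ hp0]
    exact_mod_cast (by omega : 2 * p ≤ p + l)
  exact EReal.coe_le_coe_iff.2 this

/-! ### Palindromic richness and recurrence -/

/-- The set of palindromic factors of a finite word, counted by `palCount`. -/
def palSet (w : List A) : Set (List A) := {p | p <:+: w ∧ p.reverse = p}

/-- The factor of `f` on the positions `[s, e]` is a palindromic suffix of the factor on `[j, e]`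
that has no other occurrence in it, so that it is a palindrome counted for the first time when
the letter at position `e` is read. -/
structure IsNewPalSuffix (f : ℕ → A) (j s e : ℕ) : Prop where
  start_le : j ≤ s
  le_end : s ≤ e
  pal : PalFrom f s (s + e)
  new : ∀ i, j ≤ i → i < s → factorAt f i (e + 1 - s) ≠ factorAt f s (e + 1 - s)

/-- Whenever a nonempty palindrome on the positions `[i, e]` of `f` is repeated on
`[i + p, e + p]`, some palindrome starting in `[i, i + p)` ends at `e + p`. This is the property
that complete returns to palindromes are palindromes, which characterizes rich sequences. -/
def PalReturnsClosed (f : ℕ → A) : Prop :=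
  ∀ p i e, 1 ≤ p → i ≤ e → ShiftOn f p i (e + 1) → PalFrom f (i + p) (i + p + (e + p)) →
    ∃ a, i ≤ a ∧ a < i + p ∧ PalFrom f a (a + (e + p))

theorem finite_palSet (w : List A) : (palSet w).Finite :=
  (List.finite_toSet w.sublists).subset fun _ hp => List.mem_sublists.2 hp.1.sublist

theorem palSet_mono {v w : List A} (h : v <:+: w) : palSet v ⊆ palSet w :=
  fun _ hp => ⟨hp.1.trans h, hp.2⟩

theorem RichSeq.ncard_palSet_factorAt (h : RichSeq f) (j n : ℕ) :
    (palSet (factorAt f j n)).ncard = n + 1 := by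
  have hrich : (palSet (factorAt f j n)).ncard = _ := h _ (isFactorS_factorAt f j n)
  rwa [length_factorAt] at hrich

theorem isInfix_factorAt_of_le {j s m n : ℕ} (hjs : j ≤ s) (hle : s + m ≤ j + n) :
    factorAt f s m <:+: factorAt f j n :=
  isInfix_factorAt_iff.2 ⟨s, hjs, by rwa [length_factorAt], occursAt_factorAt f s m⟩

theorem exists_palSuffix_of_mem_palSet {j e : ℕ} (hje : j ≤ e) {w : List A}
    (hw : w ∈ palSet (factorAt f j (e + 1 - j))) (hw' : w ∉ palSet (factorAt f j (e - j))) :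
    ∃ s, j ≤ s ∧ s ≤ e ∧ w = factorAt f s (e + 1 - s) ∧ PalFrom f s (s + e) := by
  obtain ⟨s, hjs, hse, hocc⟩ := isInfix_factorAt_iff.1 hw.1
  have hend : e < s + w.length := by
    by_contra! hle
    exact hw' ⟨isInfix_factorAt_iff.2 ⟨s, hjs, by omega, hocc⟩, hw.2⟩
  have hpos : 0 < w.length := by
    refine List.length_pos_iff.2 ?_
    rintro rfl
    exact hw' ⟨List.nil_infix, rfl⟩
  obtain ⟨m, hm⟩ : ∃ m, w.length = m + 1 := ⟨w.length - 1, by omega⟩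
  obtain rfl : e = s + m := by omega
  rw [occursAt_iff, hm] at hocc
  refine ⟨s, hjs, by omega, by rw [show s + m + 1 - s = m + 1 by omega, hocc], ?_⟩
  exact reverse_factorAt_eq_iff.1 (hocc ▸ hw.2)

theorem IsNewPalSuffix.palSet_eq_insert {j s e : ℕ} (h : IsNewPalSuffix f j s e) :
    palSet (factorAt f j (e + 1 - j)) =
      insert (factorAt f s (e + 1 - s)) (palSet (factorAt f j (e - j))) := by
  have hjs := h.start_le
  have hse := h.le_end
  refine Set.Subset.antisymm (fun w hw => ?_) (Set.insert_subset ⟨?_, ?_⟩ (palSet_mono ?_))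
  · by_cases hw' : w ∈ palSet (factorAt f j (e - j))
    · exact Or.inr hw'
    obtain ⟨i, hji, hie, rfl, hpal⟩ := exists_palSuffix_of_mem_palSet (by omega) hw hw'
    -- Reflecting about the centre of the longer of two palindromic suffixes
    -- produces an earlier occurrence of the shorter one.
    rcases lt_trichotomy i s with his | rfl | hsi
    · refine absurd (factorAt_eq_iff.2 fun t ht => ?_) (h.new i hji his)
      rw [h.pal (s + t) (e - t) (by omega) (by omega) (by omega)]
      exact hpal _ _ (by omega) (by omega) (by omega)
    · exact Or.inl rfl
    · refine absurd ⟨isInfix_factorAt_iff.2 ⟨s, hjs, by rw [length_factorAt]; omega, ?_⟩, hw.2⟩ hw'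
      rw [occursAt_iff, length_factorAt, factorAt_eq_iff]
      intro t ht
      rw [hpal (i + t) (e - t) (by omega) (by omega) (by omega)]
      exact (h.pal _ _ (by omega) (by omega) (by omega)).symm
  · exact isInfix_factorAt_of_le hjs (by omega)
  · obtain ⟨m, rfl⟩ := Nat.exists_eq_add_of_le hse
    rw [show s + m + 1 - s = m + 1 by omega]
    exact reverse_factorAt_eq_iff.2 h.pal
  · exact isInfix_factorAt_of_le le_rfl (by omega)

theorem IsNewPalSuffix.notMem_palSet {j s e : ℕ} (h : IsNewPalSuffix f j s e) :
    factorAt f s (e + 1 - s) ∉ palSet (factorAt f j (e - j)) := by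
  have hse := h.le_end
  rintro ⟨hinfix, -⟩
  obtain ⟨i, hji, hie, hocc⟩ := isInfix_factorAt_iff.1 hinfix
  rw [length_factorAt] at hie
  rw [occursAt_iff, length_factorAt] at hocc
  exact h.new i hji (by omega) hocc.symm

theorem richSeq_of_forall_isNewPalSuffix (h : ∀ j e, j ≤ e → ∃ s, IsNewPalSuffix f j s e) :
    RichSeq f := by
  have ncard_palSet (j n : ℕ) : (palSet (factorAt f j n)).ncard = n + 1 := by
    induction n with
    | zero =>
      have : palSet (factorAt f j 0) = {[]} := by
        ext w
        simp +contextual [palSet, factorAt]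
      rw [this, Set.ncard_singleton]
    | succ n ih =>
      obtain ⟨s, hs⟩ := h j (j + n) (by omega)
      have hinsert := hs.palSet_eq_insert
      have hnotMem := hs.notMem_palSet
      rw [Nat.add_sub_cancel_left, show j + n + 1 - j = n + 1 by omega] at hinsert
      rw [Nat.add_sub_cancel_left] at hnotMem
      rw [hinsert, Set.ncard_insert_of_notMem hnotMem (finite_palSet _), ih]
  rintro w ⟨j, hw⟩
  have := ncard_palSet j w.length
  rwa [← occursAt_iff.1 hw] at this

theorem RichSeq.exists_isNewPalSuffix (h : RichSeq f) {j e : ℕ} (hje : j ≤ e) :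
    ∃ s, IsNewPalSuffix f j s e := by
  have hlt : (palSet (factorAt f j (e - j))).ncard < (palSet (factorAt f j (e + 1 - j))).ncard := by
    rw [h.ncard_palSet_factorAt, h.ncard_palSet_factorAt]
    omega
  obtain ⟨w, hw, hw'⟩ := Set.exists_mem_notMem_of_ncard_lt_ncard hlt (finite_palSet _)
  obtain ⟨s, hjs, hse, rfl, hpal⟩ := exists_palSuffix_of_mem_palSet hje hw hw'
  refine ⟨s, hjs, hse, hpal, fun i hji his heq => hw' ⟨?_, hw.2⟩⟩
  rw [← heq]
  exact isInfix_factorAt_of_le hji (by omega)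

theorem PalReturnsClosed.richSeq (h : PalReturnsClosed f) : RichSeq f := by
  refine richSeq_of_forall_isNewPalSuffix fun j e hje => ?_
  classical
  have exists_pal : ∃ s, j ≤ s ∧ s ≤ e ∧ PalFrom f s (s + e) :=
    ⟨e, hje, le_rfl, fun x y hx hy hxy => by rw [show x = y by omega]⟩
  obtain ⟨hjs, hse, hpal⟩ := Nat.find_spec exists_pal
  set s := Nat.find exists_pal
  refine ⟨s, hjs, hse, hpal, fun i hji his heq => ?_⟩
  obtain ⟨p, hp⟩ := Nat.exists_eq_add_of_lt his
  obtain ⟨m, hm⟩ := Nat.exists_eq_add_of_le hse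
  have hshift : ShiftOn f (p + 1) i (i + (m + 1)) := by
    rwa [shiftOn_iff_factorAt_eq, ← add_assoc, ← hp, ← show e + 1 - s = m + 1 by omega]
  have hpal' : PalFrom f (i + (p + 1)) (i + (p + 1) + (i + m + (p + 1))) := by
    rwa [← add_assoc i, ← hp, show s + (i + m + (p + 1)) = s + e by omega]
  obtain ⟨a, hia, has, ha⟩ := h (p + 1) i (i + m) (by omega) (by omega) hshift hpal'
  refine Nat.find_min exists_pal (m := a) (by omega) ⟨by omega, by omega, ?_⟩
  convert ha using 1
  omega

theorem PalReturnsClosed.congr {B : Type*} {g : ℕ → B} (h : PalReturnsClosed f)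
    (hfg : ∀ x y, g x = g y ↔ f x = f y) : PalReturnsClosed g := by
  simpa only [PalReturnsClosed, ShiftOn, PalFrom, hfg] using h

theorem recurrent_iff :
    Recurrent f ↔ ∀ i n N, ∃ j, N ≤ j ∧ factorAt f j n = factorAt f i n := by
  constructor
  · intro h i n N
    obtain ⟨j, hNj, hj⟩ := h _ (isFactorS_factorAt f i n) N
    rw [occursAt_iff, length_factorAt] at hj
    exact ⟨j, hNj, hj.symm⟩
  · rintro h w ⟨i, hw⟩ N
    obtain ⟨j, hNj, hj⟩ := h i w.length N
    exact ⟨j, hNj, occursAt_iff.2 ((occursAt_iff.1 hw).trans hj.symm)⟩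

theorem Recurrent.congr {B : Type*} {g : ℕ → B} (h : Recurrent f)
    (hfg : ∀ x y, f x = f y → g x = g y) : Recurrent g := by
  rw [recurrent_iff] at h ⊢
  intro i n N
  obtain ⟨j, hNj, hj⟩ := h i n N
  exact ⟨j, hNj, factorAt_eq_iff.2 fun t ht => hfg _ _ (factorAt_eq_iff.1 hj t ht)⟩

/-! ### Squares in recurrent rich sequences -/

theorem IsNewPalSuffix.le_of_palFrom {s n a : ℕ} (h : IsNewPalSuffix f 0 s n)
    (ha : PalFrom f a (a + n)) : s ≤ a := by
  have hsn := h.le_end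
  by_contra! has
  refine h.new a (Nat.zero_le a) has (factorAt_eq_iff.2 fun t ht => ?_)
  rw [ha (a + t) (n - t) (by omega) (by omega) (by omega)]
  exact h.pal _ _ (by omega) (by omega) (by omega)

theorem IsNewPalSuffix.le_succ {s s' n : ℕ} (h : IsNewPalSuffix f 0 s n)
    (h' : IsNewPalSuffix f 0 s' (n + 1)) : s ≤ s' + 1 :=
  h.le_of_palFrom fun x y hx hy hxy => h'.pal x y (by omega) (by omega) (by omega)

theorem IsNewPalSuffix.factorAt_ne {s s' n n' : ℕ} (h : IsNewPalSuffix f 0 s n)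
    (h' : IsNewPalSuffix f 0 s' n') (hn : n < n') :
    factorAt f s (n + 1 - s) ≠ factorAt f s' (n' + 1 - s') := by
  intro heq
  have hlen : n + 1 - s = n' + 1 - s' := by simpa using congrArg List.length heq
  have := h.le_end
  exact h'.new s (Nat.zero_le s) (by omega) (hlen ▸ heq)

theorem IsNewPalSuffix.exists_le_of_recurrent {s : ℕ → ℕ} (h : ∀ n, IsNewPalSuffix f 0 (s n) n)
    (hrec : Recurrent f) (m : ℕ) : ∃ n, m < n ∧ s n ≤ s m := by
  have hm := (h m).le_end
  have exists_return : ∃ j, s m < j ∧ factorAt f j (m + 1 - s m) = factorAt f (s m) (m + 1 - s m) :=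
    recurrent_iff.1 hrec (s m) (m + 1 - s m) (s m + 1)
  classical
  obtain ⟨hj, hjeq⟩ := Nat.find_spec exists_return
  have first_return (i : ℕ) := Nat.find_min exists_return (m := i)
  generalize Nat.find exists_return = j at hj hjeq first_return
  rw [factorAt_eq_iff] at hjeq
  -- The new palindrome ending where the first return ends is the complete return.
  obtain ⟨n, hn⟩ : ∃ n, n = j + (m - s m) := ⟨_, rfl⟩
  have hsn := (h n).le_end
  refine ⟨n, by omega, ?_⟩
  by_contra! hlt
  have hsj : s n < j := by
    by_contra! hle
    refine (h n).new (s m + (s n - j)) (Nat.zero_le _) (by omega) (factorAt_eq_iff.2 fun t ht => ?_)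
    rw [add_assoc, ← hjeq (s n - j + t) (by omega)]
    congr 1
    omega
  refine first_return (s n) hsj ⟨hlt, factorAt_eq_iff.2 fun t ht => ?_⟩
  rw [(h n).pal (s n + t) (j + (m - s m - t)) (by omega) (by omega) (by omega),
    hjeq _ (by omega)]
  exact (h m).pal _ _ (by omega) (by omega) (by omega)

theorem IsNewPalSuffix.eventually_long [Finite A] {s : ℕ → ℕ}
    (h : ∀ n, IsNewPalSuffix f 0 (s n) n) (L : ℕ) : ∃ N, ∀ n ≥ N, s n + L ≤ n := by
  have injective_newPal : Function.Injective fun n => factorAt f (s n) (n + 1 - s n) := by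
    intro n n' heq
    rcases lt_trichotomy n n' with hlt | rfl | hlt
    · exact absurd heq ((h n).factorAt_ne (h n') hlt)
    · rfl
    · exact absurd heq.symm ((h n').factorAt_ne (h n) hlt)
  obtain ⟨B, hB⟩ :=
    ((List.finite_length_le A L).preimage injective_newPal.injOn).bddAbove
  refine ⟨B + 1, fun n hn => ?_⟩
  by_contra! hlt
  have : n ≤ B := hB (by
    rw [Set.mem_preimage, Set.mem_ofPred_eq, length_factorAt]
    omega)
  omega

theorem exists_succ_add_one_ne (s : ℕ → ℕ) (N : ℕ) : ∃ m ≥ N, s (m + 1) + 1 ≠ s m := by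
  by_contra! hconst
  have descends (k : ℕ) : s (N + k) + k = s N := by
    induction k with
    | zero => rfl
    | succ k ih =>
      have := hconst (N + k) (by omega)
      rw [← add_assoc N]
      omega
  have := descends (s N + 1)
  omega

theorem exists_last_succ_add_one_ne {s : ℕ → ℕ} {m n : ℕ} (hmn : m < n)
    (hm : s (m + 1) + 1 ≠ s m) :
    ∃ k, m ≤ k ∧ k < n ∧ s (k + 1) + 1 ≠ s k ∧ s n + n = s (k + 1) + (k + 1) := by
  induction n, hmn using Nat.le_induction with
  | base => exact ⟨m, le_rfl, Nat.lt_succ_self m, hm, rfl⟩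
  | succ n hmn ih =>
    by_cases hn : s (n + 1) + 1 = s n
    · obtain ⟨k, hmk, hkn, hk, heq⟩ := ih
      exact ⟨k, hmk, by omega, hk, by omega⟩
    · exact ⟨n, by omega, by omega, hn, rfl⟩

theorem exists_long_square_of_recurrent_of_rich [Finite A] (hrec : Recurrent f) (hrich : RichSeq f)
    (L : ℕ) : ∃ p s l, 1 ≤ p ∧ p ≤ l ∧ L ≤ l ∧ ShiftOn f p s (s + l) := by
  choose s h using fun n => hrich.exists_isNewPalSuffix (Nat.zero_le n)
  obtain ⟨N, hN⟩ := IsNewPalSuffix.eventually_long h (L + 1)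
  obtain ⟨m, hNm, hm⟩ := exists_succ_add_one_ne s N
  have exists_le := IsNewPalSuffix.exists_le_of_recurrent h hrec m
  classical
  obtain ⟨hmn, hsn⟩ := Nat.find_spec exists_le
  have lt_of_lt_find (i : ℕ) := Nat.find_min exists_le (m := i)
  generalize Nat.find exists_le = n at hmn hsn lt_of_lt_find
  -- At `k` the centre of the new palindrome jumps for the last time before `n`.
  obtain ⟨k, hmk, hkn, hk, hcentre⟩ := exists_last_succ_add_one_ne hmn hm
  have hsk : s m ≤ s k := by
    rcases hmk.eq_or_lt with rfl | hlt
    · rfl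
    · have := lt_of_lt_find k hkn
      omega
  have hstep := (h k).le_succ (h (k + 1))
  have hlong := hN k (by omega)
  have hlong' := hN (k + 1) (by omega)
  refine ⟨s (k + 1) + 1 - s k, s k, k + 1 - s k, by omega, by omega, by omega, ?_⟩
  -- Composing the reflections about the two centres is a translation.
  intro x hx hxk
  rw [(h k).pal x (s k + k - x) hx (by omega) (by omega)]
  exact (h n).pal _ _ (by omega) (by omega) (by omega)

theorem two_le_acritExp_of_recurrent_of_rich [Finite A] (hrec : Recurrent f) (hrich : RichSeq f) :
    2 ≤ acritExp f :=
  two_le_acritExp_of_long_squares (exists_long_square_of_recurrent_of_rich hrec hrich)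

end

/-! ### Morphisms whose blocks have a single nonzero letter -/

/-- A morphism `z ↦ 0 (letter z)^(mult z)` on words over `ℕ`, injective on letters. -/
structure BlockMorphism where
  mult : ℕ → ℕ
  letter : ℕ → ℕ
  mult_pos : ∀ z, 1 ≤ mult z
  letter_ne_zero : ∀ z, letter z ≠ 0
  eq_of_mult_eq_of_letter_eq : ∀ z w, mult z = mult w → letter z = letter w → z = w

namespace BlockMorphism

/-- The position in the image of `u` at which the image of the letter `u n` starts. -/
def blockStart (φ : BlockMorphism) (u : ℕ → ℕ) (n : ℕ) : ℕ :=
  ∑ i ∈ Finset.range n, (1 + φ.mult (u i))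

/-- The index of the letter of `u` whose image covers the position `x` of the image of `u`. -/
def blockIndex (φ : BlockMorphism) (u : ℕ → ℕ) (x : ℕ) : ℕ :=
  Nat.findGreatest (fun n => φ.blockStart u n ≤ x) x

/-- The image of an infinite sequence under a block morphism. -/
def image (φ : BlockMorphism) (u : ℕ → ℕ) (x : ℕ) : ℕ :=
  if x = φ.blockStart u (φ.blockIndex u x) then 0 else φ.letter (u (φ.blockIndex u x))

/-- The letter following `(letter z)^t`, for `t ≤ mult z`, in the word `(letter z)^(mult z) 0`:
what is read, on either side, after `t` letters of a block starting from the adjacent `0`. -/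
def tailLetter (φ : BlockMorphism) (z t : ℕ) : ℕ := if t < φ.mult z then φ.letter z else 0

variable {φ : BlockMorphism} {u v : ℕ → ℕ}

@[simp]
theorem blockStart_zero : φ.blockStart u 0 = 0 := rfl

theorem blockStart_succ (n : ℕ) :
    φ.blockStart u (n + 1) = φ.blockStart u n + (1 + φ.mult (u n)) :=
  Finset.sum_range_succ _ n

theorem blockStart_strictMono : StrictMono (φ.blockStart u) :=
  strictMono_nat_of_lt_succ fun n => by
    rw [blockStart_succ]
    omega

theorem blockStart_add_two_mul_le (m n : ℕ) :
    φ.blockStart u m + 2 * n ≤ φ.blockStart u (m + n) := by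
  induction n with
  | zero => rfl
  | succ n ih =>
    have := φ.mult_pos (u (m + n))
    rw [← add_assoc, blockStart_succ]
    omega

theorem two_mul_le_blockStart (n : ℕ) : 2 * n ≤ φ.blockStart u n := by
  simpa using blockStart_add_two_mul_le (φ := φ) (u := u) 0 n

theorem le_blockIndex_iff {n x : ℕ} : n ≤ φ.blockIndex u x ↔ φ.blockStart u n ≤ x := by
  constructor
  · intro h
    exact (blockStart_strictMono.monotone h).trans
      (Nat.findGreatest_spec (P := fun n => φ.blockStart u n ≤ x) (Nat.zero_le x) (Nat.zero_le x))
  · intro h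
    have := two_mul_le_blockStart (φ := φ) (u := u) n
    exact Nat.le_findGreatest (by omega) h

theorem blockIndex_eq {n x : ℕ} (hx : φ.blockStart u n ≤ x) (hx' : x < φ.blockStart u (n + 1)) :
    φ.blockIndex u x = n :=
  le_antisymm (Nat.lt_succ_iff.1 (lt_of_not_ge fun h => hx'.not_ge (le_blockIndex_iff.1 h)))
    (le_blockIndex_iff.2 hx)

theorem exists_blockStart_le_lt (φ : BlockMorphism) (u : ℕ → ℕ) (x : ℕ) :
    ∃ n, φ.blockStart u n ≤ x ∧ x < φ.blockStart u (n + 1) :=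
  ⟨φ.blockIndex u x, le_blockIndex_iff.1 le_rfl,
    lt_of_not_ge fun h => (le_blockIndex_iff.2 h).not_gt (Nat.lt_succ_self _)⟩

@[simp]
theorem image_blockStart (n : ℕ) : φ.image u (φ.blockStart u n) = 0 := by
  rw [image, blockIndex_eq le_rfl (blockStart_strictMono n.lt_succ_self), if_pos rfl]

theorem image_of_lt_of_lt {n x : ℕ} (hx : φ.blockStart u n < x)
    (hx' : x < φ.blockStart u (n + 1)) : φ.image u x = φ.letter (u n) := by
  rw [image, blockIndex_eq hx.le hx', if_neg hx.ne']

theorem image_eq_zero_iff {x : ℕ} : φ.image u x = 0 ↔ ∃ n, x = φ.blockStart u n := by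
  constructor
  · intro h
    obtain ⟨n, hn, hn'⟩ := exists_blockStart_le_lt φ u x
    rcases hn.eq_or_lt with heq | hlt
    · exact ⟨n, heq.symm⟩
    · exact absurd (image_of_lt_of_lt hlt hn' ▸ h) (φ.letter_ne_zero _)
  · rintro ⟨n, rfl⟩
    exact image_blockStart n

theorem image_zero : φ.image u 0 = 0 := image_blockStart 0

theorem image_right {n t : ℕ} (ht : t ≤ φ.mult (u n)) :
    φ.image u (φ.blockStart u n + 1 + t) = φ.tailLetter (u n) t := by
  have hsucc := blockStart_succ (φ := φ) (u := u) n
  unfold tailLetter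
  split_ifs with hlt
  · exact image_of_lt_of_lt (by omega) (by omega)
  · rw [show φ.blockStart u n + 1 + t = φ.blockStart u (n + 1) by omega, image_blockStart]

theorem image_left {n t x : ℕ} (ht : t ≤ φ.mult (u n)) (hx : x + 1 + t = φ.blockStart u (n + 1)) :
    φ.image u x = φ.tailLetter (u n) t := by
  have hsucc := blockStart_succ (φ := φ) (u := u) n
  unfold tailLetter
  split_ifs with hlt
  · exact image_of_lt_of_lt (by omega) (by omega)
  · rw [show x = φ.blockStart u n by omega, image_blockStart]

theorem lt_blockStart_succ {n x : ℕ}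
    (h : ∀ y, φ.blockStart u n < y → y ≤ x → φ.image u y ≠ 0) : x < φ.blockStart u (n + 1) := by
  by_contra! hle
  exact h _ (blockStart_strictMono n.lt_succ_self) hle (image_blockStart _)

theorem blockStart_lt {n x : ℕ}
    (h : ∀ y, x ≤ y → y < φ.blockStart u (n + 1) → φ.image u y ≠ 0) : φ.blockStart u n < x := by
  by_contra! hle
  exact h _ hle (blockStart_strictMono n.lt_succ_self) (image_blockStart _)

/-! ### Images of equal factors -/

theorem blockStart_add_add {i j l : ℕ} (h : ∀ t < l, u (i + t) = v (j + t)) :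
    φ.blockStart u (i + l) + φ.blockStart v j = φ.blockStart u i + φ.blockStart v (j + l) := by
  induction l with
  | zero => rfl
  | succ l ih =>
    have := ih fun t ht => h t (by omega)
    rw [← add_assoc, ← add_assoc, blockStart_succ, blockStart_succ, h l l.lt_succ_self]
    omega

theorem image_blockStart_add {i j l s : ℕ} (h : ∀ t < l, u (i + t) = v (j + t))
    (hs : φ.blockStart v j + s ≤ φ.blockStart v (j + l)) :
    φ.image u (φ.blockStart u i + s) = φ.image v (φ.blockStart v j + s) := by
  obtain ⟨n, hn, hn'⟩ := exists_blockStart_le_lt φ v (φ.blockStart v j + s)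
  have hjn : j ≤ n := by
    have : j < n + 1 :=
      (blockStart_strictMono (φ := φ) (u := v)).lt_iff_lt.1 (by omega)
    omega
  have hnl : n ≤ j + l := blockStart_strictMono.le_iff_le.1 (hn.trans hs)
  obtain ⟨k, rfl⟩ := Nat.exists_eq_add_of_le hjn
  have hk := blockStart_add_add (φ := φ) (u := u) (v := v) (i := i) (j := j) (l := k)
    fun t ht => h t (by omega)
  rcases hn.eq_or_lt with heq | hlt
  · rw [← heq, show φ.blockStart u i + s = φ.blockStart u (i + k) by omega,
      image_blockStart, image_blockStart]
  · have hkl : k < l := by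
      by_contra! hle
      obtain rfl : k = l := by omega
      omega
    rw [blockStart_succ] at hn'
    rw [image_of_lt_of_lt hlt (by rw [blockStart_succ]; omega), ← h k hkl]
    exact image_of_lt_of_lt (by omega) (by rw [blockStart_succ, h k hkl]; omega)

theorem image_eq_of_agree {l x : ℕ} (h : ∀ t < l, u t = v t) (hx : x ≤ φ.blockStart v l) :
    φ.image u x = φ.image v x := by
  simpa using image_blockStart_add (i := 0) (j := 0) (s := x) (by simpa using h) (by simpa using hx)

theorem exists_ge_image_factorAt_eq {l N : ℕ}
    (h : ∃ j, N ≤ j ∧ factorAt u j l = factorAt u 0 l) :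
    ∃ j, N ≤ j ∧
      factorAt (φ.image u) j (φ.blockStart u l + 1) =
        factorAt (φ.image u) 0 (φ.blockStart u l + 1) := by
  obtain ⟨j, hNj, hj⟩ := h
  have := two_mul_le_blockStart (φ := φ) (u := u) j
  refine ⟨φ.blockStart u j, by omega, factorAt_eq_iff.2 fun t ht => ?_⟩
  have := image_blockStart_add (φ := φ) (factorAt_eq_iff.1 hj) (s := t) (by simp; omega)
  simpa using this

end BlockMorphism

theorem factorAt_eq_of_le {f g : ℕ → A} {i j m n : ℕ} (h : factorAt f i n = factorAt g j n)
    (hmn : m ≤ n) : factorAt f i m = factorAt g j m :=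
  factorAt_eq_iff.2 fun t ht => factorAt_eq_iff.1 h t (by omega)

theorem recurrent_of_prefixes {f : ℕ → A}
    (h : ∀ n N, ∃ j, N ≤ j ∧ factorAt f j n = factorAt f 0 n) : Recurrent f := by
  refine recurrent_iff.2 fun i n N => ?_
  obtain ⟨j, hNj, hj⟩ := h (i + n) N
  refine ⟨j + i, by omega, factorAt_eq_iff.2 fun t ht => ?_⟩
  rw [add_assoc, factorAt_eq_iff.1 hj (i + t) (by omega), zero_add]

namespace BlockMorphism

variable {φ : BlockMorphism} {u : ℕ → ℕ}

theorem recurrent_image (h : Recurrent u) : Recurrent (φ.image u) := by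
  refine recurrent_of_prefixes fun n N => ?_
  obtain ⟨j, hNj, hj⟩ := exists_ge_image_factorAt_eq (φ := φ) (recurrent_iff.1 h 0 n N)
  have := two_mul_le_blockStart (φ := φ) (u := u) n
  exact ⟨j, hNj, factorAt_eq_of_le hj (by omega)⟩

theorem recurrent_of_image_eq (h : φ.image u = u) : Recurrent u := by
  refine recurrent_of_prefixes fun n => ?_
  induction n with
  | zero => exact fun N => ⟨N, le_rfl, rfl⟩
  | succ n ih =>
    intro N
    obtain ⟨j, hNj, hj⟩ := exists_ge_image_factorAt_eq (φ := φ) (ih N)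
    have := two_mul_le_blockStart (φ := φ) (u := u) n
    rw [h] at hj
    exact ⟨j, hNj, factorAt_eq_of_le hj (by omega)⟩

/-- The fixed point of `φ` starting with `0`, the limit of the sequences `φ^k(0^ω)`, the first
`k + 1` letters of which are final. -/
def fixedPoint (φ : BlockMorphism) (x : ℕ) : ℕ := φ.image^[x] 0 x

theorem iterate_image_succ_eq {k x : ℕ} (hx : x ≤ k) :
    φ.image^[k + 1] 0 x = φ.image^[k] 0 x := by
  induction k generalizing x with
  | zero =>
    obtain rfl : x = 0 := by omega
    exact image_zero (φ := φ) (u := 0)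
  | succ k ih =>
    simp only [Function.iterate_succ_apply'] at ih ⊢
    refine image_eq_of_agree (l := k + 1) (fun t ht => ih (by omega)) ?_
    have := two_mul_le_blockStart (φ := φ) (u := φ.image^[k] 0) (k + 1)
    omega

theorem fixedPoint_eq_iterate {k x : ℕ} (hx : x ≤ k) : φ.fixedPoint x = φ.image^[k] 0 x := by
  induction k, hx using Nat.le_induction with
  | base => rfl
  | succ k hk ih => rw [iterate_image_succ_eq hk, ih]

theorem image_fixedPoint (φ : BlockMorphism) : φ.image φ.fixedPoint = φ.fixedPoint := by
  funext x
  have := two_mul_le_blockStart (φ := φ) (u := φ.image^[x] 0) x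
  rw [image_eq_of_agree (v := φ.image^[x] 0) (l := x)
      (fun t ht => fixedPoint_eq_iterate (by omega)) (by omega),
    ← Function.iterate_succ_apply' φ.image x, iterate_image_succ_eq le_rfl, fixedPoint]

end BlockMorphism

namespace BlockMorphism

variable {φ : BlockMorphism} {u : ℕ → ℕ}

/-! ### Palindromes and periods of images -/

theorem blockStart_add_of_reversed {c j k : ℕ}
    (h : ∀ i i', i + i' + 1 = k → u (c + i) = u (j + i')) :
    φ.blockStart u (c + k) + φ.blockStart u j = φ.blockStart u c + φ.blockStart u (j + k) := by
  have sum_eq : ∑ i ∈ Finset.range k, (1 + φ.mult (u (c + i))) =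
      ∑ i ∈ Finset.range k, (1 + φ.mult (u (j + i))) := by
    rw [← Finset.sum_range_reflect]
    refine Finset.sum_congr rfl fun i hi => ?_
    have := Finset.mem_range.1 hi
    rw [h (k - 1 - i) i (by omega)]
  simp only [blockStart, Finset.sum_range_add]
  omega

theorem image_of_reversed {c j k s y : ℕ} (h : ∀ i i', i + i' + 1 = k → u (c + i) = u (j + i'))
    (hs : φ.blockStart u c + s ≤ φ.blockStart u (c + k))
    (hy : y + s = φ.blockStart u (j + k)) :
    φ.image u (φ.blockStart u c + s) = φ.image u y := by
  obtain ⟨n, hn, hn'⟩ := exists_blockStart_le_lt φ u (φ.blockStart u c + s)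
  have hcn : c ≤ n := by
    have : c < n + 1 := (blockStart_strictMono (φ := φ) (u := u)).lt_iff_lt.1 (by omega)
    omega
  have hnk : n ≤ c + k := blockStart_strictMono.le_iff_le.1 (hn.trans hs)
  obtain ⟨i, rfl⟩ := Nat.exists_eq_add_of_le hcn
  obtain ⟨i', rfl⟩ : ∃ i', k = i' + i := ⟨k - i, by omega⟩
  have hstart := blockStart_add_of_reversed (φ := φ) (u := u) (c := c) (j := j + i') (k := i)
    fun m m' hm => by rw [add_assoc, h m (i' + m') (by omega)]
  rw [add_assoc] at hstart
  rcases hn.eq_or_lt with heq | hlt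
  · rw [← heq, show y = φ.blockStart u (j + i') by omega, image_blockStart, image_blockStart]
  · obtain _ | i' := i'
    · rw [zero_add] at hs
      omega
    have hletter := h i i' (by omega)
    have hsucc := blockStart_succ (φ := φ) (u := u) (j + i')
    rw [blockStart_succ, hletter] at hn'
    rw [← add_assoc] at hstart
    rw [image_of_lt_of_lt hlt (by rw [blockStart_succ, hletter]; omega), hletter]
    exact (image_of_lt_of_lt (by omega) (by omega)).symm

theorem palFrom_image {c n : ℕ} (h : ∀ x y, c ≤ x → c ≤ y → x + y + 1 = c + n → u x = u y) :
    PalFrom (φ.image u) (φ.blockStart u c) (φ.blockStart u c + φ.blockStart u n) := by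
  intro x y hx hy hxy
  have hcn : c ≤ n := (blockStart_strictMono (φ := φ) (u := u)).le_iff_le.1 (by omega)
  obtain ⟨s, rfl⟩ := Nat.exists_eq_add_of_le hx
  obtain ⟨k, rfl⟩ := Nat.exists_eq_add_of_le hcn
  exact image_of_reversed (c := c) (j := c) (k := k)
    (fun i i' hi => h _ _ (by omega) (by omega) (by omega)) (by omega) (by omega)

theorem palFrom_image_extend {a n t x : ℕ} (han : a < n) (h : PalFrom u (a + 1) (a + n))
    (ha : t ≤ φ.mult (u a)) (hn : t ≤ φ.mult (u n))
    (hletter : 0 < t → φ.letter (u a) = φ.letter (u n))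
    (hx : x + t = φ.blockStart u (a + 1)) :
    PalFrom (φ.image u) x (φ.blockStart u (a + 1) + φ.blockStart u n) := by
  have hstart := blockStart_succ (φ := φ) (u := u) a
  have hstart' := blockStart_succ (φ := φ) (u := u) n
  have hle := (blockStart_strictMono (φ := φ) (u := u)).le_iff_le.2 (Nat.succ_le_of_lt han)
  rw [Nat.succ_eq_add_one] at hle
  have eq_of_lt {y z : ℕ} (hy : x ≤ y) (hy' : y < φ.blockStart u (a + 1))
      (hyz : y + z = φ.blockStart u (a + 1) + φ.blockStart u n) :
      φ.image u y = φ.image u z := by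
    rw [image_of_lt_of_lt (n := a) (by omega) hy', hletter (by omega)]
    exact (image_of_lt_of_lt (by omega) (by omega)).symm
  intro y z hy hz hyz
  by_cases hy' : y < φ.blockStart u (a + 1)
  · exact eq_of_lt hy hy' hyz
  by_cases hz' : z < φ.blockStart u (a + 1)
  · exact (eq_of_lt hz hz' (by omega)).symm
  · exact palFrom_image (fun i j hi hj hij => h i j hi hj (by omega)) y z (by omega) (by omega) hyz

theorem eq_of_run_right {n z : ℕ}
    (hrun : ∀ t, t < φ.mult z → φ.image u (φ.blockStart u n + 1 + t) = φ.letter z)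
    (hzero : φ.image u (φ.blockStart u n + 1 + φ.mult z) = 0) : u n = z := by
  have hpos := φ.mult_pos z
  have hpos' : 0 < φ.mult (u n) := φ.mult_pos (u n)
  have hmult : φ.mult (u n) = φ.mult z := by
    rcases lt_trichotomy (φ.mult (u n)) (φ.mult z) with hlt | heq | hlt
    · have := hrun _ hlt
      rw [image_right le_rfl, tailLetter, if_neg (lt_irrefl _)] at this
      exact absurd this.symm (φ.letter_ne_zero z)
    · exact heq
    · rw [image_right hlt.le, tailLetter, if_pos hlt] at hzero
      exact absurd hzero (φ.letter_ne_zero _)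
  refine φ.eq_of_mult_eq_of_letter_eq _ _ hmult ?_
  rw [← hrun 0 hpos, image_right (Nat.zero_le _), tailLetter, if_pos hpos']

theorem eq_of_run_left {n z : ℕ}
    (hrun : ∀ x t, t < φ.mult z → x + 1 + t = φ.blockStart u (n + 1) → φ.image u x = φ.letter z)
    (hzero : ∀ x, x + 1 + φ.mult z = φ.blockStart u (n + 1) → φ.image u x = 0) :
    u n = z := by
  have hpos := φ.mult_pos z
  have hpos' : 0 < φ.mult (u n) := φ.mult_pos (u n)
  have hsucc := blockStart_succ (φ := φ) (u := u) n
  have hmult : φ.mult (u n) = φ.mult z := by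
    rcases lt_trichotomy (φ.mult (u n)) (φ.mult z) with hlt | heq | hlt
    · have := hrun (φ.blockStart u n) _ hlt (by omega)
      rw [image_blockStart] at this
      exact absurd this.symm (φ.letter_ne_zero z)
    · exact heq
    · have := hzero (φ.blockStart u (n + 1) - 1 - φ.mult z) (by omega)
      rw [image_left hlt.le (by omega), tailLetter, if_pos hlt] at this
      exact absurd this (φ.letter_ne_zero _)
  refine φ.eq_of_mult_eq_of_letter_eq _ _ hmult ?_
  rw [← hrun (φ.blockStart u n + φ.mult (u n)) 0 hpos (by omega),
    image_left (n := n) (Nat.zero_le _) (by omega), tailLetter, if_pos hpos']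

theorem eq_of_shiftOn_image {p q n : ℕ} (hn : φ.blockStart u (n + p) = φ.blockStart u n + q)
    (h : ShiftOn (φ.image u) q (φ.blockStart u n) (φ.blockStart u (n + 1) + 1)) :
    u n = u (n + p) := by
  have hsucc := blockStart_succ (φ := φ) (u := u) n
  have shifted {t : ℕ} (ht : t ≤ φ.mult (u n)) :
      φ.image u (φ.blockStart u (n + p) + 1 + t) = φ.tailLetter (u n) t := by
    rw [← image_right ht, h (φ.blockStart u n + 1 + t) (by omega) (by omega), hn]
    congr 1
    omega
  symm
  refine eq_of_run_right (φ := φ) (fun t ht => ?_) ?_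
  · rw [shifted ht.le, tailLetter, if_pos ht]
  · rw [shifted le_rfl, tailLetter, if_neg (lt_irrefl _)]

theorem blockStart_add_of_shiftOn_image {p q c d i : ℕ}
    (hc : φ.blockStart u (c + p) = φ.blockStart u c + q)
    (h : ShiftOn (φ.image u) q (φ.blockStart u c) (φ.blockStart u d + 1))
    (hci : c ≤ i) (hid : i ≤ d) : φ.blockStart u (i + p) = φ.blockStart u i + q := by
  induction i, hci using Nat.le_induction with
  | base => exact hc
  | succ i hci ih =>
    have hstart := ih (by omega)
    have hmono := (blockStart_strictMono (φ := φ) (u := u)).monotone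
    have hletter := eq_of_shiftOn_image hstart
      (h.mono (hmono hci) (Nat.succ_le_succ (hmono hid)))
    rw [Nat.add_right_comm, blockStart_succ, blockStart_succ, ← hletter]
    omega

theorem shiftOn_of_shiftOn_image {p q c d : ℕ}
    (hc : φ.blockStart u (c + p) = φ.blockStart u c + q)
    (h : ShiftOn (φ.image u) q (φ.blockStart u c) (φ.blockStart u d + 1)) : ShiftOn u p c d := by
  intro i hci hid
  have hmono := (blockStart_strictMono (φ := φ) (u := u)).monotone
  exact eq_of_shiftOn_image (blockStart_add_of_shiftOn_image hc h hci hid.le)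
    (h.mono (hmono hci) (Nat.succ_le_succ (hmono hid)))

theorem eq_of_palFrom_image {c e i j : ℕ}
    (h : PalFrom (φ.image u) (φ.blockStart u c) (φ.blockStart u c + φ.blockStart u (e + 1)))
    (hij : c + i ≤ j) (he : j + i = e) : u j = u (c + i) := by
  induction i using Nat.strong_induction_on generalizing j with
  | _ i ih =>
    have hstart := blockStart_add_of_reversed (φ := φ) (u := u) (c := c) (j := j + 1) (k := i)
      fun m m' hm => by
        rw [← ih m (by omega) (j := j + 1 + m') (by omega) (by omega)]
    rw [show j + 1 + i = e + 1 by omega] at hstart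
    have hsucc := blockStart_succ (φ := φ) (u := u) (c + i)
    have hmono := (blockStart_strictMono (φ := φ) (u := u)).monotone
    have hle := hmono (Nat.succ_le_succ hij)
    have hle' := hmono (Nat.le_add_right c i)
    simp only [Nat.succ_eq_add_one] at hle
    have mirrored {x t : ℕ} (ht : t ≤ φ.mult (u (c + i)))
        (hx : x + 1 + t = φ.blockStart u (j + 1)) :
        φ.image u x = φ.tailLetter (u (c + i)) t := by
      rw [← image_right ht]
      exact h _ _ (by omega) (by omega) (by omega)
    refine eq_of_run_left (φ := φ) (fun x t ht hx => ?_) fun x hx => ?_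
    · rw [mirrored ht.le hx, tailLetter, if_pos ht]
    · rw [mirrored le_rfl hx, tailLetter, if_neg (lt_irrefl _)]

theorem palFrom_of_palFrom_image {c e : ℕ}
    (h : PalFrom (φ.image u) (φ.blockStart u c) (φ.blockStart u c + φ.blockStart u (e + 1))) :
    PalFrom u c (c + e) := by
  intro x y hx hy hxy
  obtain ⟨i, rfl⟩ := Nat.exists_eq_add_of_le hx
  obtain ⟨j, rfl⟩ := Nat.exists_eq_add_of_le hy
  rcases le_total (c + i) (c + j) with hij | hij
  · exact (eq_of_palFrom_image h hij (by omega)).symm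
  · exact eq_of_palFrom_image h hij (by omega)

end BlockMorphism

/-! ### Marked palindromic returns -/

/-- A strengthening of the condition in `PalReturnsClosed`, for factors ending at `y`, that passes
from a sequence to its image under a block morphism: the letters surrounding the repeated factor,
its other occurrence and the palindrome are only required to belong to a set `K`. -/
def MarkedReturnsAt (u : ℕ → ℕ) (y : ℕ) : Prop :=
  ∀ (K : Set ℕ) (p s e : ℕ), 1 ≤ p → s ≤ e → e + p = y →
    u s ∈ K → u e ∈ K → u (s + p) ∈ K → u y ∈ K →
    ShiftOn u p (s + 1) e → PalFrom u (s + p + 1) (s + p + y) →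
    ∃ a, s ≤ a ∧ a < s + p ∧ u a ∈ K ∧ PalFrom u (a + 1) (a + y)

theorem MarkedReturnsAt.exists_of_mem {u : ℕ → ℕ} {n i : ℕ} (h : MarkedReturnsAt u n)
    {K : Set ℕ} (hin : i < n) (hi : u i ∈ K) (hn : u n ∈ K) :
    ∃ a, i ≤ a ∧ a < n ∧ u a ∈ K ∧ PalFrom u (a + 1) (a + n) := by
  have hni : i + (n - i) = n := by omega
  have := h K (n - i) i i (by omega) le_rfl hni hi hi (by rwa [hni]) hn
    (fun x hx hx' => by omega) (fun x y hx hy hxy => by omega)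
  rwa [hni] at this

theorem palReturnsClosed_of_markedReturnsAt {u : ℕ → ℕ} (h : ∀ y, MarkedReturnsAt u y) :
    PalReturnsClosed u := by
  intro p i e hp hie hshift hpal
  have hi := hshift i le_rfl (by omega)
  have he := hshift e hie (by omega)
  have hends : u (i + p) = u (e + p) := hpal _ _ le_rfl (by omega) rfl
  obtain ⟨a, hia, hap, ha, hpal'⟩ := h _ {u (i + p)} p i e hp hie rfl hi (he.trans hends.symm) rfl
    hends.symm (hshift.mono (by omega) (by omega)) fun x y hx hy => hpal x y (by omega) (by omega)
  refine ⟨a, hia, hap, fun x y hx hy hxy => ?_⟩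
  rcases eq_or_ne x a with rfl | hxa
  · obtain rfl : y = e + p := by omega
    exact Eq.trans ha hends
  rcases eq_or_ne y a with rfl | hya
  · obtain rfl : x = e + p := by omega
    exact hends.symm.trans (Eq.symm ha)
  · exact hpal' x y (by omega) (by omega) hxy

namespace BlockMorphism

variable {φ : BlockMorphism} {u : ℕ → ℕ} {K : Set ℕ}

/-- The letters whose block, read from the adjacent `0`, starts with `a^t` followed by a letter
of `K`: those around which a run of `t` letters `a` delimited by `K` can sit. -/
def marked (φ : BlockMorphism) (t a : ℕ) (K : Set ℕ) : Set ℕ :=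
  {z | t ≤ φ.mult z ∧ (0 < t → φ.letter z = a) ∧ φ.tailLetter z t ∈ K}

theorem mem_marked_of_image_right {n t a y : ℕ} (ha : a ≠ 0) (hy : y = φ.blockStart u n + 1 + t)
    (hrun : ∀ i, φ.blockStart u n < i → i < y → φ.image u i = a) (hK : φ.image u y ∈ K) :
    u n ∈ φ.marked t a K := by
  have hsucc := blockStart_succ (φ := φ) (u := u) n
  have hlt : φ.blockStart u n + t < φ.blockStart u (n + 1) := lt_blockStart_succ
    fun i hi hi' => by rw [hrun i hi (by omega)]; exact ha
  have ht : t ≤ φ.mult (u n) := by omega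
  refine ⟨ht, fun hpos => ?_, ?_⟩
  · rw [← hrun _ (Nat.lt_succ_self _) (by omega)]
    exact (image_of_lt_of_lt (Nat.lt_succ_self _) (by omega)).symm
  · rwa [← image_right ht, ← hy]

theorem mem_marked_of_image_left {n t a x : ℕ} (ha : a ≠ 0)
    (hx : x + 1 + t = φ.blockStart u (n + 1))
    (hrun : ∀ i, x < i → i < φ.blockStart u (n + 1) → φ.image u i = a) (hK : φ.image u x ∈ K) :
    u n ∈ φ.marked t a K := by
  have hsucc := blockStart_succ (φ := φ) (u := u) n
  have hlt : φ.blockStart u n < x + 1 := blockStart_lt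
    fun i hi hi' => by rw [hrun i (by omega) hi']; exact ha
  have ht : t ≤ φ.mult (u n) := by omega
  refine ⟨ht, fun hpos => ?_, ?_⟩
  · rw [← hrun (x + 1) (by omega) (by omega)]
    exact (image_of_lt_of_lt hlt (by omega)).symm
  · rwa [← image_left ht hx]

theorem exists_palFrom_image_of_mem_marked {a n t : ℕ} (han : a < n)
    (hpal : PalFrom u (a + 1) (a + n)) (ha : u a ∈ φ.marked t (φ.letter (u n)) K)
    (ht : t ≤ φ.mult (u n)) :
    ∃ b, b + 1 + t = φ.blockStart u (a + 1) ∧ φ.image u b ∈ K ∧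
      PalFrom (φ.image u) (b + 1) (b + (φ.blockStart u n + 1 + t)) := by
  obtain ⟨hta, hletter, hK⟩ := ha
  have hsucc := blockStart_succ (φ := φ) (u := u) a
  obtain ⟨b, hb⟩ : ∃ b, b + 1 + t = φ.blockStart u (a + 1) :=
    ⟨φ.blockStart u (a + 1) - 1 - t, by omega⟩
  refine ⟨b, hb, by rwa [image_left hta hb], ?_⟩
  have := palFrom_image_extend (x := b + 1) han hpal hta ht hletter (by omega)
  rwa [← hb, show b + 1 + t + φ.blockStart u n = b + (φ.blockStart u n + 1 + t) by omega] at this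

theorem exists_marked_return_blocks {n t p s e : ℕ} (hp : 1 ≤ p) (ht : t ≤ φ.mult (u n))
    (he : e + p = φ.blockStart u n + 1 + t) (hlt : s + p < φ.blockStart u n)
    (hshift : ShiftOn (φ.image u) p (s + 1) e)
    (hpal : PalFrom (φ.image u) (s + p + 1) (s + p + (e + p))) :
    ∃ m q d, 1 ≤ q ∧ m ≤ d ∧ d + q = n ∧ s + 1 + t = φ.blockStart u (m + 1) ∧
      s + p + 1 + t = φ.blockStart u (m + q + 1) ∧ e = φ.blockStart u d + 1 + t ∧
      ShiftOn u q (m + 1) d ∧ PalFrom u (m + q + 1) (m + q + n) := by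
  have hmono := blockStart_strictMono (φ := φ) (u := u)
  have hsucc := blockStart_succ (φ := φ) (u := u) n
  have pal_zero : φ.image u (s + p + 1 + t) = 0 := by
    rw [hpal _ (φ.blockStart u n) (by omega) (by omega) (by omega), image_blockStart]
  have shift_zero : φ.image u (s + 1 + t) = 0 := by
    rw [hshift _ (by omega) (by omega), ← pal_zero]
    congr 1
    omega
  have last_zero : φ.image u (φ.blockStart u n - p) = 0 := by
    rw [hshift _ (by omega) (by omega), Nat.sub_add_cancel (by omega), image_blockStart]
  have hle : s + p + 1 + t ≤ φ.blockStart u n := by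
    by_contra! hgt
    exact φ.letter_ne_zero (u n) ((image_of_lt_of_lt hgt (by omega)).symm.trans pal_zero)
  obtain ⟨_ | m', hm'⟩ := image_eq_zero_iff.1 pal_zero
  · rw [blockStart_zero] at hm'
    omega
  obtain ⟨_ | m, hm⟩ := image_eq_zero_iff.1 shift_zero
  · rw [blockStart_zero] at hm
    omega
  obtain ⟨d, hd⟩ := image_eq_zero_iff.1 last_zero
  have hmm' : m + 1 < m' + 1 := hmono.lt_iff_lt.1 (by omega)
  have hmd : m + 1 ≤ d := hmono.le_iff_le.1 (by omega)
  obtain ⟨q, rfl⟩ : ∃ q, m' = m + q := Nat.exists_eq_add_of_le (by omega)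
  have hstart : φ.blockStart u (m + 1 + q) = φ.blockStart u (m + 1) + p := by
    rw [Nat.add_right_comm]
    omega
  have hshift_blocks := hshift.mono (s' := φ.blockStart u (m + 1))
    (e' := φ.blockStart u d + 1) (by omega) (by omega)
  obtain rfl : d + q = n := hmono.injective <| by
    rw [blockStart_add_of_shiftOn_image hstart hshift_blocks hmd le_rfl]
    omega
  refine ⟨m, q, d, by omega, by omega, rfl, hm, hm', by omega,
    shiftOn_of_shiftOn_image hstart hshift_blocks, ?_⟩
  obtain ⟨k, hk⟩ : ∃ k, d + q = k + 1 := ⟨d + q - 1, by omega⟩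
  rw [hk] at he hlt ⊢
  rw [show m + q + (k + 1) = m + q + 1 + k by omega]
  refine palFrom_of_palFrom_image (φ := φ) fun i j hi hj hij => ?_
  exact hpal i j (by omega) (by omega) (by omega)

theorem exists_marked_return_of_lt {n t p s e : ℕ} (h : MarkedReturnsAt u n) (hp : 1 ≤ p)
    (ht : t ≤ φ.mult (u n)) (he : e + p = φ.blockStart u n + 1 + t)
    (hlt : s + p < φ.blockStart u n) (hs : φ.image u s ∈ K) (heK : φ.image u e ∈ K)
    (hsp : φ.image u (s + p) ∈ K) (hy : φ.image u (e + p) ∈ K)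
    (hshift : ShiftOn (φ.image u) p (s + 1) e)
    (hpal : PalFrom (φ.image u) (s + p + 1) (s + p + (e + p))) :
    ∃ a, s ≤ a ∧ a < s + p ∧ φ.image u a ∈ K ∧ PalFrom (φ.image u) (a + 1) (a + (e + p)) := by
  obtain ⟨m, q, d, hq, hmd, hdn, hm, hm', hd, hshift', hpal'⟩ :=
    exists_marked_return_blocks hp ht he hlt hshift hpal
  have hmono := blockStart_strictMono (φ := φ) (u := u)
  have hsucc := blockStart_succ (φ := φ) (u := u) n
  have last_block {i : ℕ} (hi : φ.blockStart u n < i) (hi' : i < e + p) :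
      φ.image u i = φ.letter (u n) := image_of_lt_of_lt hi (by omega)
  have pal_run {i : ℕ} (hi : s + p < i) (hi' : i < s + p + 1 + t) :
      φ.image u i = φ.letter (u n) := by
    rw [hpal i (s + p + (e + p) - i) hi (by omega) (by omega)]
    exact last_block (by omega) (by omega)
  have shift_run {i : ℕ} (hi : s < i) (hi' : i < s + 1 + t) : φ.image u i = φ.letter (u n) := by
    rw [hshift i hi (by omega)]
    exact pal_run (by omega) (by omega)
  have end_run {i : ℕ} (hi : φ.blockStart u d < i) (hi' : i < e) :
      φ.image u i = φ.letter (u n) := by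
    rw [hshift i (by omega) hi']
    exact last_block (by omega) (by omega)
  have hne := φ.letter_ne_zero (u n)
  obtain ⟨a, hma, ham, ha, hpal_a⟩ := h (φ.marked t (φ.letter (u n)) K) q m d hq hmd hdn
    (mem_marked_of_image_left hne hm (fun i hi hi' => shift_run hi (by omega)) hs)
    (mem_marked_of_image_right hne hd (fun _ => end_run) heK)
    (mem_marked_of_image_left hne hm' (fun i hi hi' => pal_run hi (by omega)) hsp)
    (mem_marked_of_image_right hne he (fun _ => last_block) hy) hshift' hpal'
  obtain ⟨b, hb, hbK, hbpal⟩ := exists_palFrom_image_of_mem_marked (by omega) hpal_a ha ht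
  have hle_start := hmono.monotone (Nat.succ_le_succ hma)
  have hlt_start := hmono (Nat.succ_lt_succ ham)
  simp only [Nat.succ_eq_add_one] at hle_start hlt_start
  exact ⟨b, by omega, by omega, hbK, by rwa [he]⟩

theorem exists_marked_return_of_mem_marked {n t m s x : ℕ} (h : MarkedReturnsAt u n) (hmn : m < n)
    (hm : u m ∈ φ.marked t (φ.letter (u n)) K) (hn : u n ∈ φ.marked t (φ.letter (u n)) K)
    (hs : s + t < φ.blockStart u (m + 1)) (hx : φ.blockStart u n ≤ x) :
    ∃ a, s ≤ a ∧ a < x ∧ φ.image u a ∈ K ∧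
      PalFrom (φ.image u) (a + 1) (a + (φ.blockStart u n + 1 + t)) := by
  have hmono := (blockStart_strictMono (φ := φ) (u := u)).monotone
  obtain ⟨a, hma, han, ha, hpal⟩ := h.exists_of_mem hmn hm hn
  obtain ⟨b, hb, hbK, hbpal⟩ := exists_palFrom_image_of_mem_marked han hpal ha hn.1
  have hle_start := hmono (Nat.succ_le_succ hma)
  have hle_start' := hmono (Nat.succ_le_of_lt han)
  simp only [Nat.succ_eq_add_one] at hle_start hle_start'
  exact ⟨b, by omega, by omega, hbK, hbpal⟩

theorem mem_marked_of_eq_blockStart {m n t s p : ℕ} (hn : t ≤ φ.mult (u n))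
    (hsp : s + p = φ.blockStart u n) (hms : φ.blockStart u m ≤ s)
    (hsm : s < φ.blockStart u (m + 1)) (hzero : 0 ∈ K) (hs : φ.image u s ∈ K)
    (he : φ.image u (s + 1 + t) ∈ K) (hshift : ShiftOn (φ.image u) p (s + 1) (s + 1 + t)) :
    s + t < φ.blockStart u (m + 1) ∧ u m ∈ φ.marked t (φ.letter (u n)) K := by
  have hsucc := blockStart_succ (φ := φ) (u := u) m
  have hsucc' := blockStart_succ (φ := φ) (u := u) n
  have run {i : ℕ} (hi : s < i) (hi' : i ≤ s + t) : φ.image u i = φ.letter (u n) := by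
    rw [hshift i hi (by omega)]
    exact image_of_lt_of_lt (by omega) (by omega)
  have hlt : s + t < φ.blockStart u (m + 1) := lt_blockStart_succ fun i hi hi' => by
    rcases le_or_gt i s with his | his
    · rw [image_of_lt_of_lt hi (by omega)]
      exact φ.letter_ne_zero _
    · rw [run his hi']
      exact φ.letter_ne_zero _
  refine ⟨hlt, by omega, fun hpos => ?_, ?_⟩
  · rw [← run s.lt_succ_self (by omega)]
    exact (image_of_lt_of_lt (by omega) (by omega)).symm
  · unfold tailLetter
    split_ifs with htm
    · rcases hms.eq_or_lt with heq | hlt'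
      · rwa [← image_of_lt_of_lt (x := s + 1 + t) (by omega) (by omega)]
      · rwa [← image_of_lt_of_lt hlt' hsm]
    · exact hzero

theorem mem_marked_of_eq_blockStart_succ {m n t s p b : ℕ}
    (hφ : ∀ z, 2 ≤ φ.mult z → φ.letter z = b) (hn : t < φ.mult (u n))
    (hsp : s + p = φ.blockStart u n + 1) (hms : φ.blockStart u m ≤ s)
    (hsm : s < φ.blockStart u (m + 1)) (hzero : 0 ∉ K) (hs : φ.image u s ∈ K)
    (he : φ.image u (s + t) ∈ K) (hshift : ShiftOn (φ.image u) p (s + 1) (s + t)) :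
    s + t < φ.blockStart u (m + 1) ∧ u m ∈ φ.marked t (φ.letter (u n)) K := by
  have hsucc := blockStart_succ (φ := φ) (u := u) m
  have hsucc' := blockStart_succ (φ := φ) (u := u) n
  have hms' : φ.blockStart u m < s := hms.lt_of_ne fun heq => hzero <| by
    rwa [← heq, image_blockStart] at hs
  have hlt : s + t < φ.blockStart u (m + 1) := lt_blockStart_succ fun i hi hi' => by
    rcases le_or_gt i s with his | his
    · rw [image_of_lt_of_lt hi (by omega)]
      exact φ.letter_ne_zero _
    rcases hi'.eq_or_lt with rfl | hist
    · exact fun hi0 => hzero (hi0 ▸ he)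
    · rw [hshift i his hist, image_of_lt_of_lt (n := n) (by omega) (by omega)]
      exact φ.letter_ne_zero _
  refine ⟨hlt, by omega, fun hpos => ?_, ?_⟩
  · rw [hφ (u m) (by omega), hφ (u n) (by omega)]
  · rwa [tailLetter, if_pos (by omega), ← image_of_lt_of_lt hms' hsm]

theorem exists_image_mem_of_lt {n x : ℕ} (hx : φ.blockStart u n + 1 < x)
    (hx' : x ≤ φ.blockStart u (n + 1)) (hK : φ.image u x ∈ K) :
    ∃ a, φ.blockStart u n ≤ a ∧ a < x ∧ φ.image u a ∈ K := by
  rcases hx'.eq_or_lt with rfl | hlt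
  · refine ⟨φ.blockStart u n, le_rfl, by omega, ?_⟩
    rwa [image_blockStart] at hK ⊢
  · refine ⟨x - 1, by omega, by omega, ?_⟩
    rw [image_of_lt_of_lt (n := n) (by omega) hlt] at hK
    rwa [image_of_lt_of_lt (n := n) (by omega) (by omega)]

end BlockMorphism

theorem MarkedReturnsAt.image {φ : BlockMorphism} {u : ℕ → ℕ} {b n y : ℕ}
    (hφ : ∀ z, 2 ≤ φ.mult z → φ.letter z = b) (h : MarkedReturnsAt u n)
    (hny : φ.blockStart u n < y) (hyn : y ≤ φ.blockStart u (n + 1)) :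
    MarkedReturnsAt (φ.image u) y := by
  rintro K p s e hp hse rfl hs he hsp hy hshift hpal
  have hsucc := φ.blockStart_succ (u := u) n
  obtain ⟨t, ht⟩ : ∃ t, e + p = φ.blockStart u n + 1 + t := Nat.exists_eq_add_of_le hny
  have htn : t ≤ φ.mult (u n) := by omega
  rcases lt_or_ge (s + p) (φ.blockStart u n) with hlt | hge
  · exact φ.exists_marked_return_of_lt h hp htn ht hlt hs he hsp hy hshift hpal
  have last_block {i : ℕ} (hi : φ.blockStart u n < i) (hi' : i < e + p) :
      φ.image u i = φ.letter (u n) := φ.image_of_lt_of_lt hi (by omega)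
  by_cases hmarked : ∃ a, s ≤ a ∧ φ.blockStart u n ≤ a ∧ a < s + p ∧ φ.image u a ∈ K
  · obtain ⟨a, hsa, hna, hap, ha⟩ := hmarked
    refine ⟨a, hsa, hap, ha, fun i j hi hj hij => ?_⟩
    rw [last_block (by omega) (by omega), last_block (by omega) (by omega)]
  push Not at hmarked
  have hsn : s < φ.blockStart u n := by
    by_contra! hle
    exact hmarked s le_rfl hle (by omega) hs
  have hspn : s + p ≤ φ.blockStart u n + 1 := by
    by_contra! hgt
    obtain ⟨a, hna, hap, ha⟩ := φ.exists_image_mem_of_lt hgt (by omega) hsp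
    exact hmarked a (by omega) hna hap ha
  obtain ⟨m, hms, hsm⟩ := φ.exists_blockStart_le_lt u s
  have hmn : m < n := φ.blockStart_strictMono.lt_iff_lt.1 (hms.trans_lt hsn)
  have hn_mem : u n ∈ φ.marked t (φ.letter (u n)) K :=
    φ.mem_marked_of_image_right (φ.letter_ne_zero _) ht (fun i hi hi' => last_block hi hi') hy
  suffices s + t < φ.blockStart u (m + 1) ∧ u m ∈ φ.marked t (φ.letter (u n)) K by
    rw [ht]
    exact φ.exists_marked_return_of_mem_marked h hmn this.2 hn_mem this.1 hge
  rcases hge.eq_or_lt with heq | hlt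
  · obtain rfl : e = s + 1 + t := by omega
    rw [← heq, φ.image_blockStart] at hsp
    exact φ.mem_marked_of_eq_blockStart htn heq.symm hms hsm hsp hs he hshift
  · obtain rfl : e = s + t := by omega
    have hzero : 0 ∉ K := by
      have := hmarked _ hsn.le le_rfl hlt
      rwa [φ.image_blockStart] at this
    have htn' : t < φ.mult (u n) := by
      by_contra! hle
      refine hzero ?_
      rwa [show s + t + p = φ.blockStart u (n + 1) by omega, φ.image_blockStart] at hy
    exact φ.mem_marked_of_eq_blockStart_succ hφ htn' (by omega) hms hsm hzero hs he hshift

theorem markedReturnsAt_image {φ : BlockMorphism} {u : ℕ → ℕ} {b : ℕ}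
    (hφ : ∀ z, 2 ≤ φ.mult z → φ.letter z = b) (h : ∀ n, MarkedReturnsAt u n) (y : ℕ) :
    MarkedReturnsAt (φ.image u) y := by
  obtain _ | y := y
  · intro K p s e hp _ hep
    omega
  obtain ⟨n, hn, hn'⟩ := φ.exists_blockStart_le_lt u y
  exact (h n).image hφ (by omega) (by omega)

theorem markedReturnsAt_of_image_eq {φ : BlockMorphism} {u : ℕ → ℕ} {b : ℕ}
    (hφ : ∀ z, 2 ≤ φ.mult z → φ.letter z = b) (hu : φ.image u = u) (y : ℕ) :
    MarkedReturnsAt u y := by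
  induction y using Nat.strong_induction_on with
  | _ y ih =>
    obtain _ | y := y
    · intro K p s e hp _ hep
      omega
    obtain ⟨n, hn, hn'⟩ := φ.exists_blockStart_le_lt u y
    have := φ.two_mul_le_blockStart (u := u) n
    rw [← hu]
    exact (ih n (by omega)).image hφ (by omega) (by omega)

/-! ### The inner and outer morphisms -/

/-- The inner morphism, `z ↦ 0(z+1)` for `z < H` and `z ↦ 0H^(z-H+2)` for `H ≤ z`. On the letters
`0, …, H` that occur in its fixed point it is `φ_d` with `d = H + 1`. -/
def inner (H : ℕ) (hH : 1 ≤ H) : BlockMorphism where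
  mult z := if z < H then 1 else 2 + (z - H)
  letter z := min (z + 1) H
  mult_pos z := by split_ifs <;> omega
  letter_ne_zero z := by omega
  eq_of_mult_eq_of_letter_eq z w := by split_ifs <;> omega

/-- The outer morphism, `z ↦ 01^(z+1)`, which encodes sequences over `ℕ` by binary ones. -/
def outer : BlockMorphism where
  mult z := z + 1
  letter _ := 1
  mult_pos z := by omega
  letter_ne_zero _ := one_ne_zero
  eq_of_mult_eq_of_letter_eq z w h _ := by omega

theorem inner_letter_of_two_le_mult {H : ℕ} (hH : 1 ≤ H) (z : ℕ) (hz : 2 ≤ (inner H hH).mult z) :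
    (inner H hH).letter z = H := by
  simp only [inner] at hz ⊢
  split_ifs at hz <;> omega

theorem inner_mult_of_lt {H z : ℕ} (hH : 1 ≤ H) (hz : z < H) : (inner H hH).mult z = 1 := if_pos hz

theorem inner_mult_self {H : ℕ} (hH : 1 ≤ H) : (inner H hH).mult H = 2 := by simp [inner]

theorem inner_image_le {H : ℕ} (hH : 1 ≤ H) (u : ℕ → ℕ) (x : ℕ) :
    (inner H hH).image u x ≤ H := by
  unfold BlockMorphism.image
  split_ifs
  · exact Nat.zero_le H
  · exact min_le_right _ _

theorem outer_image_eq_zero_or_eq_one (u : ℕ → ℕ) (x : ℕ) :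
    outer.image u x = 0 ∨ outer.image u x = 1 := by
  unfold BlockMorphism.image
  split_ifs
  · exact Or.inl rfl
  · exact Or.inr rfl

/-! ### Lengths of iterated images -/

/-- The length of the image of the letter `z ≤ H` under the `n`-th iterate of `inner H` followed by
`outer`. Integer-valued because the estimates below subtract such lengths. -/
def weight (H : ℕ) : ℕ → ℕ → ℤ
  | 0, z => (z : ℤ) + 2
  | n + 1, z => weight H n 0 + if z < H then weight H n (z + 1) else 2 * weight H n H

/-- Let `a < b ≤ H`. The images under the `n`-th iterate of `inner H` followed by `outer` of words
separated by these two letters agree beyond the images of the parts common to the words, by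
`coreLength H n + overlap H n a` letters on the right and by `overlap H n a` letters on the left. -/
def overlap (H : ℕ) : ℕ → ℕ → ℤ
  | 0, _ => 0
  | n + 1, a => if a + 1 = H then weight H n H + overlap H n 0 else overlap H n (a + 1)

/-- The length of the image under `outer` of the word `φ^(n-1)(0) ⋯ φ(0) 0`, where `φ = inner H`,
with which the image of every sequence under `φ^n` starts. -/
def coreLength (H n : ℕ) : ℤ := ∑ i ∈ Finset.range n, weight H i 0

section Weights

variable (H n : ℕ)

theorem weight_succ (z : ℕ) :
    weight H (n + 1) z =
      weight H n 0 + if z < H then weight H n (z + 1) else 2 * weight H n H := rfl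

theorem weight_succ_of_lt {z : ℕ} (hz : z < H) :
    weight H (n + 1) z = weight H n 0 + weight H n (z + 1) := by
  rw [weight_succ, if_pos hz]

theorem weight_succ_self : weight H (n + 1) H = weight H n 0 + 2 * weight H n H := by
  rw [weight_succ, if_neg (lt_irrefl H)]

theorem overlap_succ_of_ne {a : ℕ} (ha : a + 1 ≠ H) :
    overlap H (n + 1) a = overlap H n (a + 1) := if_neg ha

theorem overlap_succ_of_eq {a : ℕ} (ha : a + 1 = H) :
    overlap H (n + 1) a = weight H n H + overlap H n 0 := if_pos ha

theorem coreLength_succ : coreLength H (n + 1) = coreLength H n + weight H n 0 :=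
  Finset.sum_range_succ _ n

theorem weight_pos (z : ℕ) : 0 < weight H n z := by
  induction n generalizing z with
  | zero => simp only [weight]; omega
  | succ n ih =>
    rw [weight_succ]
    have := ih 0
    have := ih (z + 1)
    have := ih H
    split_ifs <;> linarith

variable {H} in
theorem weight_le_weight_succ {z : ℕ} (hz : z < H) : weight H n z ≤ weight H n (z + 1) := by
  induction n generalizing z with
  | zero => simp [weight]
  | succ n ih =>
    rw [weight_succ_of_lt H n hz]
    rcases (Nat.succ_le_of_lt hz).lt_or_eq with hlt | rfl
    · rw [weight_succ_of_lt H n hlt]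
      linarith [ih hlt]
    · rw [weight_succ_self]
      linarith [weight_pos (z + 1) n (z + 1)]

variable {H} in
theorem weight_mono {a b : ℕ} (hab : a ≤ b) (hb : b ≤ H) : weight H n a ≤ weight H n b := by
  induction b, hab using Nat.le_induction with
  | base => exact le_rfl
  | succ b _ ih => exact (ih (by omega)).trans (weight_le_weight_succ n (by omega))

theorem overlap_nonneg (a : ℕ) : 0 ≤ overlap H n a := by
  induction n generalizing a with
  | zero => exact le_rfl
  | succ n ih =>
    by_cases ha : a + 1 = H
    · rw [overlap_succ_of_eq H n ha]
      linarith [weight_pos H n H, ih 0]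
    · rw [overlap_succ_of_ne H n ha]
      exact ih _

variable {H} in
theorem overlap_le_weight {a : ℕ} (ha : a < H) : overlap H n a ≤ weight H n a := by
  induction n generalizing a with
  | zero => exact (weight_pos H 0 a).le
  | succ n ih =>
    rw [weight_succ_of_lt H n ha]
    by_cases haH : a + 1 = H
    · rw [overlap_succ_of_eq H n haH, haH]
      linarith [ih (a := 0) (by omega)]
    · rw [overlap_succ_of_ne H n haH]
      linarith [ih (a := a + 1) (by omega), weight_pos H n 0]

theorem coreLength_nonneg : 0 ≤ coreLength H n :=
  Finset.sum_nonneg fun i _ => (weight_pos H i 0).le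

variable {H n} in
theorem weight_succ_eq_add_one {a : ℕ} (h : n + a < H) :
    weight H n (a + 1) = weight H n a + 1 := by
  induction n generalizing a with
  | zero => simp only [weight]; push_cast; ring
  | succ n ih =>
    rw [weight_succ_of_lt H n (by omega), weight_succ_of_lt H n (by omega), ih (by omega)]
    ring

variable {H} in
/-- The gap `weight H n H` between the letters `H - 1` and `H` is carried down by one letter at each
step. -/
theorem weight_sub_add_one {k : ℕ} (h : k < H) :
    weight H (n + 1 + k) (H - 1 - k + 1) = weight H (n + 1 + k) (H - 1 - k) + weight H n H := by
  induction k with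
  | zero =>
    rw [add_zero, Nat.sub_zero, Nat.sub_add_cancel h, weight_succ_self,
      weight_succ_of_lt H n (by omega), Nat.sub_add_cancel h]
    ring
  | succ k ih =>
    have := ih (by omega)
    rw [← add_assoc, weight_succ_of_lt H _ (by omega), weight_succ_of_lt H _ (by omega),
      show H - 1 - (k + 1) + 1 = H - 1 - k by omega, this]
    ring

variable {H} in
theorem overlap_sub {k : ℕ} (h : k < H) :
    overlap H (n + 1 + k) (H - 1 - k) = weight H n H + overlap H n 0 := by
  induction k with
  | zero => exact overlap_succ_of_eq H n (by omega)
  | succ k ih =>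
    rw [← add_assoc, overlap_succ_of_ne H _ (by omega),
      show H - 1 - (k + 1) + 1 = H - 1 - k by omega]
    exact ih (by omega)

variable {H n} in
theorem overlap_eq_zero {a : ℕ} (h : n + a < H) : overlap H n a = 0 := by
  induction n generalizing a with
  | zero => rfl
  | succ n ih =>
    rw [overlap_succ_of_ne H n (by omega)]
    exact ih (by omega)

variable {H} in
theorem overlap_add_zero (hH : 1 ≤ H) :
    overlap H (n + H) 0 = weight H n H + overlap H n 0 := by
  have := overlap_sub n (show H - 1 < H by omega)
  rwa [show n + 1 + (H - 1) = n + H by omega, Nat.sub_self] at this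

variable {H n} in
theorem weight_succ_zero_of_lt (h : n < H) : weight H (n + 1) 0 = 2 * weight H n 0 + 1 := by
  rw [weight_succ_of_lt H n (by omega), weight_succ_eq_add_one (by omega)]
  ring

variable {H} in
theorem weight_add_succ_zero (hH : 1 ≤ H) :
    weight H (n + H + 1) 0 = 2 * weight H (n + H) 0 + weight H n H := by
  have := weight_sub_add_one n (show H - 1 < H by omega)
  rw [show n + 1 + (H - 1) = n + H by omega, Nat.sub_self] at this
  rw [weight_succ_of_lt H _ (by omega), this]
  ring

variable {H} in
theorem two_mul_weight_zero_le (hH : 1 ≤ H) : 2 * weight H n 0 ≤ weight H (n + 1) 0 := by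
  rw [weight_succ_of_lt H n (by omega)]
  linarith [weight_le_weight_succ n (show 0 < H by omega)]

variable {H} in
theorem coreLength_le_weight_zero (hH : 1 ≤ H) : coreLength H n ≤ weight H n 0 := by
  induction n with
  | zero => exact (weight_pos H 0 0).le
  | succ n ih =>
    rw [coreLength_succ]
    linarith [two_mul_weight_zero_le n hH]

theorem two_pow_mul_weight_le (k : ℕ) : 2 ^ k * weight H n H ≤ weight H (n + k) H := by
  induction k with
  | zero => simp
  | succ k ih =>
    rw [← add_assoc, weight_succ_self, pow_succ]
    linarith [weight_pos H (n + k) 0]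

theorem weight_le_three_pow_mul (k : ℕ) : weight H (n + k) H ≤ 3 ^ k * weight H n H := by
  induction k with
  | zero => simp
  | succ k ih =>
    rw [← add_assoc, weight_succ_self, pow_succ]
    linarith [weight_mono (n + k) (Nat.zero_le H) le_rfl]

variable {H n} in
theorem weight_zero_add_one (h : n ≤ H) : weight H n 0 + 1 = 3 * 2 ^ n := by
  induction n with
  | zero => simp [weight]
  | succ n ih =>
    have := ih (by omega)
    rw [weight_succ_zero_of_lt (by omega), pow_succ]
    linarith

theorem weight_self_mul_two_le (hH : 1 ≤ H) :
    2 * weight H n H ≤ (H + 2 + n) * weight H n 0 := by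
  induction n with
  | zero => simp only [weight]; push_cast; linarith
  | succ n ih =>
    have : (H + 2 + (n + 1) : ℤ) * (2 * weight H n 0) ≤
        (H + 2 + (n + 1) : ℤ) * weight H (n + 1) 0 :=
      mul_le_mul_of_nonneg_left (two_mul_weight_zero_le n hH) (by positivity)
    rw [weight_succ_self]
    push_cast
    linarith

end Weights

/-! ### The extreme letters are comparable -/

section Comparison

variable {q : ℕ}

theorem two_mul_add_one_le_three_pow (q : ℕ) : (2 * q + 1 : ℤ) ≤ 3 ^ q := by
  induction q with
  | zero => simp
  | succ q ih => rw [pow_succ]; push_cast; linarith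

theorem weight_self_le_of_le (hq : 1 ≤ q) {n : ℕ} (hn : n ≤ 2 * q) :
    weight (2 * q) n (2 * q) ≤ 3 ^ q * weight (2 * q) n 0 := by
  have hlin := weight_self_mul_two_le (2 * q) n (by omega)
  have hpow := two_mul_add_one_le_three_pow q
  have : (n : ℤ) ≤ 2 * q := by exact_mod_cast hn
  have : (2 * q + 2 + n : ℤ) * weight (2 * q) n 0 ≤ 2 * 3 ^ q * weight (2 * q) n 0 :=
    mul_le_mul_of_nonneg_right (by linarith) (weight_pos (2 * q) n 0).le
  push_cast at hlin
  linarith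

theorem weight_self_le (hq : 1 ≤ q) (n : ℕ) :
    weight (2 * q) n (2 * q) ≤ 3 ^ q * weight (2 * q) n 0 := by
  rcases le_total n (2 * q) with h | h
  · exact weight_self_le_of_le hq h
  obtain ⟨k, rfl⟩ := Nat.exists_eq_add_of_le' h
  clear h
  induction k with
  | zero => exact weight_self_le_of_le hq (by omega)
  | succ k ih =>
    have hgrowth := weight_le_three_pow_mul (2 * q) k (2 * q)
    rw [two_mul q, pow_add, ← two_mul] at hgrowth
    have hone : (1 : ℤ) ≤ 3 ^ q := one_le_pow₀ (by norm_num)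
    rw [show k + 1 + 2 * q = k + 2 * q + 1 by omega, weight_succ_self,
      weight_add_succ_zero k (by omega)]
    generalize (3 : ℤ) ^ q = T at *
    generalize weight (2 * q) (k + 2 * q) (2 * q) = X at *
    generalize weight (2 * q) (k + 2 * q) 0 = Y at *
    generalize weight (2 * q) k (2 * q) = X' at *
    have : 0 ≤ (T * Y - X) * (2 * T - 1) := mul_nonneg (by linarith) (by linarith)
    exact le_of_mul_le_mul_left (a := T) (by nlinarith) (by linarith)

theorem two_mul_add_two_mul_weight_zero_le_of_le {n : ℕ} (hn : n ≤ 2 * q) :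
    (2 * q + 2) * weight (2 * q) n 0 ≤ 3 * weight (2 * q) n (2 * q) := by
  have hzero := weight_zero_add_one hn
  have hself := two_pow_mul_weight_le (2 * q) 0 n
  rw [zero_add, show weight (2 * q) 0 (2 * q) = 2 * q + 2 by simp [weight]] at hself
  have := mul_le_mul_of_nonneg_left (show weight (2 * q) n 0 ≤ 3 * 2 ^ n by linarith)
    (show (0 : ℤ) ≤ 2 * q + 2 by positivity)
  linarith

theorem two_mul_add_two_mul_weight_zero_le (hq : 1 ≤ q)
    (hc : (2 * q + 2 : ℤ) * 3 ^ q ≤ 3 * 4 ^ q) (n : ℕ) :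
    (2 * q + 2) * weight (2 * q) n 0 ≤ 3 * weight (2 * q) n (2 * q) := by
  rcases le_total n (2 * q) with h | h
  · exact two_mul_add_two_mul_weight_zero_le_of_le h
  obtain ⟨k, rfl⟩ := Nat.exists_eq_add_of_le' h
  clear h
  induction k with
  | zero => exact two_mul_add_two_mul_weight_zero_le_of_le (by omega)
  | succ k ih =>
    have hgrowth := two_pow_mul_weight_le (2 * q) k (2 * q)
    rw [show (2 : ℤ) ^ (2 * q) = 4 ^ q by rw [pow_mul]; norm_num] at hgrowth
    have hself := weight_self_le hq (k + 2 * q)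
    have hone : (1 : ℤ) ≤ 4 ^ q := one_le_pow₀ (by norm_num)
    have hpos := weight_pos (2 * q) (k + 2 * q) 0
    have hC : (0 : ℤ) ≤ 2 * q + 2 := by positivity
    rw [show k + 1 + 2 * q = k + 2 * q + 1 by omega, weight_succ_self,
      weight_add_succ_zero k (by omega)]
    generalize (3 : ℤ) ^ q = T at *
    generalize (4 : ℤ) ^ q = F at *
    generalize weight (2 * q) (k + 2 * q) (2 * q) = X at *
    generalize weight (2 * q) (k + 2 * q) 0 = Y at *
    generalize weight (2 * q) k (2 * q) = X' at *
    generalize (2 * q + 2 : ℤ) = C at *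
    have hX' : C * X' ≤ 3 * Y := by
      refine le_of_mul_le_mul_left (a := F) ?_ (by linarith)
      calc F * (C * X') = C * (F * X') := by ring
        _ ≤ C * (T * Y) := mul_le_mul_of_nonneg_left (hgrowth.trans hself) hC
        _ = C * T * Y := by ring
        _ ≤ 3 * F * Y := mul_le_mul_of_nonneg_right hc hpos.le
        _ = F * (3 * Y) := by ring
    linarith

theorem four_pow_mul_overlap_le (hq : 1 ≤ q) (n : ℕ) :
    4 ^ q * overlap (2 * q) n 0 ≤ 2 * weight (2 * q) n (2 * q) := by
  induction n using Nat.strong_induction_on with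
  | _ n ih =>
    rcases lt_or_ge n (2 * q) with h | h
    · rw [overlap_eq_zero (by omega)]
      linarith [weight_pos (2 * q) n (2 * q)]
    · obtain ⟨k, rfl⟩ := Nat.exists_eq_add_of_le' h
      rw [overlap_add_zero k (by omega)]
      have hgrowth := two_pow_mul_weight_le (2 * q) k (2 * q)
      rw [show (2 : ℤ) ^ (2 * q) = 4 ^ q by rw [pow_mul]; norm_num] at hgrowth
      have hfour : (4 : ℤ) ^ 1 ≤ 4 ^ q := pow_le_pow_right₀ (by norm_num) hq
      nlinarith [ih k (by omega), weight_pos (2 * q) k (2 * q)]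

/-- The parameter `H` is so large that, on every level `n`, the part of a repetition that does not
come from shorter repetitions is at most `1 + 1/N` times the length of the image of `0` and at most
`1/N` times the length of the image of `H`. -/
structure WellSeparated (H : ℕ) (N : ℤ) : Prop where
  one_le : 1 ≤ H
  one_le_bound : 1 ≤ N
  le_weight_zero :
    ∀ n, N * (coreLength H n + 2 * overlap H n 0) ≤ (N + 1) * weight H n 0
  le_weight_self : ∀ n, N * (coreLength H n + 2 * overlap H n 0) ≤ weight H n H

theorem mul_coreLength_add_two_mul_overlap_le {N : ℤ} (hq : 1 ≤ q) (hN : 1 ≤ N)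
    (h : 4 * N * 3 ^ q ≤ 4 ^ q) (n : ℕ) :
    N * (coreLength (2 * q) n + 2 * overlap (2 * q) n 0) ≤ (N + 1) * weight (2 * q) n 0 := by
  have hcore := coreLength_le_weight_zero n (show 1 ≤ 2 * q by omega)
  have hoverlap := four_pow_mul_overlap_le hq n
  have hself := weight_self_le hq n
  have hpos := weight_pos (2 * q) n 0
  have hone : (1 : ℤ) ≤ 4 ^ q := one_le_pow₀ (by norm_num)
  generalize (3 : ℤ) ^ q = T at *
  generalize (4 : ℤ) ^ q = F at *
  generalize weight (2 * q) n (2 * q) = X at *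
  generalize weight (2 * q) n 0 = Y at *
  generalize overlap (2 * q) n 0 = E at *
  have hE : 2 * N * E ≤ Y := by
    refine le_of_mul_le_mul_left (a := F) ?_ (by linarith)
    calc F * (2 * N * E) = 2 * N * (F * E) := by ring
      _ ≤ 2 * N * (2 * (T * Y)) := mul_le_mul_of_nonneg_left (by linarith) (by linarith)
      _ = 4 * N * T * Y := by ring
      _ ≤ F * Y := mul_le_mul_of_nonneg_right h hpos.le
  linarith [mul_le_mul_of_nonneg_left hcore (show 0 ≤ N by linarith)]

theorem wellSeparated_two_mul {N : ℤ} (hq : 1 ≤ q) (hN : 1 ≤ N) (h : 4 * N * 3 ^ q ≤ 4 ^ q)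
    (hc : (2 * q + 2 : ℤ) * 3 ^ q ≤ 3 * 4 ^ q) (hNq : 3 * (N + 1) ≤ 2 * q + 2) :
    WellSeparated (2 * q) N where
  one_le := by omega
  one_le_bound := hN
  le_weight_zero := mul_coreLength_add_two_mul_overlap_le hq hN h
  le_weight_self n := by
    have := two_mul_add_two_mul_weight_zero_le hq hc n
    have := mul_coreLength_add_two_mul_overlap_le hq hN h n
    have := mul_le_mul_of_nonneg_right hNq (weight_pos (2 * q) n 0).le
    linarith

theorem eventually_mul_three_pow_le_four_pow {c : ℝ} (hc : 0 < c) (k : ℕ) :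
    ∀ᶠ q : ℕ in Filter.atTop, (q : ℝ) ^ k * 3 ^ q ≤ c * 4 ^ q := by
  have hlim := tendsto_pow_const_mul_const_pow_of_abs_lt_one k
    (show |(3 / 4 : ℝ)| < 1 by rw [abs_lt]; norm_num)
  filter_upwards [hlim.eventually (gt_mem_nhds hc)] with q hq
  have hpos : (0 : ℝ) < 4 ^ q := by positivity
  rw [div_pow, ← mul_div_assoc, div_lt_iff₀ hpos] at hq
  exact hq.le

theorem exists_wellSeparated {N : ℕ} (hN : 1 ≤ N) : ∃ H, WellSeparated H N := by
  have : (1 : ℝ) ≤ N := by exact_mod_cast hN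
  obtain ⟨q, ⟨hconst, hlin⟩, hqN⟩ :=
    (((eventually_mul_three_pow_le_four_pow (show (0 : ℝ) < 1 / (4 * N) by positivity) 0).and
      (eventually_mul_three_pow_le_four_pow (show (0 : ℝ) < 1 / 4 by norm_num) 1)).and
      (Filter.eventually_ge_atTop (2 * N + 1))).exists
  refine ⟨2 * q, wellSeparated_two_mul (by omega) (by exact_mod_cast hN) ?_ ?_ (by omega)⟩
  · have : (4 * N * 3 ^ q : ℝ) ≤ 4 ^ q := by
      rw [pow_zero, one_mul, div_mul_eq_mul_div, one_mul, le_div_iff₀ (by positivity)] at hconst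
      linarith
    exact_mod_cast this
  · have hq : (1 : ℝ) ≤ q := by exact_mod_cast (show 1 ≤ q by omega)
    have : ((2 * q + 2) * 3 ^ q : ℝ) ≤ 3 * 4 ^ q := by
      have hpos : (0 : ℝ) < 3 ^ q := by positivity
      nlinarith
    exact_mod_cast this

end Comparison

/-! ### Weights of repetitions -/

namespace BlockMorphism

variable {φ : BlockMorphism} {u : ℕ → ℕ}

theorem exists_first_blockStart_ge (φ : BlockMorphism) (u : ℕ → ℕ) (s : ℕ) :
    ∃ c, s ≤ φ.blockStart u c ∧ (c = 0 ∨ φ.blockStart u (c - 1) < s) := by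
  rcases s with _ | s
  · exact ⟨0, Nat.zero_le _, Or.inl rfl⟩
  · obtain ⟨n, hn, hn'⟩ := φ.exists_blockStart_le_lt u s
    exact ⟨n + 1, hn', Or.inr (Nat.lt_succ_of_le hn)⟩

theorem exists_shiftOn_of_shiftOn_image {p s e : ℕ} (hp : 1 ≤ p)
    (h : ShiftOn (φ.image u) p s e) (hzero : ∃ x, s ≤ x ∧ x < e ∧ φ.image u x = 0) :
    ∃ c d q, 1 ≤ q ∧ q < p ∧ c ≤ d ∧ s ≤ φ.blockStart u c ∧
      (c = 0 ∨ φ.blockStart u (c - 1) < s) ∧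
      φ.blockStart u d < e ∧ e ≤ φ.blockStart u (d + 1) ∧
      φ.blockStart u (c + q) = φ.blockStart u c + p ∧
      φ.blockStart u (d + q) = φ.blockStart u d + p ∧ ShiftOn u q c d := by
  have hmono := blockStart_strictMono (φ := φ) (u := u)
  obtain ⟨x, hsx, hxe, hx⟩ := hzero
  obtain ⟨k, rfl⟩ := image_eq_zero_iff.1 hx
  obtain ⟨c, hsc, hc⟩ := φ.exists_first_blockStart_ge u s
  obtain ⟨d, hd, hd'⟩ := φ.exists_blockStart_le_lt u (e - 1)
  have hck : c ≤ k := by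
    rcases hc with rfl | hc
    · exact Nat.zero_le k
    · have : c - 1 < k := hmono.lt_iff_lt.1 (by omega)
      omega
  have hkd : k < d + 1 := hmono.lt_iff_lt.1 (by omega)
  have hce : φ.blockStart u c < e := (hmono.monotone hck).trans_lt hxe
  obtain ⟨c', hc'⟩ := image_eq_zero_iff.1 ((h _ hsc hce).symm.trans (image_blockStart c))
  have hcc' : c < c' := hmono.lt_iff_lt.1 (by omega)
  obtain ⟨q, rfl⟩ := Nat.exists_eq_add_of_le hcc'.le
  have hshift := h.mono hsc (by omega : φ.blockStart u d + 1 ≤ e)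
  have := blockStart_add_two_mul_le (φ := φ) (u := u) c q
  exact ⟨c, d, q, by omega, by omega, by omega, hsc, hc, by omega, by omega, hc'.symm,
    blockStart_add_of_shiftOn_image hc'.symm hshift (by omega) le_rfl,
    shiftOn_of_shiftOn_image hc'.symm hshift⟩

end BlockMorphism

/-- The length of the image of the prefix of `u` of length `x` under the `n`-th iterate of `inner H`
followed by `outer`. -/
def weightSum (H n : ℕ) (u : ℕ → ℕ) (x : ℕ) : ℤ := ∑ i ∈ Finset.range x, weight H n (u i)

/-- The number of letters, in addition to `coreLength H n` on the right, on which the iterated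
images of words separated by the letters `a` and `b` agree; `0` if `a = b`, which only occurs when
the words are not maximal and then gives a weaker, but still sufficient, lower bound. -/
def agreement (H n a b : ℕ) : ℤ := if a = b then 0 else overlap H n (min a b)

/-- The agreement to the left of the positions `s` and `s + p`, which is `0` at the beginning of
the sequence. -/
def leftAgreement (H n : ℕ) (u : ℕ → ℕ) (p s : ℕ) : ℤ :=
  if s = 0 then 0 else agreement H n (u (s - 1)) (u (s - 1 + p))

/-- For `ShiftOn u p s e`, the length of the word that remains of the repetition in the iterated
image after removing one period. -/
def borderWeight (H n : ℕ) (u : ℕ → ℕ) (p s e : ℕ) : ℤ :=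
  weightSum H n u e - weightSum H n u s + coreLength H n + leftAgreement H n u p s +
    agreement H n (u e) (u (e + p))

/-- The length of the iterated image of the period `u s ⋯ u (s + p - 1)`. -/
def periodWeight (H n : ℕ) (u : ℕ → ℕ) (p s : ℕ) : ℤ :=
  weightSum H n u (s + p) - weightSum H n u s

section WeightSum

variable {H n : ℕ} {u : ℕ → ℕ}

theorem weightSum_succ (x : ℕ) :
    weightSum H n u (x + 1) = weightSum H n u x + weight H n (u x) :=
  Finset.sum_range_succ _ x

theorem weightSum_mono {x y : ℕ} (h : x ≤ y) : weightSum H n u x ≤ weightSum H n u y :=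
  Finset.sum_le_sum_of_subset_of_nonneg (Finset.range_mono h)
    fun i _ _ => (weight_pos H n (u i)).le

theorem weightSum_add_weight_le {x y : ℕ} (h : x < y) :
    weightSum H n u x + weight H n (u x) ≤ weightSum H n u y := by
  rw [← weightSum_succ]
  exact weightSum_mono h

theorem periodWeight_eq_of_shiftOn {a c p : ℕ} (hac : a ≤ c) (h : ShiftOn u p a c) :
    periodWeight H n u p c = periodWeight H n u p a := by
  induction c, hac using Nat.le_induction with
  | base => rfl
  | succ c hac ih =>
    rw [← ih (h.mono le_rfl c.le_succ), periodWeight, periodWeight, add_right_comm, weightSum_succ,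
      weightSum_succ, ← h c hac c.lt_succ_self]
    ring

theorem agreement_self (a : ℕ) : agreement H n a a = 0 := if_pos rfl

theorem agreement_of_ne {a b : ℕ} (h : a ≠ b) : agreement H n a b = overlap H n (min a b) :=
  if_neg h

theorem agreement_nonneg (a b : ℕ) : 0 ≤ agreement H n a b := by
  unfold agreement
  split_ifs
  · exact le_rfl
  · exact overlap_nonneg H n _

theorem agreement_le_overlap_zero {a b : ℕ} (h : a = 0 ∨ b = 0 ∨ a = b) :
    agreement H n a b ≤ overlap H n 0 := by
  unfold agreement
  split_ifs
  · exact overlap_nonneg H n 0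
  · rw [show min a b = 0 by omega]

theorem agreement_le_weight_left {a b : ℕ} (ha : a ≤ H) (hb : b ≤ H) :
    agreement H n a b ≤ weight H n a := by
  unfold agreement
  split_ifs
  · exact (weight_pos H n a).le
  · exact (overlap_le_weight n (by omega)).trans (weight_mono n (min_le_left a b) ha)

theorem agreement_comm (a b : ℕ) : agreement H n a b = agreement H n b a := by
  simp only [agreement, eq_comm, min_comm]

theorem leftAgreement_nonneg (p s : ℕ) : 0 ≤ leftAgreement H n u p s := by
  unfold leftAgreement
  split_ifs
  · exact le_rfl
  · exact agreement_nonneg _ _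

theorem leftAgreement_le {p s : ℕ} {B : ℤ} (hB : 0 ≤ B)
    (h : ∀ x, x + 1 = s → agreement H n (u x) (u (x + p)) ≤ B) : leftAgreement H n u p s ≤ B := by
  unfold leftAgreement
  split_ifs
  · exact hB
  · exact h _ (by omega)

theorem weightSum_zero_eq_blockStart (x : ℕ) : weightSum H 0 u x = outer.blockStart u x := by
  rw [weightSum, BlockMorphism.blockStart, Nat.cast_sum]
  refine Finset.sum_congr rfl fun i _ => ?_
  simp only [weight, outer]
  push_cast
  ring

end WeightSum

/-! ### Weights under the inner morphism -/

section InnerImage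

variable {H n : ℕ} (hH : 1 ≤ H) {u : ℕ → ℕ}

theorem weight_succ_eq_mult {z : ℕ} (hz : z ≤ H) :
    weight H (n + 1) z =
      weight H n 0 + (inner H hH).mult z * weight H n ((inner H hH).letter z) := by
  rcases hz.lt_or_eq with hlt | rfl
  · rw [weight_succ_of_lt H n hlt, inner_mult_of_lt hH hlt,
      show (inner H hH).letter z = z + 1 from min_eq_left hlt]
    simp
  · rw [weight_succ_self, inner_mult_self,
      show (inner z hH).letter z = z from min_eq_right z.le_succ]
    simp

theorem weightSum_blockStart_add {k t : ℕ} (ht : t ≤ (inner H hH).mult (u k)) :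
    weightSum H n ((inner H hH).image u) ((inner H hH).blockStart u k + 1 + t) =
      weightSum H n ((inner H hH).image u) ((inner H hH).blockStart u k) + weight H n 0 +
        t * weight H n ((inner H hH).letter (u k)) := by
  induction t with
  | zero =>
    rw [add_zero, weightSum_succ, BlockMorphism.image_blockStart]
    simp
  | succ t ih =>
    have hsucc := (inner H hH).blockStart_succ (u := u) k
    rw [← add_assoc, weightSum_succ, ih (by omega),
      BlockMorphism.image_of_lt_of_lt (n := k) (by omega) (by omega)]
    push_cast
    ring

theorem weightSum_blockStart (hu : ∀ x, u x ≤ H) (k : ℕ) :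
    weightSum H n ((inner H hH).image u) ((inner H hH).blockStart u k) =
      weightSum H (n + 1) u k := by
  induction k with
  | zero => rfl
  | succ k ih =>
    rw [BlockMorphism.blockStart_succ, ← add_assoc, weightSum_blockStart_add hH le_rfl, ih,
      weightSum_succ, weight_succ_eq_mult hH (hu k)]
    ring

theorem mul_weight_add_agreement_tailLetter_le {z w t : ℕ} (hz : z ≤ H) (hw : w ≤ H) (hne : z ≠ w)
    (htz : t ≤ (inner H hH).mult z) (htw : t ≤ (inner H hH).mult w)
    (hletter : 1 ≤ t → (inner H hH).letter z = (inner H hH).letter w) :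
    t * weight H n ((inner H hH).letter z) +
        agreement H n ((inner H hH).tailLetter z t) ((inner H hH).tailLetter w t) ≤
      agreement H (n + 1) z w := by
  rcases Nat.eq_zero_or_pos t with rfl | ht
  · unfold BlockMorphism.tailLetter
    rw [if_pos (Nat.lt_of_succ_le ((inner H hH).mult_pos z)),
      if_pos (Nat.lt_of_succ_le ((inner H hH).mult_pos w))]
    by_cases hmin : min z w + 1 = H
    · rw [show (inner H hH).letter z = (inner H hH).letter w by simp only [inner]; omega,
        agreement_self]
      simpa using agreement_nonneg z w
    · rw [agreement_of_ne hne, agreement_of_ne (by simp only [inner]; omega),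
        overlap_succ_of_ne H n hmin,
        show min ((inner H hH).letter z) ((inner H hH).letter w) = min z w + 1 by
          simp only [inner]; omega]
      simp
  · have hletters := hletter ht
    have hmin : min z w + 1 = H := by simp only [inner] at hletters; omega
    obtain rfl : t = 1 := by
      simp only [inner] at htz htw
      split_ifs at htz htw <;> omega
    have hagree : agreement H n ((inner H hH).tailLetter z 1) ((inner H hH).tailLetter w 1) ≤
        overlap H n 0 := by
      refine agreement_le_overlap_zero ?_
      simp only [BlockMorphism.tailLetter, inner]
      split_ifs <;> omega
    rw [agreement_of_ne hne, overlap_succ_of_eq H n hmin,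
      show (inner H hH).letter z = H by simp only [inner]; omega]
    push_cast
    linarith

theorem exists_desubst_right (hu : ∀ x, u x ≤ H) {p q d e : ℕ}
    (he : (inner H hH).blockStart u d < e) (he' : e ≤ (inner H hH).blockStart u (d + 1))
    (hq : (inner H hH).blockStart u (d + q) = (inner H hH).blockStart u d + p)
    (h : ShiftOn ((inner H hH).image u) p ((inner H hH).blockStart u d) e) :
    ∃ e', d ≤ e' ∧ ShiftOn u q d e' ∧
      weightSum H n ((inner H hH).image u) e +
          agreement H n ((inner H hH).image u e) ((inner H hH).image u (e + p)) ≤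
        weightSum H (n + 1) u e' + weight H n 0 +
          agreement H (n + 1) (u e') (u (e' + q)) := by
  set φ := inner H hH
  have hsucc := φ.blockStart_succ (u := u) d
  have hsucc' := φ.blockStart_succ (u := u) (d + q)
  obtain ⟨t, rfl⟩ := Nat.exists_eq_add_of_le (Nat.succ_le_of_lt he)
  have ht : t ≤ φ.mult (u d) := by omega
  have hshift : ∀ y, φ.blockStart u (d + q) < y → y ≤ φ.blockStart u (d + q) + t →
      φ.image u y = φ.letter (u d) := by
    intro y hy hy'
    obtain ⟨x, rfl⟩ := Nat.exists_eq_add_of_le' (show p ≤ y by omega)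
    rw [← h x (by omega) (by omega)]
    exact BlockMorphism.image_of_lt_of_lt (by omega) (by omega)
  have hlt := BlockMorphism.lt_blockStart_succ (φ := φ) fun y hy hy' =>
    hshift y hy hy' ▸ φ.letter_ne_zero (u d)
  have ht' : t ≤ φ.mult (u (d + q)) := by omega
  have hagree : agreement H n (φ.image u (φ.blockStart u d + 1 + t))
      (φ.image u (φ.blockStart u d + 1 + t + p)) =
      agreement H n (φ.tailLetter (u d) t) (φ.tailLetter (u (d + q)) t) := by
    rw [BlockMorphism.image_right ht, ← BlockMorphism.image_right ht', hq]
    congr 2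
    omega
  rw [Nat.succ_eq_add_one, hagree]
  by_cases heq : u d = u (d + q)
  · refine ⟨d + 1, d.le_succ, fun x hx hx' => by rwa [show x = d by omega], ?_⟩
    have hle : weightSum H n (φ.image u) (φ.blockStart u d + 1 + t) ≤ _ := weightSum_mono he'
    rw [weightSum_blockStart hH hu] at hle
    rw [heq, agreement_self]
    linarith [agreement_nonneg (H := H) (n := n + 1) (u (d + 1)) (u (d + 1 + q)),
      weight_pos H n 0]
  · refine ⟨d, le_rfl, fun x _ _ => by omega, ?_⟩
    rw [weightSum_blockStart_add hH ht, weightSum_blockStart hH hu]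
    linarith [mul_weight_add_agreement_tailLetter_le (n := n) hH (hu d) (hu (d + q)) heq ht ht'
      fun h1 => (hshift (φ.blockStart u (d + q) + 1) (by omega) (by omega)).symm.trans
        (BlockMorphism.image_of_lt_of_lt (by omega) (by omega))]

theorem exists_desubst_left_of_lt (hu : ∀ x, u x ≤ H) {p q c s : ℕ}
    (hs : (inner H hH).blockStart u c < s) (hs' : s ≤ (inner H hH).blockStart u (c + 1))
    (hq : (inner H hH).blockStart u (c + q + 1) = (inner H hH).blockStart u (c + 1) + p)
    (h : ShiftOn ((inner H hH).image u) p s ((inner H hH).blockStart u (c + 1))) :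
    ∃ s', s' ≤ c + 1 ∧ ShiftOn u q s' (c + 1) ∧
      weightSum H (n + 1) u s' + leftAgreement H n ((inner H hH).image u) p s ≤
        weightSum H n ((inner H hH).image u) s + leftAgreement H (n + 1) u q s' := by
  set φ := inner H hH
  have hsucc := φ.blockStart_succ (u := u) c
  have hsucc' := φ.blockStart_succ (u := u) (c + q)
  obtain ⟨t, hst⟩ := Nat.exists_eq_add_of_le hs'
  have ht : t ≤ φ.mult (u c) := by omega
  have hshift : ∀ y, s + p ≤ y → y < φ.blockStart u (c + q + 1) →
      φ.image u y = φ.letter (u c) := by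
    intro y hy hy'
    obtain ⟨x, rfl⟩ := Nat.exists_eq_add_of_le' (show p ≤ y by omega)
    rw [← h x (by omega) (by omega)]
    exact BlockMorphism.image_of_lt_of_lt (by omega) (by omega)
  have hlt := BlockMorphism.blockStart_lt (φ := φ) fun y hy hy' =>
    hshift y hy hy' ▸ φ.letter_ne_zero (u c)
  have ht' : t ≤ φ.mult (u (c + q)) := by omega
  have hagree : leftAgreement H n (φ.image u) p s =
      agreement H n (φ.tailLetter (u c) t) (φ.tailLetter (u (c + q)) t) := by
    rw [leftAgreement, if_neg (by omega), BlockMorphism.image_left ht (by omega),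
      BlockMorphism.image_left ht' (by omega)]
  rw [hagree]
  by_cases heq : u c = u (c + q)
  · refine ⟨c, c.le_succ, fun x hx hx' => by rwa [show x = c by omega], ?_⟩
    have hle : weightSum H n (φ.image u) _ ≤ weightSum H n (φ.image u) s := weightSum_mono hs.le
    rw [weightSum_blockStart hH hu] at hle
    rw [heq, agreement_self]
    linarith [leftAgreement_nonneg (H := H) (n := n + 1) (u := u) q c]
  · refine ⟨c + 1, le_rfl, fun x _ _ => by omega, ?_⟩
    have htail := mul_weight_add_agreement_tailLetter_le (n := n) hH (hu c) (hu (c + q)) heq ht ht'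
      fun h1 => (hshift (s + p) le_rfl (by omega)).symm.trans
        (BlockMorphism.image_of_lt_of_lt (by omega) (by omega))
    have hblock := weightSum_blockStart_add (n := n) hH (u := u) (k := c) le_rfl
    rw [add_assoc, ← hsucc, weightSum_blockStart hH hu] at hblock
    have hpart := weightSum_blockStart_add (n := n) hH (u := u) (k := c)
      (t := φ.mult (u c) - t) (Nat.sub_le _ _)
    rw [show φ.blockStart u c + 1 + (φ.mult (u c) - t) = s by omega, Nat.cast_sub ht] at hpart
    rw [leftAgreement, if_neg c.succ_ne_zero, Nat.add_sub_cancel]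
    linarith

theorem exists_desubst_left (hu : ∀ x, u x ≤ H) {p q c s : ℕ}
    (hs : c = 0 ∨ (inner H hH).blockStart u (c - 1) < s) (hs' : s ≤ (inner H hH).blockStart u c)
    (hq : (inner H hH).blockStart u (c + q) = (inner H hH).blockStart u c + p)
    (h : ShiftOn ((inner H hH).image u) p s ((inner H hH).blockStart u c)) :
    ∃ s', s' ≤ c ∧ ShiftOn u q s' c ∧
      weightSum H (n + 1) u s' + leftAgreement H n ((inner H hH).image u) p s ≤
        weightSum H n ((inner H hH).image u) s + leftAgreement H (n + 1) u q s' := by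
  rcases c with _ | c
  · obtain rfl : s = 0 := by simpa using hs'
    exact ⟨0, le_rfl, fun x _ _ => by omega, le_rfl⟩
  · rw [Nat.add_right_comm] at hq
    exact exists_desubst_left_of_lt hH hu (hs.resolve_left c.succ_ne_zero) hs' hq h

theorem exists_shiftOn_borderWeight_le (hu : ∀ x, u x ≤ H) {p s e : ℕ} (hp : 1 ≤ p)
    (h : ShiftOn ((inner H hH).image u) p s e)
    (hzero : ∃ x, s ≤ x ∧ x < e ∧ (inner H hH).image u x = 0) :
    ∃ q s' e', 1 ≤ q ∧ q < p ∧ s' ≤ e' ∧ ShiftOn u q s' e' ∧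
      borderWeight H n ((inner H hH).image u) p s e ≤ borderWeight H (n + 1) u q s' e' ∧
      periodWeight H n ((inner H hH).image u) p s = periodWeight H (n + 1) u q s' := by
  obtain ⟨c, d, q, hq, hqp, hcd, hsc, hc, hde, hed, hcq, hdq, hshift⟩ :=
    BlockMorphism.exists_shiftOn_of_shiftOn_image hp h hzero
  have hmono : (inner H hH).blockStart u c ≤ (inner H hH).blockStart u d :=
    BlockMorphism.blockStart_strictMono.monotone hcd
  have hleft := h.mono le_rfl (show (inner H hH).blockStart u c ≤ e by omega)
  obtain ⟨e', hde', hshift_right, hright⟩ :=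
    exists_desubst_right (n := n) hH hu hde hed hdq (h.mono (by omega) le_rfl)
  obtain ⟨s', hs'c, hshift_left, hborder_left⟩ :=
    exists_desubst_left (n := n) hH hu hc hsc hcq hleft
  refine ⟨q, s', e', hq, hqp, by omega, fun x hx hx' => ?_, ?_, ?_⟩
  · rcases lt_or_ge x c with hxc | hcx
    · exact hshift_left x hx hxc
    rcases lt_or_ge x d with hxd | hdx
    · exact hshift x hcx hxd
    · exact hshift_right x hdx hx'
  · rw [borderWeight, borderWeight, coreLength_succ]
    linarith
  · rw [← periodWeight_eq_of_shiftOn hsc hleft, ← periodWeight_eq_of_shiftOn hs'c hshift_left,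
      periodWeight, periodWeight, ← hcq, weightSum_blockStart hH hu, weightSum_blockStart hH hu]

end InnerImage

/-! ### The border bound -/

/-- The nonzero letters of `w`, which are at most `H`, are isolated except in blocks `HH`. -/
structure ShortRuns (H : ℕ) (w : ℕ → ℕ) : Prop where
  le : ∀ x, w x ≤ H
  eq_of_adjacent : ∀ x, w x ≠ 0 → w (x + 1) ≠ 0 → w x = H ∧ w (x + 1) = H ∧ w (x + 2) = 0

theorem shortRuns_inner_image {H : ℕ} (hH : 1 ≤ H) {u : ℕ → ℕ} (hu : ∀ x, u x ≤ H) :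
    ShortRuns H ((inner H hH).image u) where
  le := inner_image_le hH u
  eq_of_adjacent x hx hx' := by
    set φ := inner H hH
    obtain ⟨n, hn, hn'⟩ := φ.exists_blockStart_le_lt u x
    have hsucc := φ.blockStart_succ (u := u) n
    have hlt : φ.blockStart u n < x :=
      hn.lt_of_ne fun h => hx (h ▸ BlockMorphism.image_blockStart n)
    have hlt' : x + 1 < φ.blockStart u (n + 1) :=
      (Nat.succ_le_of_lt hn').lt_of_ne fun h =>
        hx' ((congrArg (φ.image u) h).trans (BlockMorphism.image_blockStart (n + 1)))
    have hun : u n = H := by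
      by_contra hne
      have : φ.mult (u n) = 1 := inner_mult_of_lt hH (lt_of_le_of_ne (hu n) hne)
      omega
    have hletter : φ.letter (u n) = H := by rw [hun]; exact min_eq_right H.le_succ
    have hmult : φ.mult (u n) = 2 := by rw [hun]; exact inner_mult_self hH
    refine ⟨?_, ?_, ?_⟩
    · rw [BlockMorphism.image_of_lt_of_lt hlt hn', hletter]
    · rw [BlockMorphism.image_of_lt_of_lt (by omega) hlt', hletter]
    · rw [show x + 2 = φ.blockStart u (n + 1) by omega, BlockMorphism.image_blockStart]

namespace ShortRuns

variable {H n : ℕ} {w : ℕ → ℕ}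

theorem agreement_adjacent_le (hw : ShortRuns H w) (x : ℕ) :
    agreement H n (w x) (w (x + 1)) ≤ overlap H n 0 := by
  refine agreement_le_overlap_zero ?_
  by_contra! hne
  have := hw.eq_of_adjacent x hne.1 hne.2.1
  omega

theorem agreement_le_of_next_ne_zero (hw : ShortRuns H w) {x y : ℕ} (hx : w (x + 1) ≠ 0)
    (hy : w (y + 1) ≠ 0) : agreement H n (w x) (w y) ≤ overlap H n 0 := by
  refine agreement_le_overlap_zero ?_
  by_contra! hne
  have := hw.eq_of_adjacent x hne.1 hx
  have := hw.eq_of_adjacent y hne.2.1 hy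
  omega

theorem agreement_le_of_prev_ne_zero (hw : ShortRuns H w) {x y : ℕ} (hx : w x ≠ 0)
    (hy : w y ≠ 0) : agreement H n (w (x + 1)) (w (y + 1)) ≤ overlap H n 0 := by
  refine agreement_le_overlap_zero ?_
  by_contra! hne
  have := hw.eq_of_adjacent x hx hne.1
  have := hw.eq_of_adjacent y hy hne.2.1
  omega

theorem leftAgreement_le_weight (hw : ShortRuns H w) {p s : ℕ} :
    leftAgreement H n w p s ≤ weight H n (w (s + p - 1)) :=
  leftAgreement_le (weight_pos H n _).le fun x hx => by
    rw [show s + p - 1 = x + p by omega, agreement_comm]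
    exact agreement_le_weight_left (hw.le _) (hw.le _)

theorem eq_two_of_ne_zero (hw : ShortRuns H w) {p s : ℕ} (hp : 2 ≤ p)
    (h : ∀ x, s ≤ x → x < s + p → w x ≠ 0) : p = 2 ∧ w (s + 2) = 0 := by
  have hzero := (hw.eq_of_adjacent s (h s le_rfl (by omega)) (h _ (by omega) (by omega))).2.2
  refine ⟨?_, hzero⟩
  by_contra hne
  exact h (s + 2) (by omega) (by omega) hzero

end ShortRuns

namespace WellSeparated

variable {H n : ℕ} {N : ℤ} {w : ℕ → ℕ} {p s e : ℕ}

theorem mul_le_of_le_add (hN : WellSeparated H N) {b x P : ℤ} (hx : 0 ≤ x)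
    (hxP : x + weight H n 0 ≤ P) (hb : b ≤ x + (coreLength H n + 2 * overlap H n 0)) :
    N * b ≤ (N + 1) * P := by
  have hpos := hN.one_le_bound
  calc N * b ≤ N * (x + (coreLength H n + 2 * overlap H n 0)) :=
        mul_le_mul_of_nonneg_left hb (by linarith)
    _ = N * x + N * (coreLength H n + 2 * overlap H n 0) := mul_add _ _ _
    _ ≤ (N + 1) * x + (N + 1) * weight H n 0 := by linarith [hN.le_weight_zero n]
    _ ≤ (N + 1) * P := by
      rw [← mul_add]
      exact mul_le_mul_of_nonneg_left hxP (by linarith)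

theorem borderWeight_self_le_of_zero (hN : WellSeparated H N) (hw : ShortRuns H w)
    (hp : 2 ≤ p) (hzero : ∃ z, s ≤ z ∧ z < s + p ∧ w z = 0) :
    N * borderWeight H n w p s s ≤ (N + 1) * periodWeight H n w p s := by
  obtain ⟨z, hsz, hzp, hz⟩ := hzero
  have hcore := coreLength_le_weight_zero n hN.one_le
  have hoverlap := overlap_nonneg H n 0
  have hleft := hw.leftAgreement_le_weight (n := n) (p := p) (s := s)
  have hright := agreement_le_weight_left (n := n) (hw.le s) (hw.le (s + p))
  have hfirst := weightSum_add_weight_le (H := H) (n := n) (u := w) s.lt_succ_self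
  have hlast := weightSum_add_weight_le (H := H) (n := n) (u := w) (show s + p - 1 < s + p by omega)
  rw [borderWeight, sub_self, zero_add, periodWeight]
  rcases hsz.eq_or_lt with rfl | hsz
  · have hmid := weightSum_mono (H := H) (n := n) (u := w) (show s + 1 ≤ s + p - 1 by omega)
    have := agreement_le_overlap_zero (H := H) (n := n) (Or.inl (b := w (s + p) = 0 ∨ _) hz)
    rw [hz] at hfirst
    exact hN.mul_le_of_le_add (leftAgreement_nonneg p s) (by linarith) (by linarith)
  rcases (Nat.le_sub_one_of_lt hzp).eq_or_lt with hlast_eq | hlt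
  · have hmid := weightSum_mono (H := H) (n := n) (u := w) (show s + 1 ≤ s + p - 1 by omega)
    have := leftAgreement_le (H := H) (n := n) (u := w) (p := p) (s := s) hoverlap fun x hx => by
        obtain rfl : x + p = z := by omega
        exact agreement_le_overlap_zero (Or.inr (Or.inl hz))
    rw [← hlast_eq, hz] at hlast
    rw [← hlast_eq] at hmid
    exact hN.mul_le_of_le_add (agreement_nonneg (w s) (w (s + p))) (by linarith) (by linarith)
  · have hbefore := weightSum_mono (H := H) (n := n) (u := w) (Nat.succ_le_of_lt hsz)
    have hafter := weightSum_add_weight_le (H := H) (n := n) (u := w) hlt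
    rw [hz] at hafter
    have hle : coreLength H n + leftAgreement H n w p s + agreement H n (w s) (w (s + p)) ≤
        weightSum H n w (s + p) - weightSum H n w s := by linarith
    have := mul_le_mul_of_nonneg_left hle (show 0 ≤ N by linarith [hN.one_le_bound])
    linarith [weightSum_mono (H := H) (n := n) (u := w) (Nat.le_add_right s p)]

theorem borderWeight_self_le (hN : WellSeparated H N) (hw : ShortRuns H w) (hp : 1 ≤ p) :
    N * borderWeight H n w p s s ≤ (N + 1) * periodWeight H n w p s := by
  have hoverlap := overlap_nonneg H n 0
  suffices hagree : (2 ≤ p ∧ ∃ z, s ≤ z ∧ z < s + p ∧ w z = 0) ∨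
      (leftAgreement H n w p s ≤ overlap H n 0 ∧
        agreement H n (w s) (w (s + p)) ≤ overlap H n 0) by
    rcases hagree with ⟨hp2, hzero⟩ | ⟨hleft, hright⟩
    · exact hN.borderWeight_self_le_of_zero hw hp2 hzero
    · have := weightSum_add_weight_le (H := H) (n := n) (u := w) (show s < s + p by omega)
      have := weight_mono (H := H) n (Nat.zero_le (w s)) (hw.le s)
      rw [borderWeight, periodWeight]
      exact hN.mul_le_of_le_add le_rfl (by linarith) (by linarith)
  rcases hp.eq_or_lt with rfl | hp2
  · exact Or.inr ⟨leftAgreement_le hoverlap fun x _ => hw.agreement_adjacent_le x,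
      hw.agreement_adjacent_le s⟩
  by_cases hzero : ∃ z, s ≤ z ∧ z < s + p ∧ w z = 0
  · exact Or.inl ⟨hp2, hzero⟩
  push Not at hzero
  obtain ⟨rfl, hzero'⟩ := hw.eq_two_of_ne_zero hp2 hzero
  refine Or.inr ⟨leftAgreement_le hoverlap fun x hx => ?_,
    agreement_le_overlap_zero (Or.inr (Or.inl hzero'))⟩
  subst hx
  have hx0 : w x = 0 := by
    by_contra hne
    exact hzero (x + 2) (by omega) (by omega)
      (hw.eq_of_adjacent x hne (hzero _ le_rfl (by omega))).2.2
  exact agreement_le_overlap_zero (Or.inl hx0)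

theorem borderWeight_le_of_ne_zero (hN : WellSeparated H N) (hw : ShortRuns H w)
    (hp : 1 ≤ p) (hse : s < e) (h : ShiftOn w p s e) (hne : ∀ x, s ≤ x → x < e → w x ≠ 0) :
    N * borderWeight H n w p s e ≤ (N + 1) * periodWeight H n w p s := by
  have hs := hne s le_rfl hse
  have hsp : w (s + p) ≠ 0 := h s le_rfl hse ▸ hs
  have hleft : leftAgreement H n w p s ≤ overlap H n 0 :=
    leftAgreement_le (overlap_nonneg H n 0) fun x hx => by
      subst hx
      exact hw.agreement_le_of_next_ne_zero hs (by rwa [add_right_comm])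
  have hright : agreement H n (w e) (w (e + p)) ≤ overlap H n 0 := by
    obtain ⟨e, rfl⟩ := Nat.exists_eq_add_of_le' (show 1 ≤ e by omega)
    have he := hne e (by omega) (by omega)
    rw [add_right_comm]
    exact hw.agreement_le_of_prev_ne_zero he (h e (by omega) (by omega) ▸ he)
  rw [borderWeight, periodWeight]
  rcases hp.eq_or_lt with rfl | hp2
  · obtain ⟨hsH, -, hs2⟩ := hw.eq_of_adjacent s hs hsp
    obtain rfl : e = s + 1 := by
      by_contra hne'
      exact hsp ((h (s + 1) (by omega) (by omega)).trans hs2)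
    have := hN.le_weight_self n
    have := mul_le_mul_of_nonneg_left (add_le_add hleft hright)
      (show 0 ≤ N by linarith [hN.one_le_bound])
    rw [weightSum_succ, hsH]
    linarith
  · obtain ⟨z, hsz, hzp, hz⟩ : ∃ z, s ≤ z ∧ z < s + p ∧ w z = 0 := by
      by_contra! hno
      obtain ⟨rfl, hzero⟩ := hw.eq_two_of_ne_zero hp2 hno
      exact hsp hzero
    have hez : e ≤ z := le_of_not_gt fun hlt => hne z hsz hlt hz
    have hmono := weightSum_mono (H := H) (n := n) (u := w) hez
    have hzero := weightSum_add_weight_le (H := H) (n := n) (u := w) hzp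
    rw [hz] at hzero
    exact hN.mul_le_of_le_add (sub_nonneg.2 (weightSum_mono hse.le)) (by linarith) (by linarith)

/-- Repetitions whose overlap contains a zero are reduced to shorter ones by `inner H`, with the
level `n` increasing by one. -/
theorem borderWeight_le (hN : WellSeparated H N) (hw : (inner H hN.one_le).image w = w)
    (hp : 1 ≤ p) (hse : s ≤ e) (h : ShiftOn w p s e) :
    N * borderWeight H n w p s e ≤ (N + 1) * periodWeight H n w p s := by
  have hle : ∀ x, w x ≤ H := fun x => hw ▸ inner_image_le hN.one_le w x
  have hruns : ShortRuns H w := hw ▸ shortRuns_inner_image hN.one_le hle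
  induction p using Nat.strong_induction_on generalizing s e n with
  | _ p ih =>
    by_cases hzero : ∃ x, s ≤ x ∧ x < e ∧ w x = 0
    · obtain ⟨q, s', e', hq, hqp, hse', hshift, hborder, hperiod⟩ :=
        exists_shiftOn_borderWeight_le (n := n) hN.one_le hle hp (hw.symm ▸ h) (hw.symm ▸ hzero)
      rw [hw] at hborder hperiod
      rw [hperiod]
      exact (mul_le_mul_of_nonneg_left hborder (by linarith [hN.one_le_bound])).trans
        (ih q hqp hq hse' hshift)
    · push Not at hzero
      rcases hse.eq_or_lt with rfl | hlt
      · exact hN.borderWeight_self_le hruns hp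
      · exact hN.borderWeight_le_of_ne_zero hruns hp hlt h hzero

theorem blockStart_outer_le (hN : WellSeparated H N) (hw : (inner H hN.one_le).image w = w)
    (hp : 1 ≤ p) (hse : s ≤ e) (h : ShiftOn w p s e) :
    N * ((outer.blockStart w e : ℤ) - outer.blockStart w s) ≤
      (N + 1) * ((outer.blockStart w (s + p) : ℤ) - outer.blockStart w s) := by
  have := hN.borderWeight_le (n := 0) hw hp hse h
  rw [borderWeight, periodWeight, weightSum_zero_eq_blockStart, weightSum_zero_eq_blockStart,
    weightSum_zero_eq_blockStart] at this
  refine (mul_le_mul_of_nonneg_left ?_ (by linarith [hN.one_le_bound])).trans this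
  linarith [coreLength_nonneg H 0, leftAgreement_nonneg (H := H) (n := 0) (u := w) p s,
    agreement_nonneg (H := H) (n := 0) (w e) (w (e + p))]

theorem length_le_of_shiftOn_outer_image (hN : WellSeparated H N)
    (hw : (inner H hN.one_le).image w = w) {l : ℕ} (hp : 1 ≤ p)
    (h : ShiftOn (outer.image w) p s (s + l)) :
    N * l ≤ (N + 1) * p + N * (2 * H + 3) := by
  have hpos := hN.one_le_bound
  have hblock (k : ℕ) : outer.blockStart w (k + 1) ≤ outer.blockStart w k + (H + 2) := by
    have : w k ≤ H := hw ▸ inner_image_le hN.one_le w k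
    rw [BlockMorphism.blockStart_succ]
    simp only [outer]
    omega
  by_cases hzero : ∃ x, s ≤ x ∧ x < s + l ∧ outer.image w x = 0
  · obtain ⟨c, d, q, hq, -, hcd, hsc, hc, -, hsd, hcq, -, hshift⟩ :=
      BlockMorphism.exists_shiftOn_of_shiftOn_image hp h hzero
    have hcs : outer.blockStart w c ≤ s + (H + 1) := by
      rcases c with _ | c
      · exact Nat.zero_le _
      · have := hblock c
        have := hc.resolve_left c.succ_ne_zero
        rw [Nat.add_sub_cancel] at this
        omega
    have hl : (l : ℤ) ≤ (outer.blockStart w d - outer.blockStart w c) + (2 * H + 3) := by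
      have := hblock d
      omega
    have := hN.blockStart_outer_le hw hq hcd hshift
    rw [hcq] at this
    push_cast at this
    have := mul_le_mul_of_nonneg_left hl (show 0 ≤ N by linarith)
    linarith
  · push Not at hzero
    obtain ⟨c, hc, hc'⟩ := outer.exists_blockStart_le_lt w s
    have hsl : s + l ≤ outer.blockStart w (c + 1) := by
      by_contra! hlt
      exact hzero _ hc'.le hlt (BlockMorphism.image_blockStart _)
    have hl : (l : ℤ) ≤ 2 * H + 3 := by
      have := hblock c
      omega
    have : 0 ≤ (N + 1) * (p : ℤ) := by positivity
    linarith [mul_le_mul_of_nonneg_left hl (show 0 ≤ N by linarith)]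

end WellSeparated

/-! ### Rich sequences of small asymptotic critical exponent -/

theorem exists_recurrent_rich_acritExp_le [Nontrivial A] {N : ℕ} (hN : 1 ≤ N) :
    ∃ u : ℕ → A, Recurrent u ∧ RichSeq u ∧ acritExp u ≤ ((1 + (1 + 1 / N : ℝ) : ℝ) : EReal) := by
  obtain ⟨H, hH⟩ := exists_wellSeparated hN
  obtain ⟨a, b, hab⟩ := exists_pair_ne A
  set w := (inner H hH.one_le).fixedPoint
  have hw : (inner H hH.one_le).image w = w := BlockMorphism.image_fixedPoint _
  set v := outer.image w
  have hcoding : ∀ x y, (if v x = 0 then a else b) = (if v y = 0 then a else b) ↔ v x = v y := by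
    intro x y
    rcases outer_image_eq_zero_or_eq_one w x with hx | hx <;>
      rcases outer_image_eq_zero_or_eq_one w y with hy | hy <;>
        simp [v, hx, hy, hab, hab.symm]
  have hrich : PalReturnsClosed v := palReturnsClosed_of_markedReturnsAt <|
    markedReturnsAt_image (b := 1) (fun _ _ => rfl) <|
      markedReturnsAt_of_image_eq (inner_letter_of_two_le_mult hH.one_le) hw
  refine ⟨fun x => if v x = 0 then a else b, ?_, (hrich.congr hcoding).richSeq, ?_⟩
  · exact (BlockMorphism.recurrent_image (BlockMorphism.recurrent_of_image_eq hw)).congr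
      fun x y => (hcoding x y).2
  · refine acritExp_le_of_shift_bound (C := 2 * H + 3) (by positivity) (by positivity) ?_
    intro p s l hp h
    have hbound := hH.length_le_of_shiftOn_outer_image hw hp
      fun x hx hx' => (hcoding x (x + p)).1 (h x hx hx')
    have hN' : (0 : ℝ) < N := by exact_mod_cast hN
    have : (N * l : ℝ) ≤ (N + 1) * p + N * (2 * H + 3) := by exact_mod_cast hbound
    refine le_of_mul_le_mul_left (this.trans_eq ?_) hN'
    field_simp

theorem exists_recurrent_rich_acritExp_lt [Nontrivial A] {ε : ℝ} (hε : 0 < ε) :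
    ∃ u : ℕ → A, Recurrent u ∧ RichSeq u ∧ acritExp u < ((2 + ε : ℝ) : EReal) := by
  obtain ⟨n, hn⟩ := exists_nat_one_div_lt hε
  obtain ⟨u, hrec, hrich, hu⟩ := exists_recurrent_rich_acritExp_le (A := A) n.succ_pos
  refine ⟨u, hrec, hrich, hu.trans_lt (EReal.coe_lt_coe_iff.2 ?_)⟩
  push_cast
  linarith

/-- The asymptotic repetition threshold of the class of recurrent rich
`d`-ary sequences equals `2`: every recurrent rich sequence over a `d`-letter alphabet
has asymptotic critical exponent at least `2`, and for every `ε > 0` there is a recurrent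
rich `d`-ary sequence with asymptotic critical exponent below `2 + ε`. -/
theorem statement0 (d : ℕ) (hd : 2 ≤ d) :
    (∀ u : ℕ → Fin d, Recurrent u → RichSeq u → (2 : EReal) ≤ acritExp u) ∧
    (∀ ε : ℝ, 0 < ε → ∃ u : ℕ → Fin d, Recurrent u ∧ RichSeq u ∧
      acritExp u < ((2 + ε : ℝ) : EReal)) := by
  have : Nontrivial (Fin d) := Fin.nontrivial_iff_two_le.2 hd
  exact ⟨fun u hrec hrich => two_le_acritExp_of_recurrent_of_rich hrec hrich,
    fun ε hε => exists_recurrent_rich_acritExp_lt hε⟩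

end RichRT
end

section
/- For every integer d ≥ 3, the fixed point u_d of the morphism φ_d is a rich sequence: every factor of u_d of length n contains exactly n+1 distinct palindromic factors (including the empty word). -/
namespace RichRT

variable {A : Type*}

/-!
A word is rich as soon as each of its prefixes has a unioccurrent palindromic suffix (UPS), and
richness passes to suffixes, so it suffices to find a UPS of every prefix `p` of `u`.
This goes by desubstitution. The map `v ↦ φ(v)0` sends palindromes to palindromes and can be
decoded, so when `p = φ(w)0` a UPS of `w` yields one of `p`. Otherwise `p = φ(w)0x`, where `x` is
the last letter of `φ(c)` for the letter `c` following `w` in `u`, or `p = φ(w)0(d-1)(d-1)`, where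
a UPS of `w(d-1)` suffices. In the former case, a UPS `x φ(v)0 x` of `p` amounts to a palindrome
`v` for which the words `e₁ v e₂`, with `e₁` and `e₂` preimages of `x` under the map `c ↦ last
letter of φ(c)`, occur in `w c` only as suffixes. The letter `d-1` has the two preimages `d-2` and
`d-1`, whose preimages in turn are `d-3`, `d-2`, `d-1`, and so on: the induction has to run over
framing classes `K` that are singletons or up-sets `{k, k+1, …}`. Each step lowers `k`, and when
`K` consists of all letters one needs a palindromic suffix `v` of `w` all of whose other
occurrences in `w` are prefixes: the UPS of `w`, or the longest proper palindromic suffix if `w`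
is itself a palindrome.
-/

section Words

open List

lemma concat_prefix_concat_iff {v w : List A} {x y : A} :
    w ++ [x] <+: v ++ [y] ↔ w = v ∧ x = y ∨ w ++ [x] <+: v :=
  prefix_concat_iff.trans (or_congr_left append_singleton_inj)

lemma occursAt_append {v w : List A} {u : ℕ → A} {j : ℕ} :
    OccursAt (v ++ w) u j ↔ OccursAt v u j ∧ OccursAt w u (j + v.length) := by
  unfold OccursAt
  rw [length_append, range_add, map_append, map_map]
  constructor
  · intro h
    have := append_inj h (by simp)
    simpa [Function.comp_def, add_assoc] using this
  · rintro ⟨hv, hw⟩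
    conv_lhs => rw [hv, hw]
    simp [Function.comp_def, add_assoc]

lemma OccursAt.of_prefix {v w : List A} {u : ℕ → A} {j : ℕ} (hw : OccursAt w u j)
    (hvw : v <+: w) : OccursAt v u j := by
  obtain ⟨s, rfl⟩ := hvw
  exact (occursAt_append.1 hw).1

lemma OccursAt.prefix_of_length_le {v w : List A} {u : ℕ → A} {j : ℕ} (hv : OccursAt v u j)
    (hw : OccursAt w u j) (hle : v.length ≤ w.length) : v <+: w := by
  rw [hv, hw]
  obtain ⟨n, hn⟩ := Nat.exists_eq_add_of_le hle
  rw [hn, range_add, map_append]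
  exact prefix_append _ _

lemma IsFactorS.exists_occursAt_zero {w : List A} {u : ℕ → A} (h : IsFactorS w u) :
    ∃ a, OccursAt (a ++ w) u 0 := by
  obtain ⟨j, hj⟩ := h
  exact ⟨(range j).map u, occursAt_append.2 ⟨by simp [OccursAt], by simpa using hj⟩⟩

end Words

section Palindromes

open List

lemma infix_of_palindrome_suffix_concat {p q w : List A} {x : A} (hp : p.Palindrome)
    (hq : q.Palindrome) (hpw : p <:+ w ++ [x]) (hqw : q <:+ w ++ [x])
    (hlt : p.length < q.length) : p <:+: w := by
  obtain ⟨z, hz⟩ := hqw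
  have hpq : p <+: q := by
    have hsuffix := suffix_of_suffix_length_le hpw ⟨z, hz⟩ hlt.le
    rw [← hp.reverse_eq, ← hq.reverse_eq]
    exact hsuffix.reverse
  obtain ⟨s, rfl⟩ := hpq
  obtain rfl | ⟨s, y, rfl⟩ := s.eq_nil_or_concat'
  · simp at hlt
  · rw [← append_assoc, ← append_assoc] at hz
    exact ⟨z, s, (append_singleton_inj.1 hz).1⟩

/-- The palindromic factors of a finite word, so that `palCount w = (palFactors w).ncard`. -/
def palFactors (w : List A) : Set (List A) := {p | p <:+: w ∧ p.reverse = p}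

lemma palFactors_finite (w : List A) : (palFactors w).Finite :=
  (finite_toSet w.sublists).subset fun _ hp => mem_sublists.2 hp.1.sublist

lemma palFactors_subset_concat (w : List A) (x : A) : palFactors w ⊆ palFactors (w ++ [x]) :=
  fun _ hp => ⟨hp.1.trans (prefix_append w [x]).isInfix, hp.2⟩

lemma palCount_reverse (w : List A) : palCount w.reverse = palCount w := by
  unfold palCount
  congr 1 with p
  refine and_congr_left fun hp => ?_
  rw [← reverse_infix, reverse_reverse, hp]

lemma palCount_concat_le (w : List A) (x : A) : palCount (w ++ [x]) ≤ palCount w + 1 := by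
  have hnew : ∀ p ∈ palFactors (w ++ [x]) \ palFactors w,
      p.Palindrome ∧ p <:+ w ++ [x] ∧ ¬ p <:+: w := by
    rintro p ⟨⟨hinfix, hpal⟩, hp⟩
    have hpw : ¬ p <:+: w := fun h => hp ⟨h, hpal⟩
    exact ⟨.of_reverse_eq hpal, (infix_concat_iff.1 hinfix).resolve_right hpw, hpw⟩
  have hone : (palFactors (w ++ [x]) \ palFactors w).ncard ≤ 1 := by
    rw [Set.ncard_le_one ((palFactors_finite _).subset Set.sdiff_subset)]
    intro p hp q hq
    obtain ⟨hpPal, hpSuffix, hpNew⟩ := hnew p hp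
    obtain ⟨hqPal, hqSuffix, hqNew⟩ := hnew q hq
    obtain hlt | heq | hlt := lt_trichotomy p.length q.length
    · exact absurd (infix_of_palindrome_suffix_concat hpPal hqPal hpSuffix hqSuffix hlt) hpNew
    · exact (suffix_of_suffix_length_le hpSuffix hqSuffix heq.le).eq_of_length heq
    · exact absurd (infix_of_palindrome_suffix_concat hqPal hpPal hqSuffix hpSuffix hlt) hqNew
  calc palCount (w ++ [x])
      = (palFactors (w ++ [x]) \ palFactors w).ncard + (palFactors w).ncard :=
        (Set.ncard_sdiff_add_ncard_of_subset (palFactors_subset_concat w x)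
          (palFactors_finite _)).symm
    _ ≤ 1 + (palFactors w).ncard := Nat.add_le_add_right hone _
    _ = palCount w + 1 := Nat.add_comm _ _

lemma palCount_nil : palCount ([] : List A) = 1 := by
  have : palFactors ([] : List A) = {[]} := by
    ext p
    simp +contextual [palFactors]
  exact (congrArg Set.ncard this).trans (Set.ncard_singleton _)

lemma palCount_le (w : List A) : palCount w ≤ w.length + 1 := by
  induction w using reverseRecOn with
  | nil => exact palCount_nil.le
  | append_singleton w x ih =>
    rw [length_append, length_singleton]
    exact (palCount_concat_le w x).trans (Nat.add_le_add_right ih 1)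

lemma palCount_append_le (v w : List A) : palCount (v ++ w) ≤ v.length + palCount w := by
  induction v with
  | nil => simp
  | cons c v ih =>
    have hcons : palCount (c :: (v ++ w)) ≤ palCount (v ++ w) + 1 := by
      rw [← palCount_reverse, reverse_cons, ← palCount_reverse (v ++ w)]
      exact palCount_concat_le _ _
    rw [cons_append, length_cons]
    omega

lemma RichWord.of_append_right {v w : List A} (h : RichWord (v ++ w)) : RichWord w := by
  have hvw := palCount_append_le v w
  have hw := palCount_le w
  rw [RichWord, length_append] at h
  rw [RichWord]
  omega

/-- Some word of `S` is a suffix of `p`, and words of `S` occur in `p` only as suffixes. -/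
def OccursOnlyAsSuffix (S : Set (List A)) (p : List A) : Prop :=
  (∃ q ∈ S, q <:+ p) ∧ ∀ a, ∀ q ∈ S, ∀ b, p = a ++ q ++ b → b = []

lemma occursOnlyAsSuffix_singleton {p q : List A} :
    OccursOnlyAsSuffix {q} p ↔ q <:+ p ∧ ∀ a b, p = a ++ q ++ b → b = [] := by
  simp [OccursOnlyAsSuffix]

/-- The word `p` has a unioccurrent palindromic suffix: a palindromic suffix with no other
occurrence in `p`. -/
def HasUnioccurrentPalSuffix (p : List A) : Prop :=
  ∃ q : List A, q.Palindrome ∧ OccursOnlyAsSuffix {q} p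

lemma hasUnioccurrentPalSuffix_nil : HasUnioccurrentPalSuffix ([] : List A) :=
  ⟨[], .nil, occursOnlyAsSuffix_singleton.2 ⟨suffix_rfl, fun a b h => by simp_all⟩⟩

lemma HasUnioccurrentPalSuffix.palCount_lt {w : List A} {x : A}
    (h : HasUnioccurrentPalSuffix (w ++ [x])) : palCount w < palCount (w ++ [x]) := by
  obtain ⟨q, hpal, hq⟩ := h
  obtain ⟨hsuffix, honly⟩ := occursOnlyAsSuffix_singleton.1 hq
  have hnotMem : q ∉ palFactors w := by
    rintro ⟨⟨s, t, h⟩, -⟩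
    simpa using honly s (t ++ [x]) (by rw [← h, append_assoc _ t])
  refine Set.ncard_lt_ncard ((Set.ssubset_iff_of_subset (palFactors_subset_concat w x)).2 ?_)
    (palFactors_finite _)
  exact ⟨q, ⟨hsuffix.isInfix, hpal.reverse_eq⟩, hnotMem⟩

lemma richWord_of_forall_prefix {w : List A}
    (h : ∀ p, p <+: w → HasUnioccurrentPalSuffix p) : RichWord w := by
  refine (palCount_le w).antisymm ?_
  induction w using reverseRecOn with
  | nil => exact palCount_nil.ge
  | append_singleton w x ih =>
    rw [length_append, length_singleton]
    exact (ih fun p hp => h p (hp.trans (prefix_append _ _))).trans_lt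
      (h _ prefix_rfl).palCount_lt

/-- The words `y v x` with `y, x ∈ K`. -/
def frame (K : Set A) (v : List A) : Set (List A) :=
  {q | ∃ y ∈ K, ∃ x ∈ K, q = y :: (v ++ [x])}

/-- The word `w x`, where `x` is thought of as a letter of `K`, has a unioccurrent palindromic
suffix up to identifying the letters of `K` at its two ends: either no letter of `K` occurs in
`w`, or for some palindrome `v` the words `K v K` occur in `w x` only as suffixes. -/
def HasFramedPalSuffix (K : Set A) (w : List A) (x : A) : Prop :=
  (∀ c ∈ w, c ∉ K) ∨ ∃ v : List A, v.Palindrome ∧ OccursOnlyAsSuffix (frame K v) (w ++ [x])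

lemma frame_singleton (x : A) (v : List A) : frame {x} v = {x :: (v ++ [x])} := by
  ext q
  simp [frame]

lemma hasFramedPalSuffix_singleton_iff {w : List A} {x : A} :
    HasFramedPalSuffix {x} w x ↔ HasUnioccurrentPalSuffix (w ++ [x]) := by
  simp only [HasFramedPalSuffix, frame_singleton]
  constructor
  · rintro (hx | ⟨v, hv, hocc⟩)
    · refine ⟨[x], .singleton x, occursOnlyAsSuffix_singleton.2 ⟨suffix_append _ _, ?_⟩⟩
      intro a b hab
      obtain rfl | ⟨b, y, rfl⟩ := b.eq_nil_or_concat'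
      · rfl
      · rw [← append_assoc] at hab
        exact absurd rfl (hx x (by simp [(append_singleton_inj.1 hab).1]))
    · exact ⟨_, hv.cons_concat x, hocc⟩
  · rintro ⟨q, hpal, hocc⟩
    obtain ⟨hsuffix, honly⟩ := occursOnlyAsSuffix_singleton.1 hocc
    cases hpal with
    | nil => simpa using honly [] (w ++ [x]) rfl
    | singleton y =>
      obtain rfl : y = x := by simpa using hsuffix
      left
      rintro c hc rfl
      obtain ⟨s, t, rfl⟩ := append_of_mem hc
      simpa using honly s (t ++ [c]) (by simp)
    | @cons_concat y v hv =>
      obtain ⟨z, hz⟩ := hsuffix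
      obtain rfl : y = x := by
        rw [← cons_append, ← append_assoc] at hz
        exact (append_singleton_inj.1 hz).2
      exact Or.inr ⟨v, hv, hocc⟩

lemma exists_longer_palindrome_prefix {a v : List A} (ha : a ≠ []) (hv : v.Palindrome)
    (hprefix : v <+: a ++ v) (hrich : ∀ p, p <+: a ++ v → HasUnioccurrentPalSuffix p) :
    ∃ q : List A, q.Palindrome ∧ q <+: a ++ v ∧ v.length < q.length := by
  induction hn : a.length using Nat.strong_induction_on generalizing a with
  | _ n ih =>
    obtain ⟨q, hq, hocc⟩ := hrich _ prefix_rfl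
    obtain ⟨hsuffix, honly⟩ := occursOnlyAsSuffix_singleton.1 hocc
    have hlt : v.length < q.length := by
      by_contra! hle
      obtain ⟨s, rfl⟩ := suffix_of_suffix_length_le hsuffix (suffix_append a v) hle
      obtain ⟨t, ht⟩ := hprefix
      obtain rfl := honly s t ht.symm
      exact ha (by simpa using ht)
    obtain ⟨s, rfl⟩ := suffix_of_suffix_length_le (suffix_append a v) hsuffix hlt.le
    obtain ⟨z, hz⟩ := hsuffix
    obtain rfl : z ++ s = a := by rwa [← append_assoc, append_left_inj] at hz
    obtain rfl | hz := eq_or_ne z []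
    · exact ⟨s ++ v, hq, prefix_rfl, hlt⟩
    -- The palindrome `s ++ v` also starts with `v`, so `v` has an occurrence further to the left.
    · have hsv : s ++ v = v ++ s.reverse := by
        rw [← hq.reverse_eq, reverse_append, hv.reverse_eq]
      have hzv : z ++ v <+: z ++ s ++ v := ⟨s.reverse, by rw [append_assoc, append_assoc, hsv]⟩
      have hs : 0 < s.length := by simpa using hlt
      obtain ⟨q', hq', hprefix', hlt'⟩ := ih z.length (by simp [← hn, hs]) hz
        (prefix_of_prefix_length_le hprefix hzv (by simp)) (fun p hp => hrich p (hp.trans hzv)) rfl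
      exact ⟨q', hq', hprefix'.trans hzv, hlt'⟩

lemma exists_palindrome_suffix_not_internal {w : List A} (hw : w ≠ [])
    (hrich : ∀ p, p <+: w → HasUnioccurrentPalSuffix p) :
    ∃ z v : List A, z ≠ [] ∧ w = z ++ v ∧ v.Palindrome ∧
      ∀ a b, a ≠ [] → w = a ++ v ++ b → b = [] := by
  obtain ⟨q, hq, hocc⟩ := hrich w prefix_rfl
  obtain ⟨⟨z, hz⟩, honly⟩ := occursOnlyAsSuffix_singleton.1 hocc
  obtain rfl | hne := eq_or_ne z []
  swap
  · exact ⟨z, q, hne, hz.symm, hq, fun a b _ => honly a b⟩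
  obtain rfl : q = w := hz
  -- The word is itself a palindrome: take its longest proper palindromic suffix.
  obtain ⟨z, ⟨hne, v, hqv, hv⟩, hmin⟩ := exists_minimalFor_of_wellFoundedLT
    (fun z : List A => z ≠ [] ∧ ∃ v : List A, q = z ++ v ∧ v.Palindrome) length
    ⟨q, hw, [], by simp, .nil⟩
  refine ⟨z, v, hne, hqv, hv, fun a b ha hab => ?_⟩
  by_contra hb
  have hav : a ++ v <+: q := ⟨b, hab.symm⟩
  have hvq : v <+: q := ⟨z.reverse, by rw [← hq.reverse_eq, hqv, reverse_append, hv.reverse_eq]⟩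
  obtain ⟨p, hp, ⟨s, hs⟩, hlt⟩ := exists_longer_palindrome_prefix ha hv
    (prefix_of_prefix_length_le hvq hav (by simp)) fun p hp => hrich p (hp.trans hav)
  have hqp : q = (s ++ b).reverse ++ p := by
    rw [← hq.reverse_eq, hab, ← hs, append_assoc, reverse_append, hp.reverse_eq]
  have hshorter : (s ++ b).reverse.length < z.length := by
    have h₁ := congrArg length hqp
    have h₂ := congrArg length hqv
    rw [length_append] at h₁ h₂
    omega
  exact hshorter.not_ge (hmin ⟨by simp [hb], p, hqp, hp⟩ hshorter.le)

lemma hasFramedPalSuffix_univ {w : List A} (x : A)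
    (hrich : ∀ p, p <+: w → HasUnioccurrentPalSuffix p) :
    HasFramedPalSuffix Set.univ w x := by
  obtain rfl | hw := eq_or_ne w []
  · simp [HasFramedPalSuffix]
  obtain ⟨z, v, hz, rfl, hv, hinternal⟩ := exists_palindrome_suffix_not_internal hw hrich
  obtain ⟨z, y, rfl⟩ := z.eq_nil_or_concat'.resolve_left hz
  refine Or.inr ⟨v, hv, ⟨_, ⟨y, trivial, x, trivial, rfl⟩, z, by simp⟩, ?_⟩
  rintro a q ⟨y', -, x', -, rfl⟩ b hab
  obtain rfl | ⟨b, c, rfl⟩ := b.eq_nil_or_concat'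
  · rfl
  · rw [← append_assoc] at hab
    simpa using hinternal (a ++ [y']) (x' :: b) (by simp) (by
      rw [(append_singleton_inj.1 hab).1]
      simp)

end Palindromes

section Morphism

open List

variable {d : ℕ}

/-- The last letter of `φ_d(c)`; it is nonzero for `d ≥ 2`. -/
def phiLast (d c : ℕ) : ℕ := min (c + 1) (d - 1)

/-- What follows the first two letters of `φ_d(c)`: the second `d-1` of `φ_d(d-1)`, if any. -/
def phiTail (d c : ℕ) : List ℕ := if c < d - 1 then [] else [d - 1]

/-- The map `w ↦ φ_d(w)0`, which commutes with reversal, unlike `φ_d` itself. -/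
def phiZero (d : ℕ) (w : List ℕ) : List ℕ := phiW d w ++ [0]

lemma phiL_eq (d c : ℕ) : phiL d c = 0 :: phiLast d c :: phiTail d c := by
  unfold phiL phiLast phiTail
  split
  · rw [min_eq_left (by omega)]
  · rw [min_eq_right (by omega)]

lemma phiLast_ne_zero (hd : 2 ≤ d) (c : ℕ) : phiLast d c ≠ 0 := by
  unfold phiLast
  omega

lemma eq_phiLast_of_mem_phiTail {x c : ℕ} (hx : x ∈ phiTail d c) : x = phiLast d c := by
  unfold phiTail at hx
  unfold phiLast
  split at hx
  · cases hx
  · rw [mem_singleton.1 hx]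
    omega

lemma phiTail_of_le {c : ℕ} (hc : d - 1 ≤ c) : phiTail d c = [d - 1] := if_neg hc.not_gt

lemma phiLast_of_le {c : ℕ} (hc : d - 1 ≤ c) : phiLast d c = d - 1 := min_eq_right (by omega)

lemma exists_phiL_eq_concat (d c : ℕ) : ∃ s, phiL d c = s ++ [phiLast d c] := by
  unfold phiL phiLast
  split
  · exact ⟨[0], by rw [min_eq_left (by omega)]; rfl⟩
  · exact ⟨[0, d - 1], by rw [min_eq_right (by omega)]; rfl⟩

lemma phiW_append (d : ℕ) (v w : List ℕ) : phiW d (v ++ w) = phiW d v ++ phiW d w :=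
  flatMap_append

lemma phiW_cons (d c : ℕ) (w : List ℕ) : phiW d (c :: w) = phiL d c ++ phiW d w :=
  flatMap_cons

lemma phiW_singleton (d c : ℕ) : phiW d [c] = phiL d c := flatMap_singleton _ _

lemma length_le_length_phiW (d : ℕ) (w : List ℕ) : w.length ≤ (phiW d w).length := by
  induction w with
  | nil => simp
  | cons c w ih =>
    simp only [phiW_cons, phiL_eq, length_append, length_cons]
    omega

lemma lt_of_mem_phiW (hd : 2 ≤ d) {w : List ℕ} {c : ℕ} (hc : c ∈ phiW d w) : c < d := by
  obtain ⟨i, -, hi⟩ := mem_flatMap.1 hc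
  rw [phiL_eq] at hi
  have hlast : phiLast d i < d := by
    unfold phiLast
    omega
  rcases mem_cons.1 hi with rfl | hi
  · omega
  rcases mem_cons.1 hi with rfl | hi
  · exact hlast
  · exact eq_phiLast_of_mem_phiTail hi ▸ hlast

lemma phiZero_nil (d : ℕ) : phiZero d [] = [0] := rfl

lemma length_lt_length_phiZero (d : ℕ) (w : List ℕ) : w.length < (phiZero d w).length := by
  rw [phiZero, length_append, length_singleton]
  exact Nat.lt_succ_of_le (length_le_length_phiW d w)

lemma phiZero_append (d : ℕ) (v w : List ℕ) :
    phiZero d (v ++ w) = phiW d v ++ phiZero d w := by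
  simp only [phiZero, phiW_append, append_assoc]

lemma phiZero_cons (d c : ℕ) (w : List ℕ) : phiZero d (c :: w) = phiL d c ++ phiZero d w := by
  simp only [phiZero, phiW_cons, append_assoc]

lemma phiZero_concat (d : ℕ) (w : List ℕ) (x : ℕ) :
    phiZero d (w ++ [x]) = phiZero d w ++ phiLast d x :: (phiTail d x ++ [0]) := by
  simp [phiZero, phiW_append, phiW_singleton, phiL_eq]

lemma exists_phiZero_eq_zero_cons (d : ℕ) (w : List ℕ) : ∃ s, phiZero d w = 0 :: s := by
  cases w with
  | nil => exact ⟨[], rfl⟩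
  | cons c w => exact ⟨_, by rw [phiZero_cons, phiL_eq]; rfl⟩

lemma phiZero_reverse (d : ℕ) (w : List ℕ) : (phiZero d w).reverse = phiZero d w.reverse := by
  have conj (c : ℕ) : 0 :: (phiL d c).reverse = phiL d c ++ [0] := by
    unfold phiL
    split <;> rfl
  induction w with
  | nil => rfl
  | cons c w ih =>
    calc (phiZero d (c :: w)).reverse
        = phiZero d w.reverse ++ (phiL d c).reverse := by
          rw [phiZero_cons, reverse_append, ih]
      _ = phiW d w.reverse ++ 0 :: (phiL d c).reverse := by
          rw [phiZero, append_assoc, singleton_append]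
      _ = phiZero d (c :: w).reverse := by
          rw [conj, reverse_cons, phiZero_append, phiZero, phiW_singleton]

lemma palindrome_phiZero {w : List ℕ} (h : w.Palindrome) (d : ℕ) :
    (phiZero d w).Palindrome :=
  .of_reverse_eq (by rw [phiZero_reverse, h.reverse_eq])

lemma exists_of_mem_phiZero {w : List ℕ} {x : ℕ} (hx : x ∈ phiZero d w) :
    x = 0 ∨ ∃ c ∈ w, x = phiLast d c := by
  rcases mem_append.1 hx with hx | hx
  · obtain ⟨c, hc, hx⟩ := mem_flatMap.1 hx
    rw [phiL_eq] at hx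
    rcases mem_cons.1 hx with rfl | hx
    · exact .inl rfl
    rcases mem_cons.1 hx with rfl | hx
    · exact .inr ⟨c, hc, rfl⟩
    · exact .inr ⟨c, hc, eq_phiLast_of_mem_phiTail hx⟩
  · exact .inl (mem_singleton.1 hx)

lemma exists_of_phiW_eq_concat {w a : List ℕ} {y : ℕ} (h : phiW d w = a ++ [y]) :
    ∃ w' c, w = w' ++ [c] ∧ phiLast d c = y := by
  obtain rfl | ⟨w, c, rfl⟩ := w.eq_nil_or_concat'
  · simp [phiW] at h
  · obtain ⟨s, hs⟩ := exists_phiL_eq_concat d c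
    rw [phiW_append, phiW_singleton, hs, ← append_assoc] at h
    exact ⟨w, c, rfl, (append_singleton_inj.1 h).2⟩

lemma exists_of_phiZero_eq_zero_cons_cons {w b : List ℕ} {x : ℕ}
    (h : phiZero d w = 0 :: x :: b) :
    ∃ c w', w = c :: w' ∧ phiLast d c = x ∧ phiTail d c ++ phiZero d w' = b := by
  cases w with
  | nil => simp [phiZero_nil] at h
  | cons c w =>
    simp only [phiZero_cons, phiL_eq, cons_append, cons.injEq, true_and] at h
    exact ⟨c, w, rfl, h.1, h.2⟩

lemma exists_of_phiZero_eq_append_zero_cons (hd : 2 ≤ d) {w a b : List ℕ}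
    (h : phiZero d w = a ++ 0 :: b) :
    ∃ w₁ w₂, w = w₁ ++ w₂ ∧ a = phiW d w₁ ∧ 0 :: b = phiZero d w₂ := by
  induction w generalizing a with
  | nil =>
    obtain rfl : a = [] := by cases a <;> simp_all [phiZero_nil]
    exact ⟨[], [], rfl, rfl, h.symm⟩
  | cons c w ih =>
    cases a with
    | nil => exact ⟨[], c :: w, rfl, rfl, h.symm⟩
    | cons e a =>
      have hpos : 0 ∉ phiLast d c :: phiTail d c := by
        intro h0
        rcases mem_cons.1 h0 with h0 | h0
        · exact phiLast_ne_zero hd c h0.symm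
        · exact phiLast_ne_zero hd c (eq_phiLast_of_mem_phiTail h0).symm
      rw [phiZero_cons, phiL_eq] at h
      obtain ⟨rfl, htail⟩ := cons.inj h
      obtain ⟨s, rfl, hw⟩ | ⟨s, hs, hw⟩ := append_eq_append_iff.1 htail
      · obtain ⟨w₁, w₂, rfl, rfl, h₂⟩ := ih hw
        exact ⟨c :: w₁, w₂, rfl, by simp [phiW_cons, phiL_eq], h₂⟩
      · cases s with
        | nil =>
          refine ⟨[c], w, rfl, ?_, hw⟩
          rw [phiW_singleton, phiL_eq, hs, append_nil]
        | cons e s =>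
          obtain rfl : 0 = e := (cons.inj hw).1
          exact absurd (hs ▸ by simp) hpos

lemma phiL_append_zero_cons_inj {c e : ℕ} (hc : c < d) (he : e < d) {s t : List ℕ}
    (h : phiL d c ++ 0 :: s = phiL d e ++ 0 :: t) : c = e := by
  unfold phiL at h
  split at h <;> split at h <;> simp only [cons_append, nil_append, cons.injEq] at h <;> omega

lemma exists_of_phiZero_eq_phiZero_append {v w b : List ℕ} (hv : ∀ c ∈ v, c < d)
    (hw : ∀ c ∈ w, c < d) (h : phiZero d w = phiZero d v ++ b) :
    ∃ w', w = v ++ w' ∧ 0 :: b = phiZero d w' := by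
  induction v generalizing w with
  | nil => exact ⟨w, rfl, h.symm⟩
  | cons c v ih =>
    cases w with
    | nil => simp [phiZero_nil, phiZero_cons, phiL_eq] at h
    | cons e w =>
      rw [phiZero_cons, phiZero_cons, append_assoc] at h
      rw [forall_mem_cons] at hv hw
      obtain rfl : e = c := by
        obtain ⟨s, hs⟩ := exists_phiZero_eq_zero_cons d v
        obtain ⟨t, ht⟩ := exists_phiZero_eq_zero_cons d w
        rw [hs, ht, cons_append] at h
        exact phiL_append_zero_cons_inj hw.1 hv.1 h
      obtain ⟨w', rfl, hw'⟩ := ih hv.2 hw.2 (append_cancel_left h)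
      exact ⟨w', rfl, hw'⟩

lemma exists_of_phiZero_eq_append_phiZero_append (hd : 2 ≤ d) {v w a b : List ℕ}
    (hv : ∀ c ∈ v, c < d) (hw : ∀ c ∈ w, c < d) (h : phiZero d w = a ++ phiZero d v ++ b) :
    ∃ w₁ w₂, w = w₁ ++ v ++ w₂ ∧ a = phiW d w₁ ∧ 0 :: b = phiZero d w₂ := by
  obtain ⟨s, hs⟩ := exists_phiZero_eq_zero_cons d v
  obtain ⟨w₁, w₂, rfl, ha, h₂⟩ : ∃ w₁ w₂, w = w₁ ++ w₂ ∧ a = phiW d w₁ ∧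
      phiZero d v ++ b = phiZero d w₂ := by
    rw [hs, append_assoc] at h
    rw [hs]
    exact exists_of_phiZero_eq_append_zero_cons hd h
  obtain ⟨w₃, rfl, h₃⟩ := exists_of_phiZero_eq_phiZero_append hv
    (fun c hc => hw c (mem_append_right _ hc)) h₂.symm
  exact ⟨w₁, w₃, (append_assoc _ _ _).symm, ha, h₃⟩

lemma le_of_phiL_eq_append_cons_cons {c y x : ℕ} {a b : List ℕ} (hy : y ≠ 0)
    (h : phiL d c = a ++ y :: x :: b) : d - 1 ≤ c ∧ b = [] := by
  cases a with
  | nil => exact absurd (cons.inj (phiL_eq d c ▸ h)).1.symm hy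
  | cons e a =>
    have hlen := congrArg length h
    unfold phiL at hlen
    split at hlen <;> simp only [length_append, length_cons, length_nil] at hlen
    · exact absurd hlen (by omega)
    · exact ⟨by omega, eq_nil_of_length_eq_zero (by omega)⟩

lemma exists_of_phiZero_eq_append_cons_cons {w a b : List ℕ} {y x : ℕ} (hy : y ≠ 0)
    (hx : x ≠ 0) (h : phiZero d w = a ++ y :: x :: b) :
    ∃ w₁ c w₂, w = w₁ ++ c :: w₂ ∧ d - 1 ≤ c ∧ phiZero d w₂ = b := by
  induction w generalizing a with
  | nil =>
    have := congrArg length h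
    simp only [phiZero_nil, length_append, length_cons, length_nil] at this
    omega
  | cons c w ih =>
    rw [phiZero_cons] at h
    obtain ⟨s, rfl, hw⟩ | ⟨s, hs, hw⟩ := append_eq_append_iff.1 h
    · obtain ⟨w₁, e, w₂, rfl, he, h₂⟩ := ih hw
      exact ⟨c :: w₁, e, w₂, rfl, he, h₂⟩
    · obtain ⟨t, ht⟩ := exists_phiZero_eq_zero_cons d w
      match s, hw with
      | [], hw => exact absurd (cons.inj (hw.trans ht)).1 hy
      | [_], hw => exact absurd (cons.inj ((cons.inj hw).2.trans ht)).1 hx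
      | e :: f :: s, hw =>
        obtain ⟨rfl, hcons⟩ : y = e ∧ x :: b = f :: (s ++ phiZero d w) := cons.inj hw
        obtain ⟨hc, rfl⟩ := le_of_phiL_eq_append_cons_cons hy hs
        exact ⟨[], c, w, rfl, hc, (cons.inj hcons).2.symm⟩

lemma exists_of_concat_prefix_phiW {v w : List ℕ} {x : ℕ} (h : w ++ [x] <+: phiW d v) :
    ∃ w' c, w' ++ [c] <+: v ∧ ((w = phiW d w' ∧ x = 0) ∨
      (w = phiZero d w' ∧ x = phiLast d c) ∨
      (d - 1 ≤ c ∧ w = phiZero d w' ++ [d - 1] ∧ x = d - 1)) := by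
  induction v using reverseRecOn with
  | nil => simp [phiW] at h
  | append_singleton v c ih =>
    have hlast : w ++ [x] <+: phiZero d v ++ [phiLast d c] ∨
        d - 1 ≤ c ∧ w = phiZero d v ++ [d - 1] ∧ x = d - 1 := by
      obtain hc | hc := lt_or_ge c (d - 1)
      · left
        simpa [phiW_append, phiW_singleton, phiL_eq, phiTail, hc, phiZero] using h
      · have himage : phiW d (v ++ [c]) = phiZero d v ++ [d - 1] ++ [d - 1] := by
          simp [phiW_append, phiW_singleton, phiL_eq, phiTail_of_le hc, phiLast_of_le hc, phiZero]
        rw [himage, concat_prefix_concat_iff] at h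
        rw [phiLast_of_le hc]
        exact h.symm.imp_right (⟨hc, ·⟩)
    obtain hprefix | hc := hlast
    · obtain hc | hprefix := concat_prefix_concat_iff.1 hprefix
      · exact ⟨v, c, prefix_rfl, .inr (.inl hc)⟩
      obtain hc | hprefix := concat_prefix_concat_iff.1 hprefix
      · exact ⟨v, c, prefix_rfl, .inl hc⟩
      obtain ⟨w', e, he, hcases⟩ := ih hprefix
      exact ⟨w', e, he.trans (prefix_append _ _), hcases⟩
    · exact ⟨v, c, prefix_rfl, .inr (.inr hc)⟩

end Morphism

section Desubstitution

open List

variable {d : ℕ}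

lemma hasUnioccurrentPalSuffix_phiZero (hd : 2 ≤ d) {w : List ℕ} (hw : ∀ c ∈ w, c < d)
    (h : HasUnioccurrentPalSuffix w) : HasUnioccurrentPalSuffix (phiZero d w) := by
  obtain ⟨q, hq, hocc⟩ := h
  obtain ⟨⟨z, rfl⟩, honly⟩ := occursOnlyAsSuffix_singleton.1 hocc
  refine ⟨phiZero d q, palindrome_phiZero hq d,
    occursOnlyAsSuffix_singleton.2 ⟨⟨phiW d z, (phiZero_append d z q).symm⟩, ?_⟩⟩
  intro a b hab
  obtain ⟨w₁, w₂, hw₁₂, -, hb⟩ := exists_of_phiZero_eq_append_phiZero_append hd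
    (fun c hc => hw c (mem_append_right _ hc)) hw hab
  obtain rfl := honly w₁ w₂ hw₁₂
  exact (cons.inj hb).2

lemma occursOnlyAsSuffix_frame_phiZero (hd : 2 ≤ d) {K : Set ℕ} {v w : List ℕ} {x : ℕ}
    (hwx : ∀ c ∈ w ++ [x], c < d)
    (h : OccursOnlyAsSuffix (frame (phiLast d ⁻¹' K) v) (w ++ [x])) :
    OccursOnlyAsSuffix (frame K (phiZero d v)) (phiZero d w ++ [phiLast d x]) := by
  obtain ⟨⟨_, ⟨y, hy, x', hx, rfl⟩, z, hz⟩, honly⟩ := h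
  obtain ⟨rfl, rfl⟩ : z ++ y :: v = w ∧ x' = x := append_singleton_inj.1 (by rw [← hz]; simp)
  constructor
  · obtain ⟨s, hs⟩ := exists_phiL_eq_concat d y
    exact ⟨_, ⟨_, hy, _, hx, rfl⟩, phiW d z ++ s, by simp [phiZero_append, phiZero_cons, hs]⟩
  · rintro a _ ⟨y', hy', e, he, rfl⟩ b hab
    obtain ⟨w₁, w₂, hw₁₂, ha, hb⟩ := exists_of_phiZero_eq_append_phiZero_append hd (v := v)
      (a := a ++ [y']) (b := e :: (b ++ (phiTail d x' ++ [0])))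
      (fun c hc => hwx c (by simp [hc])) hwx
      (by rw [phiZero_concat, append_cons, hab]; simp)
    obtain ⟨w₁, c, rfl, rfl⟩ := exists_of_phiW_eq_concat ha.symm
    obtain ⟨e, w₃, rfl, rfl, hb'⟩ := exists_of_phiZero_eq_zero_cons_cons hb.symm
    obtain rfl := honly w₁ _ ⟨c, hy', e, he, rfl⟩ w₃ (by rw [hw₁₂]; simp)
    obtain rfl : x' = e := (append_singleton_inj.1 hw₁₂).2
    exact self_eq_append_left.1 hb'

lemma hasFramedPalSuffix_phiZero (hd : 2 ≤ d) {K : Set ℕ} (h0 : 0 ∉ K) {w : List ℕ} {x : ℕ}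
    (hwx : ∀ c ∈ w ++ [x], c < d) (h : HasFramedPalSuffix (phiLast d ⁻¹' K) w x) :
    HasFramedPalSuffix K (phiZero d w) (phiLast d x) := by
  obtain hfree | ⟨v, hv, hocc⟩ := h
  · left
    intro c hc
    obtain rfl | ⟨e, he, rfl⟩ := exists_of_mem_phiZero hc
    · exact h0
    · exact hfree e he
  · exact .inr ⟨phiZero d v, palindrome_phiZero hv d, occursOnlyAsSuffix_frame_phiZero hd hwx hocc⟩

lemma phiZero_concat_last (w : List ℕ) :
    phiZero d (w ++ [d - 1]) = phiZero d w ++ [d - 1] ++ [d - 1] ++ [0] := by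
  simp [phiZero_concat, phiLast_of_le, phiTail_of_le]

lemma occursOnlyAsSuffix_frame_nil_phiZero_last {K : Set ℕ} (hK : d - 1 ∈ K) (h0 : 0 ∉ K)
    {w : List ℕ} (hw : ∀ c ∈ w, c < d - 1) :
    OccursOnlyAsSuffix (frame K []) (phiZero d w ++ [d - 1] ++ [d - 1]) := by
  refine ⟨⟨_, ⟨_, hK, _, hK, rfl⟩, phiZero d w, by simp⟩, ?_⟩
  rintro a _ ⟨y, hy, x, hx, rfl⟩ b hab
  obtain ⟨w₁, c, w₂, hw₁₂, hc, hb⟩ := exists_of_phiZero_eq_append_cons_cons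
    (w := w ++ [d - 1]) (a := a) (b := b ++ [0])
    (ne_of_mem_of_not_mem hy h0) (ne_of_mem_of_not_mem hx h0)
    (by rw [phiZero_concat_last, hab]; simp)
  obtain rfl | ⟨w₂, e, rfl⟩ := w₂.eq_nil_or_concat'
  · exact self_eq_append_left.1 hb
  · obtain ⟨rfl, -⟩ : w = w₁ ++ c :: w₂ ∧ d - 1 = e := append_singleton_inj.1 (by simp [hw₁₂])
    exact absurd (hw c (by simp)) hc.not_gt

lemma occursOnlyAsSuffix_frame_phiZero_last {K : Set ℕ} (hK : d - 1 ∈ K) (h0 : 0 ∉ K)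
    {v w : List ℕ} (hw : ∀ c ∈ w ++ [d - 1], c < d)
    (h : OccursOnlyAsSuffix (frame {d - 1} v) (w ++ [d - 1])) :
    OccursOnlyAsSuffix (frame K ((d - 1) :: (phiZero d v ++ [d - 1])))
      (phiZero d w ++ [d - 1] ++ [d - 1]) := by
  rw [frame_singleton, occursOnlyAsSuffix_singleton] at h
  obtain ⟨⟨z, hz⟩, honly⟩ := h
  obtain rfl : z ++ (d - 1) :: v = w := by
    rw [append_cons, ← append_assoc, ← append_cons] at hz
    exact (append_singleton_inj.1 hz).1
  have eq_last {c : ℕ} (hc : d - 1 ≤ c) (hmem : c ∈ z ++ (d - 1) :: v ++ [d - 1]) : c = d - 1 := by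
    have := hw c hmem
    omega
  constructor
  · exact ⟨_, ⟨_, hK, _, hK, rfl⟩, phiW d z ++ [0],
      by simp [phiZero_append, phiZero_cons, phiL_eq, phiLast_of_le, phiTail_of_le]⟩
  rintro a _ ⟨y, hy, x, hx, rfl⟩ b hab
  have hy0 : y ≠ 0 := ne_of_mem_of_not_mem hy h0
  have hx0 : x ≠ 0 := ne_of_mem_of_not_mem hx h0
  have hd0 : d - 1 ≠ 0 := ne_of_mem_of_not_mem hK h0
  obtain ⟨w₁, c, w₂, hw₁₂, hc, hb⟩ := exists_of_phiZero_eq_append_cons_cons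
    (w := z ++ (d - 1) :: v ++ [d - 1]) (a := a)
    (b := phiZero d v ++ (d - 1) :: x :: (b ++ [0])) hy0 hd0
    (by rw [phiZero_concat_last, hab]; simp)
  obtain rfl := eq_last hc (by simp [hw₁₂])
  obtain ⟨w₃, rfl, hw₃⟩ := exists_of_phiZero_eq_phiZero_append
    (fun c hc => hw c (by simp [hc])) (fun c hc => hw c (by rw [hw₁₂]; simp [hc])) hb
  obtain ⟨e, w₃, rfl, -, hb'⟩ := exists_of_phiZero_eq_zero_cons_cons hw₃.symm
  have he : d - 1 ≤ e := by
    by_contra! he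
    obtain ⟨s, hs⟩ := exists_phiZero_eq_zero_cons d w₃
    rw [phiTail, if_pos he, nil_append, hs] at hb'
    exact hx0 (cons.inj hb').1.symm
  obtain rfl := eq_last he (by simp [hw₁₂])
  obtain rfl := honly w₁ w₃ (by rw [hw₁₂]; simp)
  rw [phiTail_of_le le_rfl] at hb'
  exact self_eq_append_left.1 (cons.inj hb').2

lemma hasFramedPalSuffix_phiZero_concat {K : Set ℕ} (hK : d - 1 ∈ K) (h0 : 0 ∉ K)
    {w : List ℕ} (hw : ∀ c ∈ w ++ [d - 1], c < d) (h : HasFramedPalSuffix {d - 1} w (d - 1)) :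
    HasFramedPalSuffix K (phiZero d w ++ [d - 1]) (d - 1) := by
  obtain hfree | ⟨v, hv, hocc⟩ := h
  · refine .inr ⟨[], .nil, occursOnlyAsSuffix_frame_nil_phiZero_last hK h0 fun c hc => ?_⟩
    have hlt := hw c (mem_append_left _ hc)
    have hne : c ≠ d - 1 := hfree c hc
    omega
  · exact .inr ⟨_, (palindrome_phiZero hv d).cons_concat (d - 1),
      occursOnlyAsSuffix_frame_phiZero_last hK h0 hw hocc⟩

/-- The classes of letters for which framed palindromic suffixes are tracked: the singletons and
the up-sets. They are closed under taking preimages by `phiLast d`. -/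
def IsLetterClass (K : Set ℕ) : Prop := (∃ x, K = {x}) ∨ ∃ k, K = Set.Ici k

lemma IsLetterClass.eq_singleton_zero_or_eq_univ {K : Set ℕ} (hK : IsLetterClass K)
    (h0 : 0 ∈ K) : K = {0} ∨ K = Set.univ := by
  obtain ⟨x, rfl⟩ | ⟨k, rfl⟩ := hK
  · exact .inl (congrArg _ h0.symm)
  · obtain rfl : k = 0 := Nat.le_zero.1 h0
    exact .inr Set.Ici_bot

lemma IsLetterClass.preimage_phiLast {K : Set ℕ} (hK : IsLetterClass K) (h0 : 0 ∉ K)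
    (hne : (phiLast d ⁻¹' K).Nonempty) : IsLetterClass (phiLast d ⁻¹' K) := by
  obtain ⟨c, hc⟩ := hne
  obtain ⟨x, rfl⟩ | ⟨k, rfl⟩ := hK
  · simp only [Set.mem_preimage, Set.mem_singleton_iff, phiLast] at hc h0
    obtain hx | hx : x < d - 1 ∨ x = d - 1 := by omega
    · refine .inl ⟨x - 1, ?_⟩
      ext c
      simp only [Set.mem_preimage, Set.mem_singleton_iff, phiLast]
      omega
    · refine .inr ⟨x - 1, ?_⟩
      ext c
      simp only [Set.mem_preimage, Set.mem_singleton_iff, Set.mem_Ici, phiLast]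
      omega
  · refine .inr ⟨k - 1, ?_⟩
    ext c
    simp only [Set.mem_preimage, Set.mem_Ici, phiLast] at hc h0 ⊢
    omega

end Desubstitution

section FixedPoint

open List

variable {d : ℕ} {u : ℕ → ℕ}

lemma IsPhiFixed.prefix_phiW (hu : IsPhiFixed d u) {w : List ℕ} (hw : OccursAt w u 0) :
    w <+: phiW d w := by
  have himage : OccursAt (phiW d w) u 0 := by
    have := hu.2 w.length
    simp only [OccursAt, zero_add] at hw
    rwa [← hw] at this
  exact hw.prefix_of_length_le himage (length_le_length_phiW d w)

lemma IsPhiFixed.lt_of_mem (hd : 2 ≤ d) (hu : IsPhiFixed d u) {w : List ℕ}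
    (hw : OccursAt w u 0) {c : ℕ} (hc : c ∈ w) : c < d :=
  lt_of_mem_phiW hd ((hu.prefix_phiW hw).subset hc)

lemma IsPhiFixed.hasFramedPalSuffix (hd : 2 ≤ d) (hu : IsPhiFixed d u) {K : Set ℕ}
    (hK : IsLetterClass K) {w : List ℕ} {x : ℕ} (hx : x ∈ K) (hwx : OccursAt (w ++ [x]) u 0) :
    HasFramedPalSuffix K w x := by
  induction hn : w.length using Nat.strong_induction_on generalizing w x K with
  | _ n ih =>
    subst hn
    have hrich (p : List ℕ) (hp : OccursAt p u 0) (hle : p.length ≤ w.length) :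
        HasUnioccurrentPalSuffix p := by
      obtain rfl | ⟨p, y, rfl⟩ := p.eq_nil_or_concat'
      · exact hasUnioccurrentPalSuffix_nil
      · rw [length_append, length_singleton] at hle
        exact hasFramedPalSuffix_singleton_iff.1 (ih _ hle (.inl ⟨y, rfl⟩) rfl hp rfl)
    obtain ⟨w', c, hprefix, hcases⟩ := exists_of_concat_prefix_phiW (hu.prefix_phiW hwx)
    have hocc : OccursAt (w' ++ [c]) u 0 := hwx.of_prefix hprefix
    have hlt : ∀ e ∈ w' ++ [c], e < d := fun e he => hu.lt_of_mem hd hocc he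
    by_cases h0 : 0 ∈ K
    · obtain rfl | rfl := hK.eq_singleton_zero_or_eq_univ h0
      · obtain rfl : x = 0 := hx
        obtain ⟨rfl, -⟩ | ⟨-, h⟩ | ⟨-, -, h⟩ := hcases
        · refine hasFramedPalSuffix_singleton_iff.2 ?_
          exact hasUnioccurrentPalSuffix_phiZero hd (fun e he => hlt e (mem_append_left _ he))
            (hrich w' (hocc.of_prefix (prefix_append _ _)) (length_le_length_phiW d w'))
        · exact absurd h.symm (phiLast_ne_zero hd c)
        · omega
      · exact hasFramedPalSuffix_univ x fun p hp =>
          hrich p (hwx.of_prefix (hp.trans (prefix_append _ _))) hp.length_le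
    · have hlen := length_lt_length_phiZero d w'
      obtain ⟨-, rfl⟩ | ⟨rfl, rfl⟩ | ⟨hc, rfl, rfl⟩ := hcases
      · exact absurd hx h0
      · exact hasFramedPalSuffix_phiZero hd h0 hlt
          (ih _ hlen (hK.preimage_phiLast h0 ⟨c, hx⟩) hx hocc rfl)
      · obtain rfl : c = d - 1 := by
          have := hlt c (by simp)
          omega
        exact hasFramedPalSuffix_phiZero_concat hx h0 hlt
          (ih _ (hlen.trans_le (prefix_append _ _).length_le) (.inl ⟨_, rfl⟩) rfl hocc rfl)

lemma IsPhiFixed.hasUnioccurrentPalSuffix (hd : 2 ≤ d) (hu : IsPhiFixed d u) {w : List ℕ}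
    (hw : OccursAt w u 0) : HasUnioccurrentPalSuffix w := by
  obtain rfl | ⟨w, x, rfl⟩ := w.eq_nil_or_concat'
  · exact hasUnioccurrentPalSuffix_nil
  · exact hasFramedPalSuffix_singleton_iff.1 (hu.hasFramedPalSuffix hd (.inl ⟨x, rfl⟩) rfl hw)

end FixedPoint

theorem statement1_general (d : ℕ) (hd : 2 ≤ d) (u : ℕ → ℕ) (hu : IsPhiFixed d u) :
    RichSeq u := by
  intro w hw
  obtain ⟨a, haw⟩ := hw.exists_occursAt_zero
  have hrich : RichWord (a ++ w) :=
    richWord_of_forall_prefix fun p hp => hu.hasUnioccurrentPalSuffix hd (haw.of_prefix hp)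
  exact hrich.of_append_right

/-- For `d ≥ 3`, the fixed point `u_d` of `φ_d` is rich: every factor of
length `n` contains exactly `n+1` distinct palindromic factors. -/
theorem statement1 (d : ℕ) (hd : 3 ≤ d) (u : ℕ → ℕ) (hu : IsPhiFixed d u) :
    ∀ w : List ℕ, IsFactorS w u → palCount w = w.length + 1 :=
  statement1_general d (by omega) u hu

end RichRT
end
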